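/- arXiv:1701.05383 — 2 statements merged into one kernel-verified Lean document; each statement's English description precedes it below -/
import Mathlib

section
/- Let f: [0,1] → [0,1] be a continuous piecewise linear map with constant slope s > 1 which has shadowing. Then the restriction of f to any of its maximal ω-limit sets has shadowing. -/
/-!
The proof rests on two facts about a piecewise linear map `f` of constant slope `s > 1`.

*Expansion* (`eventually_large`). One-sided germs of `f^[n]` are affine of slope `±s ^ n`, so by a
Lebesgue number argument short intervals are folded at most once by `f^[N]`, where `s ^ N > 2`, and
one half of them is stretched by `s ^ N`. Hence there is `η > 0` such that all sufficiently late
images of any nondegenerate interval have diameter at least `η`.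

*Joining* (`exists_omega_superset`). Suppose that the orbits of `x` and `z` both come infinitely
often within `ρ` of each of three points `a₁ < a₂ < a₃` which are close together compared to `η`. A
late image of an interval meeting the orbit of `x` is large and can be taken to contain an orbit
point near `a₂`, so it engulfs the whole `ρ`-ball around `a₁` or `a₃` and therefore meets the orbit
of `z`; the roles of `x` and `z` may be exchanged. One can thus prescribe a sequence of intervals,
each covered by an image of the previous one, that approach every point of `ω(x) ∪ ω(z)`; a point
`y` following this itinerary satisfies `ω(x) ∪ ω(z) ⊆ ω(y)`.

Now let `A = ω(x)` be maximal. If `A` is finite, pseudo-orbits in `A` with small errors are orbits.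
If `A` is infinite, it contains three points `a₁ < a₂ < a₃` close together. A finite pseudo-orbit
in `A` is closed up to a periodic pseudo-orbit by a segment of the orbit of `x` passing near `a₁`,
`a₂`, `a₃` (`exists_periodic_pseudo`); let `L` be its period and let `z ∈ [0,1]` shadow it. Joining
and maximality give `ω(z) ⊆ A`, and a limit point of `f^[k * L] z` lies in `A` and shadows the
finite pseudo-orbit. Compactness of `A` passes from finite to infinite pseudo-orbits.
-/

/-- `x` is a `δ`-pseudo-orbit for `f` contained in `A`, and `z ∈ A` `ε`-shadows it. -/
def ShadowingOn {X : Type*} [MetricSpace X] (f : X → X) (A : Set X) : Prop :=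
  ∀ ε : ℝ, 0 < ε → ∃ δ : ℝ, 0 < δ ∧
    ∀ x : ℕ → X, (∀ n, x n ∈ A) → (∀ n, dist (f (x n)) (x (n + 1)) < δ) →
      ∃ z ∈ A, ∀ n, dist (f^[n] z) (x n) < ε

def LimitShadowingOn {X : Type*} [MetricSpace X] (f : X → X) (A : Set X) : Prop :=
  ∀ x : ℕ → X, (∀ n, x n ∈ A) →
    Filter.Tendsto (fun n => dist (f (x n)) (x (n + 1))) Filter.atTop (nhds 0) →
    ∃ z ∈ A, Filter.Tendsto (fun n => dist (f^[n] z) (x n)) Filter.atTop (nhds 0)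

def SLimitShadowingOn {X : Type*} [MetricSpace X] (f : X → X) (A : Set X) : Prop :=
  ∀ ε : ℝ, 0 < ε → ∃ δ : ℝ, 0 < δ ∧
    (∀ x : ℕ → X, (∀ n, x n ∈ A) → (∀ n, dist (f (x n)) (x (n + 1)) < δ) →
      ∃ z ∈ A, ∀ n, dist (f^[n] z) (x n) < ε) ∧
    (∀ x : ℕ → X, (∀ n, x n ∈ A) → (∀ n, dist (f (x n)) (x (n + 1)) < δ) →
      Filter.Tendsto (fun n => dist (f (x n)) (x (n + 1))) Filter.atTop (nhds 0) →
      ∃ z ∈ A, (∀ n, dist (f^[n] z) (x n) < ε) ∧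
        Filter.Tendsto (fun n => dist (f^[n] z) (x n)) Filter.atTop (nhds 0))
/-- `f` is piecewise linear on `[0,1]` with constant slope `±s`. -/
def PiecewiseLinearConstSlope (f : ℝ → ℝ) (s : ℝ) : Prop :=
  ∃ (k : ℕ) (p : Fin (k + 2) → ℝ), StrictMono p ∧ p 0 = 0 ∧ p (Fin.last (k + 1)) = 1 ∧
    ∀ i : Fin (k + 1), ∃ a b : ℝ, |b| = s ∧
      ∀ x ∈ Set.Icc (p i.castSucc) (p i.succ), f x = a + b * x

/-- The critical points of an interval map `f : [0,1] → [0,1]`: the endpoints together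
with the points where `f` is not differentiable or has zero derivative. -/
def Crit (f : ℝ → ℝ) : Set ℝ :=
  {x | x ∈ Set.Icc (0 : ℝ) 1 ∧
    (x = 0 ∨ x = 1 ∨ ¬ DifferentiableAt ℝ f x ∨ deriv f x = 0)}

/-- `x` is `ε`-linked to `y` by `f` (with all relevant points lying in `A`). -/
def EpsLinkedOn (f : ℝ → ℝ) (A : Set ℝ) (ε x y : ℝ) : Prop :=
  ∃ m : ℕ, 1 ≤ m ∧ ∃ z ∈ A, f^[m] z = y ∧ ∀ j ≤ m, |f^[j] x - f^[j] z| ≤ ε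

/-- `x` is linked to `y` by `f` (as a map of `A`). -/
def LinkedOn (f : ℝ → ℝ) (A : Set ℝ) (x y : ℝ) : Prop :=
  ∀ ε : ℝ, 0 < ε → EpsLinkedOn f A ε x y

/-- `f : [0,1] → [0,1]` has the linking property: every critical point is linked to
some critical point. -/
def LinkingProperty (f : ℝ → ℝ) : Prop :=
  ∀ x ∈ Crit f, ∃ y ∈ Crit f, LinkedOn f (Set.Icc (0 : ℝ) 1) x y

/-- `f` is topologically transitive as a map of `A`. -/
def TransitiveOn (f : ℝ → ℝ) (A : Set ℝ) : Prop :=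
  ∀ U V : Set ℝ, IsOpen U → IsOpen V → (U ∩ A).Nonempty → (V ∩ A).Nonempty →
    ∃ n : ℕ, ∃ x ∈ U ∩ A, f^[n] x ∈ V ∩ A
/-- The ω-limit set of `x` under `f`: the set of limit points of the forward orbit. -/
def OmegaLimitSet {X : Type*} [TopologicalSpace X] (f : X → X) (x : X) : Set X :=
  {y | ∃ φ : ℕ → ℕ, StrictMono φ ∧
    Filter.Tendsto (fun k => f^[φ k] x) Filter.atTop (nhds y)}

/-- `A` is the ω-limit set of some point of `[0,1]` under the interval map `f`. -/
def IsOmegaLimitSetOn (f : ℝ → ℝ) (A : Set ℝ) : Prop :=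
  ∃ x ∈ Set.Icc (0 : ℝ) 1, A = OmegaLimitSet f x

/-- `A` is a maximal ω-limit set of the interval map `f`. -/
def IsMaximalOmegaLimitSet (f : ℝ → ℝ) (A : Set ℝ) : Prop :=
  IsOmegaLimitSetOn f A ∧ ∀ B : Set ℝ, IsOmegaLimitSetOn f B → A ⊆ B → B = A

open Set Filter Topology

/-! ### Expansion of intervals -/

/-- Every one-sided germ of `f` is affine of slope `±s`. The side is encoded by `τ = ±1`. -/
lemma germ_one {f : ℝ → ℝ} {s : ℝ} (hs : 1 < s) (hpl : PiecewiseLinearConstSlope f s)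
    {c τ : ℝ} (hc : c ∈ Icc (0 : ℝ) 1) (hτ : τ = 1 ∨ τ = -1) :
    ∃ r > 0, ∃ b : ℝ, |b| = s ∧
      ∀ t, 0 ≤ t → t ≤ r → c + τ * t ∈ Icc (0 : ℝ) 1 → f (c + τ * t) = f c + b * t := by
  obtain ⟨k, p, hp, hp0, hp1, hlin⟩ := hpl
  have habs : |s| = s := abs_of_pos (by linarith)
  rcases hτ with rfl | rfl
  · rcases hc.2.eq_or_lt with rfl | hc1
    · refine ⟨1, one_pos, s, habs, fun t ht _ hmem => ?_⟩
      have : t = 0 := by linarith [hmem.2]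
      subst this; simp
    · obtain ⟨i, hi1, hi2⟩ : ∃ i : Fin (k + 1), p i.castSucc ≤ c ∧ c < p i.succ := by
        by_contra! hcon
        have : ∀ j : Fin (k + 2), p j ≤ c := fun j => by
          induction j using Fin.induction with
          | zero => rw [hp0]; exact hc.1
          | succ i ih => exact hcon i ih
        linarith [this (Fin.last (k + 1))]
      obtain ⟨a, b, hb, hf⟩ := hlin i
      refine ⟨p i.succ - c, by linarith, b, hb, fun t ht htr _ => ?_⟩
      rw [hf _ ⟨by linarith, by linarith⟩, hf c ⟨hi1, hi2.le⟩]; ring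
  · rcases hc.1.eq_or_lt with rfl | hc0
    · refine ⟨1, one_pos, s, habs, fun t ht _ hmem => ?_⟩
      have : t = 0 := by linarith [hmem.1]
      subst this; simp
    · obtain ⟨i, hi1, hi2⟩ : ∃ i : Fin (k + 1), p i.castSucc < c ∧ c ≤ p i.succ := by
        by_contra! hcon
        have : ∀ j : Fin (k + 2), p j < c := fun j => by
          induction j using Fin.induction with
          | zero => rw [hp0]; exact hc0
          | succ i ih => exact hcon i ih
        linarith [this (Fin.last (k + 1)), hc.2]
      obtain ⟨a, b, hb, hf⟩ := hlin i
      refine ⟨c - p i.castSucc, by linarith, -b, by rwa [abs_neg], fun t ht htr _ => ?_⟩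
      rw [hf _ ⟨by linarith, by linarith⟩, hf c ⟨hi1.le, hi2⟩]; ring

/-- Every one-sided germ of `f^[n]` is affine of slope `±s ^ n`: a germ is carried by an affine
map to a germ, and germs of `f` are affine. -/
lemma germ_iterate {f : ℝ → ℝ} {s : ℝ} (hs : 1 < s)
    (hmaps : MapsTo f (Icc (0 : ℝ) 1) (Icc (0 : ℝ) 1))
    (hpl : PiecewiseLinearConstSlope f s) (n : ℕ)
    {c τ : ℝ} (hc : c ∈ Icc (0 : ℝ) 1) (hτ : τ = 1 ∨ τ = -1) :
    ∃ r > 0, ∃ b : ℝ, |b| = s ^ n ∧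
      ∀ t, 0 ≤ t → t ≤ r → c + τ * t ∈ Icc (0 : ℝ) 1 →
        f^[n] (c + τ * t) = f^[n] c + b * t := by
  induction n with
  | zero =>
    refine ⟨1, one_pos, τ, ?_, fun t _ _ _ => by simp⟩
    rcases hτ with rfl | rfl <;> simp
  | succ n ih =>
    obtain ⟨r, hr, b, hb, hf⟩ := ih
    have hsn : 0 < s ^ n := by positivity
    obtain ⟨τ', hτ', hbτ⟩ : ∃ τ' : ℝ, (τ' = 1 ∨ τ' = -1) ∧ b = τ' * s ^ n := by
      rcases le_total 0 b with h | h
      · exact ⟨1, Or.inl rfl, by rw [abs_of_nonneg h] at hb; linarith⟩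
      · exact ⟨-1, Or.inr rfl, by rw [abs_of_nonpos h] at hb; linarith⟩
    obtain ⟨r', hr', b', hb', hf'⟩ := germ_one hs hpl (hmaps.iterate n hc) hτ'
    refine ⟨min r (r' / s ^ n), lt_min hr (by positivity), b' * s ^ n, ?_, ?_⟩
    · rw [abs_mul, hb', abs_of_pos hsn, pow_succ]; ring
    · intro t ht htr hmem
      have h1 := hf t ht (htr.trans (min_le_left _ _)) hmem
      have h2 : s ^ n * t ≤ r' := by
        have := htr.trans (min_le_right _ _)
        rw [le_div_iff₀ hsn] at this; linarith
      have h3 : f^[n] (c + τ * t) = f^[n] c + τ' * (s ^ n * t) := by rw [h1, hbτ]; ring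
      have h4 := hf' (s ^ n * t) (by positivity) h2 (by rw [← h3]; exact hmaps.iterate n hmem)
      rw [Function.iterate_succ_apply', Function.iterate_succ_apply', h3, h4]; ring

/-- An interval of length at most `κ` is folded at most once by `f^[n]`, so one of its halves is
stretched by the factor `s ^ n`. The bound with `min (v - u) κ` comes from an initial piece of
`[u, v]` of that length. -/
lemma exists_stretch {f : ℝ → ℝ} {s : ℝ} (hs : 1 < s)
    (hmaps : MapsTo f (Icc (0 : ℝ) 1) (Icc (0 : ℝ) 1))
    (hpl : PiecewiseLinearConstSlope f s) (n : ℕ) :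
    ∃ κ > 0, ∀ u v : ℝ, 0 ≤ u → u < v → v ≤ 1 → ∃ u' ∈ Icc u v, ∃ v' ∈ Icc u v,
      s ^ n / 2 * min (v - u) κ ≤ |f^[n] u' - f^[n] v'| := by
  have hsn : 0 < s ^ n := by positivity
  have hloc : ∀ c : Icc (0 : ℝ) 1, ∃ r > 0,
      (∀ x y, x ∈ Icc (0 : ℝ) 1 → y ∈ Icc (0 : ℝ) 1 → c.1 ≤ x → x ≤ y → y ≤ c.1 + r →
        |f^[n] x - f^[n] y| = s ^ n * (y - x)) ∧
      (∀ x y, x ∈ Icc (0 : ℝ) 1 → y ∈ Icc (0 : ℝ) 1 → c.1 - r ≤ x → x ≤ y → y ≤ c.1 →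
        |f^[n] x - f^[n] y| = s ^ n * (y - x)) := by
    rintro ⟨c, hc⟩
    obtain ⟨r, hr, b, hb, hf⟩ := germ_iterate hs hmaps hpl n hc (Or.inl rfl)
    obtain ⟨r', hr', b', hb', hf'⟩ := germ_iterate hs hmaps hpl n hc (Or.inr rfl)
    have e (x : ℝ) : c + 1 * (x - c) = x := by ring
    have e' (x : ℝ) : c + -1 * (c - x) = x := by ring
    refine ⟨min r r', lt_min hr hr', ?_, ?_⟩
    · intro x y hx hy hcx hxy hyr
      dsimp only at hcx hyr
      have hm := min_le_left r r'
      have h1 := hf (x - c) (by linarith) (by linarith) (by rwa [e])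
      have h2 := hf (y - c) (by linarith) (by linarith) (by rwa [e])
      rw [e] at h1 h2
      rw [h1, h2, show f^[n] c + b * (x - c) - (f^[n] c + b * (y - c)) = b * (x - y) by ring,
        abs_mul, hb, abs_sub_comm, abs_of_nonneg (by linarith)]
    · intro x y hx hy hcx hxy hyr
      dsimp only at hcx hyr
      have hm := min_le_right r r'
      have h1 := hf' (c - x) (by linarith) (by linarith) (by rwa [e'])
      have h2 := hf' (c - y) (by linarith) (by linarith) (by rwa [e'])
      rw [e'] at h1 h2
      rw [h1, h2, show f^[n] c + b' * (c - x) - (f^[n] c + b' * (c - y)) = b' * (y - x) by ring,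
        abs_mul, hb', abs_of_nonneg (by linarith)]
  choose r hr hR hL using hloc
  obtain ⟨δ, hδ, hleb⟩ := lebesgue_number_lemma_of_metric (isCompact_Icc (a := (0 : ℝ)) (b := 1))
    (c := fun c : Icc (0 : ℝ) 1 => Metric.ball c.1 (r c)) (fun c => Metric.isOpen_ball)
    (fun x hx => mem_iUnion.2 ⟨⟨x, hx⟩, Metric.mem_ball_self (hr _)⟩)
  refine ⟨δ / 2, by positivity, fun u v hu huv hv => ?_⟩
  -- an initial piece of `[u, v]` of length `min (v - u) (δ / 2)` lies in one of the covering balls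
  set d := min (v - u) (δ / 2) with hd
  have hd0 : 0 < d := lt_min (by linarith) (by linarith)
  have hd1 : d ≤ v - u := min_le_left _ _
  have hd2 : d ≤ δ / 2 := min_le_right _ _
  obtain ⟨c, hc⟩ := hleb u ⟨hu, by linarith⟩
  have hcu := hc (Metric.mem_ball_self hδ)
  have hcv : u + d ∈ Metric.ball c.1 (r c) := hc (by
    rw [Metric.mem_ball, Real.dist_eq, add_sub_cancel_left, abs_of_pos hd0]; linarith)
  rw [Metric.mem_ball, Real.dist_eq, abs_lt] at hcu hcv
  have mu : u ∈ Icc (0 : ℝ) 1 := ⟨hu, by linarith⟩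
  have mv : u + d ∈ Icc (0 : ℝ) 1 := ⟨by linarith, by linarith⟩
  have nu : u ∈ Icc u v := ⟨le_rfl, huv.le⟩
  have nv : u + d ∈ Icc u v := ⟨by linarith, by linarith⟩
  rcases le_total c.1 (u + d / 2) with h | h
  · refine ⟨u + d / 2, ⟨by linarith, by linarith⟩, u + d, nv, ?_⟩
    rw [hR c _ _ ⟨by linarith, by linarith⟩ mv h (by linarith) (by linarith)]
    apply le_of_eq; ring
  · refine ⟨u, nu, u + d / 2, ⟨by linarith, by linarith⟩, ?_⟩
    rw [hL c _ _ mu ⟨by linarith, by linarith⟩ (by linarith) (by linarith) h]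
    apply le_of_eq; ring

/-- Iterated images of `[u, v]` are intervals. -/
lemma ordConnected_image {f : ℝ → ℝ} (hmaps : MapsTo f (Icc (0 : ℝ) 1) (Icc (0 : ℝ) 1))
    (hcont : ContinuousOn f (Icc (0 : ℝ) 1)) (n : ℕ) {u v : ℝ} (hu : 0 ≤ u) (hv : v ≤ 1) :
    (f^[n] '' Icc u v).OrdConnected :=
  (isPreconnected_Icc.image _
    ((hcont.iterate hmaps n).mono (Icc_subset_Icc hu hv))).ordConnected

/-- Combining `exists_stretch` with a previous lower bound on the size of an image. -/
lemma stretch_step {f : ℝ → ℝ} (hmaps : MapsTo f (Icc (0 : ℝ) 1) (Icc (0 : ℝ) 1))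
    (hcont : ContinuousOn f (Icc (0 : ℝ) 1)) {n m : ℕ} {C κ ℓ : ℝ} (hC : 0 < C)
    (hstr : ∀ u v : ℝ, 0 ≤ u → u < v → v ≤ 1 → ∃ u' ∈ Icc u v, ∃ v' ∈ Icc u v,
      C * min (v - u) κ ≤ |f^[n] u' - f^[n] v'|)
    {u v : ℝ} (hu : 0 ≤ u) (hv : v ≤ 1) (hℓ : 0 < ℓ)
    (h : ∃ u' ∈ Icc u v, ∃ v' ∈ Icc u v, ℓ ≤ |f^[m] u' - f^[m] v'|) :
    ∃ u' ∈ Icc u v, ∃ v' ∈ Icc u v, C * min ℓ κ ≤ |f^[n + m] u' - f^[n + m] v'| := by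
  obtain ⟨a, b, ha, hb, hab⟩ :
      ∃ a b, a ∈ f^[m] '' Icc u v ∧ b ∈ f^[m] '' Icc u v ∧ ℓ ≤ b - a := by
    obtain ⟨a, ha, b, hb, hab⟩ := h
    rcases le_total (f^[m] a) (f^[m] b) with h' | h'
    · exact ⟨_, _, ⟨a, ha, rfl⟩, ⟨b, hb, rfl⟩, by
        rw [abs_sub_comm, abs_of_nonneg (by linarith)] at hab; exact hab⟩
    · exact ⟨_, _, ⟨b, hb, rfl⟩, ⟨a, ha, rfl⟩, by
        rw [abs_of_nonneg (by linarith)] at hab; exact hab⟩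
  have hI : f^[m] '' Icc u v ⊆ Icc 0 1 :=
    ((hmaps.iterate m).mono_left (Icc_subset_Icc hu hv)).image_subset
  obtain ⟨a', ha', b', hb', hab'⟩ := hstr a b (hI ha).1 (by linarith) (hI hb).2
  have hoc := (ordConnected_image hmaps hcont m hu hv).out ha hb
  obtain ⟨x, hx, rfl⟩ := hoc ha'
  obtain ⟨y, hy, rfl⟩ := hoc hb'
  refine ⟨x, hx, y, hy, ?_⟩
  rw [Function.iterate_add_apply, Function.iterate_add_apply]
  refine le_trans ?_ hab'
  gcongr

/-- Uniform expansion: there is a size `η` that the iterated images of every nondegenerate interval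
eventually reach and keep. -/
lemma eventually_large {f : ℝ → ℝ} {s : ℝ} (hs : 1 < s)
    (hmaps : MapsTo f (Icc (0 : ℝ) 1) (Icc (0 : ℝ) 1))
    (hcont : ContinuousOn f (Icc (0 : ℝ) 1)) (hpl : PiecewiseLinearConstSlope f s) :
    ∃ η > 0, ∀ u v : ℝ, 0 ≤ u → u < v → v ≤ 1 → ∃ n₀, ∀ n ≥ n₀,
      ∃ u' ∈ Icc u v, ∃ v' ∈ Icc u v, η ≤ |f^[n] u' - f^[n] v'| := by
  choose κ hκ hstr using exists_stretch hs hmaps hpl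
  -- one fold halves an interval at worst, so `f^[N]` with `s ^ N > 2` expands short intervals
  obtain ⟨N, hN⟩ := pow_unbounded_of_one_lt 2 hs
  have hN0 : 0 < N := by
    rcases Nat.eq_zero_or_pos N with rfl | h
    · norm_num at hN
    · exact h
  set C := s ^ N / 2 with hC
  have hC1 : 1 < C := by rw [hC]; linarith
  obtain ⟨μ, hμ, hμκ⟩ : ∃ μ > 0, ∀ i ∈ Finset.range N, μ ≤ min (κ N) (κ i) := by
    have hne : (Finset.range N).Nonempty := ⟨0, Finset.mem_range.2 hN0⟩
    refine ⟨(Finset.range N).inf' hne fun i => min (κ N) (κ i), ?_, fun i hi => ?_⟩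
    · exact (Finset.lt_inf'_iff _).2 fun i _ => lt_min (hκ _) (hκ _)
    · exact Finset.inf'_le (fun i => min (κ N) (κ i)) hi
  refine ⟨μ / 2, by positivity, fun u v hu huv hv => ?_⟩
  have hblock : ∀ k : ℕ, ∃ u' ∈ Icc u v, ∃ v' ∈ Icc u v,
      min (C ^ k * (v - u)) (κ N) ≤ |f^[k * N] u' - f^[k * N] v'| := by
    intro k
    induction k with
    | zero =>
      refine ⟨u, ⟨le_rfl, huv.le⟩, v, ⟨huv.le, le_rfl⟩, ?_⟩
      simp only [pow_zero, one_mul, zero_mul, Function.iterate_zero, id]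
      rw [abs_sub_comm, abs_of_pos (by linarith)]
      exact min_le_left _ _
    | succ k ih =>
      have hpos : 0 < C ^ k * (v - u) := mul_pos (by positivity) (by linarith)
      obtain ⟨a, ha, b, hb, hab⟩ := stretch_step hmaps hcont (by linarith) (hstr N) hu hv
        (lt_min hpos (hκ N)) ih
      refine ⟨a, ha, b, hb, ?_⟩
      rw [show (k + 1) * N = N + k * N by ring]
      refine le_trans ?_ hab
      rw [min_assoc, min_self, mul_min_of_nonneg _ _ (by linarith : (0 : ℝ) ≤ C), pow_succ]
      refine min_le_min (by apply le_of_eq; ring) ?_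
      nlinarith [hκ N]
  obtain ⟨k₀, hk₀⟩ := pow_unbounded_of_one_lt (κ N / (v - u)) hC1
  refine ⟨k₀ * N, fun n hn => ?_⟩
  have hk : k₀ ≤ n / N := (Nat.le_div_iff_mul_le hN0).2 hn
  have hbig : κ N ≤ C ^ (n / N) * (v - u) := by
    have h1 : κ N / (v - u) < C ^ (n / N) := hk₀.trans_le (pow_le_pow_right₀ hC1.le hk)
    rw [div_lt_iff₀ (by linarith)] at h1
    exact h1.le
  have h2 := hblock (n / N)
  rw [min_eq_right hbig] at h2
  obtain ⟨a, ha, b, hb, hab⟩ := stretch_step hmaps hcont (C := s ^ (n % N) / 2) (by positivity)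
    (hstr (n % N)) hu hv (hκ N) h2
  refine ⟨a, ha, b, hb, ?_⟩
  rw [show n % N + n / N * N = n by rw [mul_comm]; exact Nat.mod_add_div n N] at hab
  refine le_trans ?_ hab
  have h3 := hμκ (n % N) (Finset.mem_range.2 (Nat.mod_lt _ hN0))
  have h4 : 1 ≤ s ^ (n % N) := one_le_pow₀ hs.le
  nlinarith

/-! ### ω-limit sets -/

lemma mem_omega_iff {f : ℝ → ℝ} {x q : ℝ} :
    q ∈ OmegaLimitSet f x ↔ ∀ r > 0, ∀ N : ℕ, ∃ n ≥ N, |f^[n] x - q| < r := by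
  have h1 : q ∈ OmegaLimitSet f x ↔ MapClusterPt q atTop (fun n => f^[n] x) := by
    constructor
    · rintro ⟨φ, hφ, ht⟩
      exact MapClusterPt.of_comp hφ.tendsto_atTop ht.mapClusterPt
    · intro h
      exact MapClusterPt.tendsto_subseq h
  rw [h1, Metric.nhds_basis_ball.mapClusterPt_iff_frequently]
  simp only [frequently_atTop, Metric.mem_ball, Real.dist_eq]

lemma omega_subset {f : ℝ → ℝ} (hmaps : MapsTo f (Icc (0 : ℝ) 1) (Icc (0 : ℝ) 1))
    {x : ℝ} (hx : x ∈ Icc (0 : ℝ) 1) : OmegaLimitSet f x ⊆ Icc (0 : ℝ) 1 := by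
  rintro q ⟨φ, -, ht⟩
  exact isClosed_Icc.mem_of_tendsto ht (Eventually.of_forall fun k => hmaps.iterate _ hx)

lemma omega_closed {f : ℝ → ℝ} {x : ℝ} : IsClosed (OmegaLimitSet f x) := by
  refine isClosed_of_closure_subset fun q hq => mem_omega_iff.2 fun r hr N => ?_
  obtain ⟨p, hp, hpq⟩ := Metric.mem_closure_iff.1 hq (r / 2) (by positivity)
  obtain ⟨n, hn, hnp⟩ := mem_omega_iff.1 hp (r / 2) (by positivity) N
  refine ⟨n, hn, ?_⟩
  rw [Real.dist_eq, abs_lt] at hpq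
  rw [abs_lt] at hnp ⊢
  constructor <;> linarith

lemma omega_invariant {f : ℝ → ℝ} (hmaps : MapsTo f (Icc (0 : ℝ) 1) (Icc (0 : ℝ) 1))
    (hcont : ContinuousOn f (Icc (0 : ℝ) 1)) {x q : ℝ} (hx : x ∈ Icc (0 : ℝ) 1)
    (hq : q ∈ OmegaLimitSet f x) : f q ∈ OmegaLimitSet f x := by
  have hqI := omega_subset hmaps hx hq
  obtain ⟨φ, hφ, ht⟩ := hq
  refine ⟨fun k => φ k + 1, fun a b hab => Nat.succ_lt_succ (hφ hab), ?_⟩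
  simp only [Function.iterate_succ_apply']
  exact (hcont q hqI).tendsto.comp (tendsto_nhdsWithin_iff.2
    ⟨ht, Eventually.of_forall fun k => hmaps.iterate _ hx⟩)

/-! ### Joining two ω-limit sets -/

/-- If each interval `[u (j+1), v (j+1)]` is covered by the `m j`-th image of `[u j, v j]`, then
some orbit passes through all of them, at the times `∑ i < j, m i`. -/
lemma exists_itinerary {f : ℝ → ℝ} (hmaps : MapsTo f (Icc (0 : ℝ) 1) (Icc (0 : ℝ) 1))
    (hcont : ContinuousOn f (Icc (0 : ℝ) 1)) (u v : ℕ → ℝ) (m : ℕ → ℕ)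
    (hsub : Icc (u 0) (v 0) ⊆ Icc (0 : ℝ) 1) (hne : ∀ j, u j ≤ v j)
    (hcov : ∀ j, Icc (u (j + 1)) (v (j + 1)) ⊆ f^[m j] '' Icc (u j) (v j)) :
    ∃ y ∈ Icc (0 : ℝ) 1, ∀ j, f^[∑ i ∈ Finset.range j, m i] y ∈ Icc (u j) (v j) := by
  let M : ℕ → ℕ := fun j => ∑ i ∈ Finset.range j, m i
  let K : ℕ → Set ℝ := fun j => {y | y ∈ Icc (0 : ℝ) 1 ∧ ∀ i ≤ j, f^[M i] y ∈ Icc (u i) (v i)}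
  have hK : ∀ j, ∀ w ∈ Icc (u j) (v j), ∃ y ∈ K j, f^[M j] y = w := by
    intro j
    induction j with
    | zero =>
      refine fun w hw => ⟨w, ⟨hsub hw, fun i hi => ?_⟩, by simp [M]⟩
      obtain rfl : i = 0 := by omega
      simpa [M] using hw
    | succ j ih =>
      intro w hw
      obtain ⟨w', hw', rfl⟩ := hcov j hw
      obtain ⟨y, hy, rfl⟩ := ih w' hw'
      have e : f^[M (j + 1)] y = f^[m j] (f^[M j] y) := by
        rw [← Function.iterate_add_apply]
        congr 1
        simp only [M, Finset.sum_range_succ]; ring_nf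
      refine ⟨y, ⟨hy.1, fun i hi => ?_⟩, e⟩
      rcases hi.eq_or_lt with rfl | hi
      · rw [e]; exact hw
      · exact hy.2 i (by omega)
  have hclosed : ∀ j, IsClosed (K j) := by
    intro j
    have : K j = ⋂ i, ⋂ _ : i ≤ j, (Icc (0 : ℝ) 1 ∩ f^[M i] ⁻¹' Icc (u i) (v i)) := by
      ext y
      simp only [K, mem_ofPred_eq, mem_iInter, mem_inter_iff, mem_preimage]
      exact ⟨fun h i hi => ⟨h.1, h.2 i hi⟩, fun h => ⟨(h 0 (Nat.zero_le _)).1, fun i hi => (h i hi).2⟩⟩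
    rw [this]
    exact isClosed_iInter fun i => isClosed_iInter fun _ =>
      (hcont.iterate hmaps (M i)).preimage_isClosed_of_isClosed isClosed_Icc isClosed_Icc
  obtain ⟨y, hy⟩ := IsCompact.nonempty_iInter_of_sequence_nonempty_isCompact_isClosed K
    (fun j y hy => ⟨hy.1, fun i hi => hy.2 i (by omega)⟩)
    (fun j => (hK j (u j) ⟨le_rfl, hne j⟩).imp fun y hy => hy.1)
    (isCompact_Icc.of_isClosed_subset (hclosed 0) fun y hy => hy.1) hclosed
  rw [mem_iInter] at hy
  exact ⟨y, (hy 0).1, fun j => (hy j).2 j le_rfl⟩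

/-- A nondegenerate interval containing a point of the orbit of `x` has an image that contains a
nondegenerate interval which is close to a prescribed point of `ω(x)` and again meets the orbit of
`x`. -/
lemma follow_orbit {f : ℝ → ℝ} {η : ℝ} (hη : 0 < η)
    (hmaps : MapsTo f (Icc (0 : ℝ) 1) (Icc (0 : ℝ) 1))
    (hcont : ContinuousOn f (Icc (0 : ℝ) 1))
    (hbig : ∀ u v : ℝ, 0 ≤ u → u < v → v ≤ 1 → ∃ n₀, ∀ n ≥ n₀,
      ∃ u' ∈ Icc u v, ∃ v' ∈ Icc u v, η ≤ |f^[n] u' - f^[n] v'|)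
    {x q r u v : ℝ} (hq : q ∈ OmegaLimitSet f x) (hr : 0 < r)
    (hu : 0 ≤ u) (huv : u < v) (hv : v ≤ 1) {n : ℕ} (hn : f^[n] x ∈ Icc u v) :
    ∃ m ≥ 1, ∃ u' v', u' < v' ∧ Icc u' v' ⊆ f^[m] '' Icc u v ∧
      Icc u' v' ⊆ Metric.ball q r ∧ ∃ l, f^[l] x ∈ Icc u' v' := by
  obtain ⟨n₀, hn₀⟩ := hbig u v hu huv hv
  obtain ⟨k, hk, hkq⟩ := mem_omega_iff.1 hq (r / 2) (by positivity) (n + n₀ + 1)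
  obtain ⟨a, ha, b, hb, hab⟩ := hn₀ (k - n) (by omega)
  have hoc := ordConnected_image hmaps hcont (k - n) hu hv
  have hp : f^[k] x ∈ f^[k - n] '' Icc u v :=
    ⟨_, hn, by rw [← Function.iterate_add_apply]; congr 1; omega⟩
  set p := f^[k] x with hpdef
  obtain ⟨e, he, hep⟩ : ∃ e ∈ f^[k - n] '' Icc u v, e ≠ p := by
    by_contra! hcon
    rw [hcon _ ⟨a, ha, rfl⟩, hcon _ ⟨b, hb, rfl⟩, sub_self, abs_zero] at hab
    linarith
  rw [abs_lt] at hkq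
  refine ⟨k - n, by omega, ?_⟩
  rcases hep.lt_or_gt with h | h
  · refine ⟨max e (p - r / 2), p, max_lt h (by linarith), ?_, ?_, k, ⟨max_le h.le (by linarith), le_rfl⟩⟩
    · exact (Icc_subset_Icc_left (le_max_left _ _)).trans (hoc.out he hp)
    · intro y hy
      have := (le_max_right e (p - r / 2)).trans hy.1
      rw [Metric.mem_ball, Real.dist_eq, abs_lt]
      constructor <;> linarith [hy.2]
  · refine ⟨p, min e (p + r / 2), lt_min h (by linarith), ?_, ?_, k, ⟨le_rfl, le_min h.le (by linarith)⟩⟩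
    · exact (Icc_subset_Icc_right (min_le_left _ _)).trans (hoc.out hp he)
    · intro y hy
      have := hy.2.trans (min_le_right e (p + r / 2))
      rw [Metric.mem_ball, Real.dist_eq, abs_lt]
      constructor <;> linarith [hy.1]

/-- The orbit of `x` comes within `ρ` of `a` infinitely often. -/
def Visits (f : ℝ → ℝ) (ρ x a : ℝ) : Prop :=
  ∀ N : ℕ, ∃ n ≥ N, |f^[n] x - a| < ρ

/-- A large interval around a point near `a₂` engulfs the whole `ρ`-ball around `a₁` or around
`a₃`. Hence an interval meeting the orbit of `x` has an image meeting the orbit of `z`. -/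
lemma switch_orbit {f : ℝ → ℝ} {η : ℝ}
    (hmaps : MapsTo f (Icc (0 : ℝ) 1) (Icc (0 : ℝ) 1))
    (hcont : ContinuousOn f (Icc (0 : ℝ) 1))
    (hbig : ∀ u v : ℝ, 0 ≤ u → u < v → v ≤ 1 → ∃ n₀, ∀ n ≥ n₀,
      ∃ u' ∈ Icc u v, ∃ v' ∈ Icc u v, η ≤ |f^[n] u' - f^[n] v'|)
    {a₁ a₂ a₃ ρ x z : ℝ} (h12 : a₁ + ρ ≤ a₂ - ρ) (h23 : a₂ + ρ ≤ a₃ - ρ)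
    (h13 : a₃ - a₁ + 2 * ρ ≤ η / 2)
    (hx₂ : Visits f ρ x a₂) (hz₁ : Visits f ρ z a₁) (hz₃ : Visits f ρ z a₃) {u v : ℝ}
    (hu : 0 ≤ u) (huv : u < v) (hv : v ≤ 1) {n : ℕ} (hn : f^[n] x ∈ Icc u v) :
    ∃ m, ∃ u' v', u' < v' ∧ Icc u' v' ⊆ f^[m] '' Icc u v ∧ ∃ l, f^[l] z ∈ Icc u' v' := by
  obtain ⟨n₀, hn₀⟩ := hbig u v hu huv hv
  obtain ⟨k, hk, hkq⟩ := hx₂ (n + n₀)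
  obtain ⟨a, ha, b, hb, hab⟩ := hn₀ (k - n) (by omega)
  have hoc := ordConnected_image hmaps hcont (k - n) hu hv
  have hp : f^[k] x ∈ f^[k - n] '' Icc u v :=
    ⟨_, hn, by rw [← Function.iterate_add_apply]; congr 1; omega⟩
  set p := f^[k] x with hpdef
  obtain ⟨e, he, hep⟩ : ∃ e ∈ f^[k - n] '' Icc u v, η / 2 ≤ |e - p| := by
    by_contra! hcon
    have h1 := hcon _ ⟨a, ha, rfl⟩
    have h2 := hcon _ ⟨b, hb, rfl⟩
    have h3 := abs_sub_le (f^[k - n] a) p (f^[k - n] b)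
    rw [abs_sub_comm p] at h3
    linarith
  rw [abs_lt] at hkq
  refine ⟨k - n, ?_⟩
  rcases le_abs.1 hep with h | h
  · obtain ⟨l, -, hl⟩ := hz₃ 0
    rw [abs_lt] at hl
    exact ⟨p, e, by linarith, hoc.out hp he, l, by linarith, by linarith⟩
  · obtain ⟨l, -, hl⟩ := hz₁ 0
    rw [abs_lt] at hl
    exact ⟨e, p, by linarith, hoc.out he hp, l, by linarith, by linarith⟩

/-- Two orbits that both visit the `ρ`-neighbourhoods of three points that are close together have
their ω-limit sets contained in a common ω-limit set. -/
lemma exists_omega_superset {f : ℝ → ℝ} {η : ℝ} (hη : 0 < η)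
    (hmaps : MapsTo f (Icc (0 : ℝ) 1) (Icc (0 : ℝ) 1))
    (hcont : ContinuousOn f (Icc (0 : ℝ) 1))
    (hbig : ∀ u v : ℝ, 0 ≤ u → u < v → v ≤ 1 → ∃ n₀, ∀ n ≥ n₀,
      ∃ u' ∈ Icc u v, ∃ v' ∈ Icc u v, η ≤ |f^[n] u' - f^[n] v'|)
    {a₁ a₂ a₃ ρ x z : ℝ} (h12 : a₁ + ρ ≤ a₂ - ρ) (h23 : a₂ + ρ ≤ a₃ - ρ)
    (h13 : a₃ - a₁ + 2 * ρ ≤ η / 2) (hxI : x ∈ Icc (0 : ℝ) 1)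
    (hx : ∀ a ∈ ({a₁, a₂, a₃} : Set ℝ), Visits f ρ x a)
    (hz : ∀ a ∈ ({a₁, a₂, a₃} : Set ℝ), Visits f ρ z a)
    (hne : (OmegaLimitSet f x).Nonempty) :
    ∃ y ∈ Icc (0 : ℝ) 1, OmegaLimitSet f x ⊆ OmegaLimitSet f y ∧
      OmegaLimitSet f z ⊆ OmegaLimitSet f y := by
  set S := OmegaLimitSet f x ∪ OmegaLimitSet f z with hS
  -- intervals that meet one of the two orbits
  let Good : ℝ × ℝ → Prop := fun p => 0 ≤ p.1 ∧ p.1 < p.2 ∧ p.2 ≤ 1 ∧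
    ∃ l, f^[l] x ∈ Icc p.1 p.2 ∨ f^[l] z ∈ Icc p.1 p.2
  have himg : ∀ (m : ℕ) {u v u' v' : ℝ}, 0 ≤ u → v ≤ 1 → u' < v' →
      Icc u' v' ⊆ f^[m] '' Icc u v → 0 ≤ u' ∧ v' ≤ 1 := by
    intro m u v u' v' hu hv huv' hsub
    have hI : f^[m] '' Icc u v ⊆ Icc 0 1 :=
      ((hmaps.iterate m).mono_left (Icc_subset_Icc hu hv)).image_subset
    exact ⟨(hI (hsub ⟨le_rfl, huv'.le⟩)).1, (hI (hsub ⟨huv'.le, le_rfl⟩)).2⟩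
  have hswitch : ∀ x' z' : ℝ, (∀ a ∈ ({a₁, a₂, a₃} : Set ℝ), Visits f ρ x' a) →
      (∀ a ∈ ({a₁, a₂, a₃} : Set ℝ), Visits f ρ z' a) →
      ∀ q ∈ OmegaLimitSet f z', ∀ r > 0, ∀ u v, 0 ≤ u → u < v → v ≤ 1 → ∀ n,
      (f^[n] x' ∈ Icc u v ∨ f^[n] z' ∈ Icc u v) →
      ∃ m ≥ 1, ∃ u' v', u' < v' ∧ Icc u' v' ⊆ f^[m] '' Icc u v ∧
        Icc u' v' ⊆ Metric.ball q r ∧ ∃ l, f^[l] z' ∈ Icc u' v' := by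
    intro x' z' hx' hz' q hq r hr u v hu huv hv n hn
    rcases hn with hn | hn
    · obtain ⟨m, u', v', huv', hsub, l, hl⟩ := switch_orbit hmaps hcont hbig h12 h23 h13
        (hx' a₂ (by simp)) (hz' a₁ (by simp)) (hz' a₃ (by simp)) hu huv hv hn
      obtain ⟨hu', hv'⟩ := himg m hu hv huv' hsub
      obtain ⟨m', hm', u'', v'', huv'', hsub', hball, hl'⟩ :=
        follow_orbit hη hmaps hcont hbig hq hr hu' huv' hv' hl
      refine ⟨m' + m, by omega, u'', v'', huv'', ?_, hball, hl'⟩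
      rw [Function.iterate_add, image_comp]
      exact hsub'.trans (image_mono hsub)
    · exact follow_orbit hη hmaps hcont hbig hq hr hu huv hv hn
  have hstep : ∀ (q : S) (j : ℕ) (p : {p : ℝ × ℝ // Good p}),
      ∃ m ≥ 1, ∃ p' : {p : ℝ × ℝ // Good p},
        Icc p'.1.1 p'.1.2 ⊆ f^[m] '' Icc p.1.1 p.1.2 ∧
        Icc p'.1.1 p'.1.2 ⊆ Metric.ball q.1 (1 / ((j : ℝ) + 1)) := by
    rintro ⟨q, hq⟩ j ⟨⟨u, v⟩, hu, huv, hv, n, hn⟩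
    have hr : 0 < 1 / ((j : ℝ) + 1) := Nat.one_div_pos_of_nat
    rcases hq with hq | hq
    · obtain ⟨m, hm, u', v', huv', hsub, hball, l, hl⟩ :=
        hswitch z x hz hx q hq _ hr u v hu huv hv n hn.symm
      obtain ⟨hu', hv'⟩ := himg m hu hv huv' hsub
      exact ⟨m, hm, ⟨⟨u', v'⟩, hu', huv', hv', l, Or.inl hl⟩, hsub, hball⟩
    · obtain ⟨m, hm, u', v', huv', hsub, hball, l, hl⟩ :=
        hswitch x z hx hz q hq _ hr u v hu huv hv n hn
      obtain ⟨hu', hv'⟩ := himg m hu hv huv' hsub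
      exact ⟨m, hm, ⟨⟨u', v'⟩, hu', huv', hv', l, Or.inr hl⟩, hsub, hball⟩
  choose m hm1 next hcov hball using hstep
  have : Nonempty S := ⟨⟨hne.some, Or.inl hne.some_mem⟩⟩
  obtain ⟨d, hd⟩ := TopologicalSpace.exists_dense_seq S
  -- the targets run through the dense sequence so that each of its terms occurs infinitely often
  let t : ℕ → S := fun j => d (Nat.unpair j).1
  let P : ℕ → {p : ℝ × ℝ // Good p} := fun j => Nat.rec
    ⟨(0, 1), le_rfl, one_pos, le_rfl, 0, Or.inl hxI⟩ (fun j p => next (t j) j p) j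
  obtain ⟨y, hyI, hy⟩ := exists_itinerary hmaps hcont (fun j => (P j).1.1) (fun j => (P j).1.2)
    (fun j => m (t j) j (P j)) (Icc_subset_Icc (P 0).2.1 (P 0).2.2.2.1)
    (fun j => (P j).2.2.1.le) (fun j => hcov (t j) j (P j))
  have hdy : ∀ i, (d i).1 ∈ OmegaLimitSet f y := by
    intro i
    refine mem_omega_iff.2 fun r hr N => ?_
    obtain ⟨k, hk⟩ := exists_nat_one_div_lt hr
    set j := Nat.pair i (max k N) with hj
    have hjk : max k N ≤ j := Nat.right_le_pair _ _
    have htj : t j = d i := by simp [t, hj]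
    refine ⟨∑ i ∈ Finset.range (j + 1), m (t i) i (P i), ?_, ?_⟩
    · calc N ≤ j + 1 := by have := le_max_right k N; omega
        _ = ∑ i ∈ Finset.range (j + 1), 1 := by simp
        _ ≤ _ := Finset.sum_le_sum fun i _ => hm1 _ _ _
    · have h1 := hball (t j) j (P j) (hy (j + 1))
      rw [htj, Metric.mem_ball, Real.dist_eq] at h1
      refine h1.trans (lt_of_le_of_lt ?_ hk)
      have : (k : ℝ) ≤ j := by exact_mod_cast (le_max_left k N).trans hjk
      gcongr
  have hSy : ∀ q : S, q.1 ∈ OmegaLimitSet f y := by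
    have hcl : IsClosed {q : S | q.1 ∈ OmegaLimitSet f y} :=
      omega_closed.preimage continuous_subtype_val
    intro q
    exact hcl.closure_subset_iff.2 (range_subset_iff.2 hdy) (hd q)
  exact ⟨y, hyI, fun q hq => hSy ⟨q, Or.inl hq⟩, fun q hq => hSy ⟨q, Or.inr hq⟩⟩

/-! ### Shadowing on a maximal ω-limit set -/

lemma shadowingOn_of_finite {f : ℝ → ℝ} {A : Set ℝ} (hA : A.Finite) (hinv : ∀ q ∈ A, f q ∈ A) :
    ShadowingOn f A := by
  intro ε hε
  obtain ⟨δ, hδ, hsep⟩ : ∃ δ > 0, ∀ x ∈ A, ∀ y ∈ A, dist x y < δ → x = y := by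
    by_cases h : A.Subsingleton
    · exact ⟨1, one_pos, fun x hx y hy _ => h hx hy⟩
    · have hnt : A.Nontrivial := not_subsingleton_iff.1 h
      refine ⟨A.infsep, hA.infsep_pos_iff_nontrivial.2 hnt, fun x hx y hy hlt => ?_⟩
      by_contra hne
      exact absurd (infsep_le_dist_of_mem hx hy hne) (not_le.2 hlt)
  refine ⟨δ, hδ, fun x hx hpo => ⟨x 0, hx 0, fun n => ?_⟩⟩
  have : ∀ n, f^[n] (x 0) = x n := by
    intro n
    induction n with
    | zero => rfl
    | succ n ih =>
      rw [Function.iterate_succ_apply', ih]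
      exact hsep _ (hinv _ (hx n)) _ (hx _) (hpo n)
  rw [this, dist_self]; exact hε

lemma exists_three_close {A : Set ℝ} (hA : A.Infinite) (hI : A ⊆ Icc (0 : ℝ) 1) {r : ℝ}
    (hr : 0 < r) :
    ∃ a₁ ∈ A, ∃ a₂ ∈ A, ∃ a₃ ∈ A, a₁ < a₂ ∧ a₂ < a₃ ∧ a₃ - a₁ < r := by
  let e := hA.natEmbedding
  obtain ⟨p, -, φ, hφ, ht⟩ := isCompact_Icc.tendsto_subseq (x := fun n => (e n : ℝ))
    (fun n => hI (e n).2)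
  obtain ⟨N, hN⟩ := Metric.tendsto_atTop.1 ht (r / 2) (by positivity)
  have hmem : ∀ n, ((e (φ n) : A) : ℝ) ∈ A := fun n => (e (φ n)).2
  have hinj : ∀ i j, i ≠ j → ((e (φ i) : A) : ℝ) ≠ e (φ j) := fun i j hij h =>
    hij (hφ.injective (e.injective (Subtype.ext h)))
  have hclose : ∀ i ≥ N, |((e (φ i) : A) : ℝ) - p| < r / 2 := fun i hi => hN i hi
  have key : ∀ x ∈ A, ∀ y ∈ A, ∀ z ∈ A, x ≠ y → y ≠ z → x ≠ z → |x - p| < r / 2 →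
      |y - p| < r / 2 → |z - p| < r / 2 →
      ∃ a₁ ∈ A, ∃ a₂ ∈ A, ∃ a₃ ∈ A, a₁ < a₂ ∧ a₂ < a₃ ∧ a₃ - a₁ < r := by
    intro x hx y hy z hz hxy hyz hxz h1 h2 h3
    rw [abs_lt] at h1 h2 h3
    rcases hxy.lt_or_gt with h | h <;> rcases hyz.lt_or_gt with h' | h' <;>
      rcases hxz.lt_or_gt with h'' | h''
    · exact ⟨x, hx, y, hy, z, hz, h, h', by linarith⟩
    · linarith
    · exact ⟨x, hx, z, hz, y, hy, h'', h', by linarith⟩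
    · exact ⟨z, hz, x, hx, y, hy, h'', h, by linarith⟩
    · exact ⟨y, hy, x, hx, z, hz, h, h'', by linarith⟩
    · exact ⟨y, hy, z, hz, x, hx, h', h'', by linarith⟩
    · linarith
    · exact ⟨z, hz, y, hy, x, hx, h', h, by linarith⟩
  exact key _ (hmem N) _ (hmem (N + 1)) _ (hmem (N + 2)) (hinj _ _ (by omega))
    (hinj _ _ (by omega)) (hinj _ _ (by omega)) (hclose _ le_rfl) (hclose _ (by omega))
    (hclose _ (by omega))

/-- Closing up a finite pseudo-orbit `c 0, …, c n` in `ω(x)` by a segment of the orbit of `x` that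
passes near three given points of `ω(x)`. The result `y` is a periodic pseudo-orbit in `[0,1]`. -/
lemma exists_periodic_pseudo {f : ℝ → ℝ} (hmaps : MapsTo f (Icc (0 : ℝ) 1) (Icc (0 : ℝ) 1))
    (hcont : ContinuousOn f (Icc (0 : ℝ) 1)) {x : ℝ} (hxI : x ∈ Icc (0 : ℝ) 1)
    {a₁ a₂ a₃ ρ δ : ℝ} (hρ : 0 < ρ) (hδ : 0 < δ)
    (ha : ∀ a ∈ ({a₁, a₂, a₃} : Set ℝ), a ∈ OmegaLimitSet f x)
    {c : ℕ → ℝ} (hc : ∀ n, c n ∈ OmegaLimitSet f x)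
    (hpo : ∀ n, dist (f (c n)) (c (n + 1)) < δ) (n : ℕ) :
    ∃ (L : ℕ) (y : ℕ → ℝ), 0 < L ∧ (∀ i, y i ∈ Icc (0 : ℝ) 1) ∧
      (∀ i, dist (f (y i)) (y (i + 1)) < δ) ∧ (∀ k, ∀ j ≤ n, y (k * L + j) = c j) ∧
      ∀ a ∈ ({a₁, a₂, a₃} : Set ℝ), ∃ j, ∀ k, |y (k * L + j) - a| < ρ := by
  have hcI : ∀ j, c j ∈ Icc (0 : ℝ) 1 := fun j => omega_subset hmaps hxI (hc j)
  obtain ⟨m, -, hm⟩ := mem_omega_iff.1 (omega_invariant hmaps hcont hxI (hc n)) δ hδ 0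
  obtain ⟨t₁, ht₁, h₁⟩ := mem_omega_iff.1 (ha a₁ (by simp)) ρ hρ m
  obtain ⟨t₂, ht₂, h₂⟩ := mem_omega_iff.1 (ha a₂ (by simp)) ρ hρ m
  obtain ⟨t₃, ht₃, h₃⟩ := mem_omega_iff.1 (ha a₃ (by simp)) ρ hρ m
  obtain ⟨l, hl, hlc⟩ := mem_omega_iff.1 (hc 0) δ hδ (t₁ + t₂ + t₃ + 1)
  -- the orbit segment occupies the times `m, …, l - 1`
  set L := n + 1 + (l - m) with hL
  have hL0 : 0 < L := by omega
  let g : ℕ → ℝ := fun j => if j ≤ n then c j else f^[m + (j - (n + 1))] x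
  have hgc : ∀ j ≤ n, g j = c j := fun j hj => if_pos hj
  have hgx : ∀ j, g (n + 1 + j) = f^[m + j] x := fun j => by
    simp only [g]
    rw [if_neg (by omega)]
    congr 2; omega
  have hper : ∀ k j, j < L → (k * L + j) % L = j := fun k j hj => by
    rw [mul_comm, Nat.mul_add_mod, Nat.mod_eq_of_lt hj]
  have hvisit : ∀ a t, m ≤ t → t < l → |f^[t] x - a| < ρ →
      ∃ j, ∀ k, |g ((k * L + j) % L) - a| < ρ := by
    intro a t hmt htl h
    refine ⟨n + 1 + (t - m), fun k => ?_⟩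
    rw [hper _ _ (by omega), hgx, show m + (t - m) = t by omega]
    exact h
  refine ⟨L, fun i => g (i % L), hL0, fun i => ?_, fun i => ?_, fun k j hj => ?_, ?_⟩
  · simp only [g]
    split_ifs
    · exact hcI _
    · exact hmaps.iterate _ hxI
  · have hlt := Nat.mod_lt i hL0
    have hsucc : (i + 1) % L = if i % L + 1 = L then 0 else i % L + 1 := by
      rw [Nat.add_mod]
      split_ifs with h
      · rcases Nat.lt_or_ge 1 L with h1 | h1
        · rw [Nat.mod_eq_of_lt h1, h, Nat.mod_self]
        · have : L = 1 := by omega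
          rw [this, Nat.mod_one]
      · rw [Nat.mod_eq_of_lt (by omega : 1 < L), Nat.mod_eq_of_lt (by omega)]
    simp only [hsucc]
    generalize i % L = j at hlt
    rcases lt_trichotomy j n with h | rfl | h
    · rw [if_neg (by omega), hgc j h.le, hgc (j + 1) h]; exact hpo j
    · have h0 := hgx 0
      simp only [add_zero] at h0
      rw [if_neg (by omega), hgc j le_rfl, h0, dist_comm, Real.dist_eq]; exact hm
    · obtain ⟨i, rfl⟩ : ∃ i, j = n + 1 + i := ⟨j - (n + 1), by omega⟩
      rw [hgx, ← Function.iterate_succ_apply' f]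
      split_ifs with h'
      · rw [hgc 0 (Nat.zero_le _), Real.dist_eq, show (m + i).succ = l by omega]; exact hlc
      · rw [add_assoc (n + 1) i 1, hgx, ← add_assoc, dist_self]; exact hδ
  · simp only
    rw [hper k j (by omega), hgc j hj]
  · rintro a (rfl | rfl | rfl)
    · exact hvisit _ t₁ ht₁ (by omega) h₁
    · exact hvisit _ t₂ ht₂ (by omega) h₂
    · exact hvisit _ t₃ ht₃ (by omega) h₃

/-- A continuous piecewise linear interval map with constant slope
`s > 1` and with shadowing has shadowing on each of its maximal ω-limit sets. -/
theorem shadowingOn_maximal_omegaLimitSet_of_pl_const_slope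
    (f : ℝ → ℝ) (s : ℝ) (hs : 1 < s)
    (hmaps : Set.MapsTo f (Set.Icc (0 : ℝ) 1) (Set.Icc (0 : ℝ) 1))
    (hcont : ContinuousOn f (Set.Icc (0 : ℝ) 1))
    (hpl : PiecewiseLinearConstSlope f s)
    (hshad : ShadowingOn f (Set.Icc (0 : ℝ) 1)) :
    ∀ A : Set ℝ, IsMaximalOmegaLimitSet f A → ShadowingOn f A := by
  rintro A ⟨⟨x, hxI, rfl⟩, hmax⟩
  set A := OmegaLimitSet f x with hA
  have hAI : A ⊆ Icc (0 : ℝ) 1 := omega_subset hmaps hxI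
  by_cases hfin : A.Finite
  · exact shadowingOn_of_finite hfin fun q hq => omega_invariant hmaps hcont hxI hq
  obtain ⟨η, hη, hbig⟩ := eventually_large hs hmaps hcont hpl
  obtain ⟨a₁, ha₁, a₂, ha₂, a₃, ha₃, h12, h23, h13⟩ :=
    exists_three_close hfin hAI (show 0 < η / 4 by positivity)
  have ha : ∀ a ∈ ({a₁, a₂, a₃} : Set ℝ), a ∈ A := by
    rintro a (rfl | rfl | rfl) <;> assumption
  obtain ⟨ρ, hρ, hρ1, hρ2⟩ : ∃ ρ > 0, 2 * ρ ≤ a₂ - a₁ ∧ 2 * ρ ≤ a₃ - a₂ := by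
    refine ⟨min (a₂ - a₁) (a₃ - a₂) / 2, by
      have := lt_min (sub_pos.2 h12) (sub_pos.2 h23); positivity, ?_, ?_⟩
    · linarith [min_le_left (a₂ - a₁) (a₃ - a₂)]
    · linarith [min_le_right (a₂ - a₁) (a₃ - a₂)]
  intro ε hε
  set ε' := min ε ρ / 2 with hε'
  have hε'0 : 0 < ε' := by have := lt_min hε hρ; positivity
  have hε'1 : ε' < ε := by linarith [min_le_left ε ρ]
  have hε'2 : ε' ≤ ρ / 2 := by linarith [min_le_right ε ρ]
  obtain ⟨δ, hδ, hsh⟩ := hshad ε' hε'0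
  refine ⟨δ, hδ, fun c hc hpo => ?_⟩
  have hfinite : ∀ n, ∃ w ∈ A, ∀ j ≤ n, dist (f^[j] w) (c j) ≤ ε' := by
    intro n
    obtain ⟨L, y, hL, hyI, hypo, hyc, hya⟩ :=
      exists_periodic_pseudo hmaps hcont hxI (half_pos hρ) hδ ha hc hpo n
    obtain ⟨z, hzI, hz⟩ := hsh y hyI hypo
    have hzv : ∀ a ∈ ({a₁, a₂, a₃} : Set ℝ), Visits f ρ z a := by
      intro a haa N
      obtain ⟨j, hj⟩ := hya a haa
      refine ⟨N * L + j, by nlinarith, ?_⟩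
      have h1 := hz (N * L + j)
      have h2 := hj N
      rw [Real.dist_eq, abs_lt] at h1
      rw [abs_lt] at h2 ⊢
      constructor <;> linarith
    obtain ⟨v, hvI, hxv, hzv⟩ := exists_omega_superset hη hmaps hcont hbig (x := x) (z := z)
      (a₁ := a₁) (a₂ := a₂) (a₃ := a₃) (ρ := ρ) (by linarith) (by linarith) (by linarith) hxI
      (fun a haa => mem_omega_iff.1 (ha a haa) ρ hρ) hzv ⟨a₁, ha₁⟩
    have hzA : OmegaLimitSet f z ⊆ A := by
      rw [← hmax _ ⟨v, hvI, rfl⟩ hxv]; exact hzv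
    obtain ⟨w, hwI, φ, hφ, ht⟩ := isCompact_Icc.tendsto_subseq (x := fun k => f^[k * L] z)
      (fun k => hmaps.iterate _ hzI)
    refine ⟨w, hzA ⟨fun k => φ k * L, fun i j hij => Nat.mul_lt_mul_of_pos_right (hφ hij) hL, ht⟩,
      fun j hj => ?_⟩
    have ht' : Tendsto (fun k => f^[j] (f^[φ k * L] z)) atTop (𝓝 (f^[j] w)) :=
      ((hcont.iterate hmaps j) w hwI).tendsto.comp (tendsto_nhdsWithin_iff.2
        ⟨ht, Eventually.of_forall fun k => hmaps.iterate _ hzI⟩)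
    refine le_of_tendsto (ht'.dist tendsto_const_nhds) (Eventually.of_forall fun k => ?_)
    have := hz (φ k * L + j)
    rw [hyc _ j hj, add_comm, Function.iterate_add_apply] at this
    exact this.le
  choose w hwA hw using hfinite
  obtain ⟨z, hzI, φ, hφ, ht⟩ := isCompact_Icc.tendsto_subseq (x := w) (fun n => hAI (hwA n))
  refine ⟨z, omega_closed.mem_of_tendsto ht (Eventually.of_forall fun k => hwA _), fun j => ?_⟩
  have ht' : Tendsto (fun k => f^[j] (w (φ k))) atTop (𝓝 (f^[j] z)) :=
    ((hcont.iterate hmaps j) z hzI).tendsto.comp (tendsto_nhdsWithin_iff.2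
      ⟨ht, Eventually.of_forall fun k => hAI (hwA _)⟩)
  refine lt_of_le_of_lt (le_of_tendsto (ht'.dist tendsto_const_nhds) ?_) hε'1
  filter_upwards [eventually_ge_atTop j] with k hk
  exact hw _ j (hk.trans hφ.le_apply)
end

section
/- Let f: [0,1] → [0,1] be a continuous piecewise monotone map with shadowing. Then the restriction of f to any of its ω-limit sets with non-empty interior has s-limit shadowing. -/
/-- `f` is piecewise monotone on `[0,1]`. -/
def PiecewiseMonotone (f : ℝ → ℝ) : Prop :=
  ∃ (k : ℕ) (p : Fin (k + 2) → ℝ), StrictMono p ∧ p 0 = 0 ∧ p (Fin.last (k + 1)) = 1 ∧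
    ∀ i : Fin (k + 1), MonotoneOn f (Set.Icc (p i.castSucc) (p i.succ)) ∨
      AntitoneOn f (Set.Icc (p i.castSucc) (p i.succ))
open Set

/-! ### The standing structure and uniform growth of intervals -/

/-- The properties of an ω-limit set `A` with nonempty interior on which the shadowing argument
rests: `A` is compact, invariant, a union of intervals of length at least `θ` with gaps at least
`θ` (fields `conn` and `side`), and every nondegenerate interval in `A` grows to size at least `ρ`
(field `grow`). -/
structure Sys (f : ℝ → ℝ) (A : Set ℝ) (ρ θ : ℝ) : Prop where
  compact : IsCompact A
  sub01 : A ⊆ Icc 0 1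
  maps : MapsTo f A A
  cont : ContinuousOn f A
  rho_pos : 0 < ρ
  theta_pos : 0 < θ
  conn : ∀ a ∈ A, ∀ b ∈ A, |a - b| < θ → uIcc a b ⊆ A
  side : ∀ a ∈ A, Icc a (a + θ) ⊆ A ∨ Icc (a - θ) a ⊆ A
  grow : ∀ a b, a < b → Icc a b ⊆ A →
    ∃ n, ∃ u ∈ Icc a b, ∃ v ∈ Icc a b, ρ ≤ |f^[n] u - f^[n] v|

/-- The singular points of `f` on `A`: the frontier points of `A` and the local extrema of `f`. The
extrema are taken in `ℝ`; this only matters at frontier points, which are included anyway. -/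
def sing (f : ℝ → ℝ) (A : Set ℝ) : Set ℝ := {c | c ∈ A ∧ (c ∈ frontier A ∨ IsLocalExtr f c)}

/-- Some iterate of index at most `k` spreads `D` to size at least `ρ`. -/
def Grow (f : ℝ → ℝ) (ρ : ℝ) (k : ℕ) (D : Set ℝ) : Prop :=
  ∃ n ≤ k, ∃ u ∈ D, ∃ v ∈ D, ρ ≤ |f^[n] u - f^[n] v|

theorem Grow.mono {f : ℝ → ℝ} {ρ : ℝ} {k l : ℕ} {D E : Set ℝ} (h : Grow f ρ k D) (hkl : k ≤ l)
    (hDE : D ⊆ E) : Grow f ρ l E := by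
  obtain ⟨n, hn, u, hu, v, hv, h⟩ := h
  exact ⟨n, hn.trans hkl, u, hDE hu, v, hDE hv, h⟩

namespace Sys

variable {f : ℝ → ℝ} {A : Set ℝ} {ρ θ : ℝ}

theorem mapsIter (H : Sys f A ρ θ) (n : ℕ) : MapsTo f^[n] A A := H.maps.iterate n

theorem contIter (H : Sys f A ρ θ) (n : ℕ) : ContinuousOn f^[n] A := H.cont.iterate H.maps n

theorem uIcc_sub_image (H : Sys f A ρ θ) (n : ℕ) {a b : ℝ} (h : uIcc a b ⊆ A) :
    uIcc (f^[n] a) (f^[n] b) ⊆ f^[n] '' uIcc a b :=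
  intermediate_value_uIcc ((H.contIter n).mono h)

theorem uIcc_sub_image_one (H : Sys f A ρ θ) {a b : ℝ} (h : uIcc a b ⊆ A) :
    uIcc (f a) (f b) ⊆ f '' uIcc a b :=
  intermediate_value_uIcc (H.cont.mono h)

theorem unif_iter (H : Sys f A ρ θ) (k : ℕ) {e : ℝ} (he : 0 < e) :
    ∃ η > 0, ∀ n ≤ k, ∀ u ∈ A, ∀ v ∈ A, |u - v| < η → |f^[n] u - f^[n] v| < e := by
  have h1 : ∀ n : ℕ, ∃ η > 0, ∀ u ∈ A, ∀ v ∈ A, |u - v| < η → |f^[n] u - f^[n] v| < e := by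
    intro n
    have := H.compact.uniformContinuousOn_of_continuous (H.contIter n)
    rw [Metric.uniformContinuousOn_iff] at this
    obtain ⟨η, hη, h⟩ := this e he
    exact ⟨η, hη, fun u hu v hv huv => h u hu v hv huv⟩
  induction k with
  | zero =>
    obtain ⟨η, hη, h⟩ := h1 0
    refine ⟨η, hη, fun n hn => ?_⟩
    obtain rfl : n = 0 := by omega
    exact h
  | succ k ih =>
    obtain ⟨η, hη, h⟩ := h1 (k + 1)
    obtain ⟨η', hη', h'⟩ := ih
    refine ⟨min η η', lt_min hη hη', fun n hn u hu v hv huv => ?_⟩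
    rcases Nat.lt_or_ge n (k + 1) with h2 | h2
    · exact h' n (by omega) u hu v hv (huv.trans_le (min_le_right _ _))
    · obtain rfl : n = k + 1 := by omega
      exact h u hu v hv (huv.trans_le (min_le_left _ _))

/-- By compactness the growth time is uniform over the intervals of length at least `r`. -/
theorem grow_unif (H : Sys f A ρ θ) {r : ℝ} (hr : 0 < r) :
    ∃ K, ∀ a b, r ≤ b - a → Icc a b ⊆ A → Grow f ρ K (Icc a b) := by
  set h := r / 3 with hh
  have hpos : 0 < h := by positivity
  have h1 : ∀ j : ℕ, ∃ n : ℕ, Icc (j * h) ((j + 1) * h) ⊆ A → Grow f ρ n (Icc (j * h) ((j + 1) * h)) := by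
    intro j
    by_cases hj : Icc (j * h) ((j + 1) * h) ⊆ A
    · obtain ⟨n, hn⟩ := H.grow _ _ (by nlinarith) hj
      exact ⟨n, fun _ => ⟨n, le_rfl, hn⟩⟩
    · exact ⟨0, fun h => absurd h hj⟩
  choose n hn using h1
  refine ⟨(Finset.range (⌈1 / h⌉₊ + 1)).sup n, fun a b hab hA => ?_⟩
  have ha : a ∈ Icc (0 : ℝ) 1 := H.sub01 (hA ⟨le_rfl, by linarith⟩)
  set j := ⌈a / h⌉₊ with hj
  have hj1 : a ≤ j * h := by
    have := Nat.le_ceil (a / h)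
    rwa [div_le_iff₀ hpos] at this
  have hj2 : j * h < a + h := by
    have := Nat.ceil_lt_add_one (div_nonneg ha.1 hpos.le)
    have h3 : (j : ℝ) * h < (a / h + 1) * h := by
      exact mul_lt_mul_of_pos_right this hpos
    have : (a / h + 1) * h = a + h := by field_simp
    linarith
  have hsub : Icc (j * h) ((j + 1) * h) ⊆ Icc a b := by
    apply Icc_subset_Icc hj1
    have : ((j : ℝ) + 1) * h = j * h + h := by ring
    linarith
  refine (hn j (hsub.trans hA)).mono ?_ hsub
  apply Finset.le_sup (f := n)
  rw [Finset.mem_range]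
  have : j ≤ ⌈1 / h⌉₊ := Nat.ceil_le_ceil (div_le_div_of_nonneg_right ha.2 hpos.le)
  omega

/-- A set that grows within `k` steps has a definite length. -/
theorem size_of_grow (H : Sys f A ρ θ) (k : ℕ) :
    ∃ r > 0, ∀ D ⊆ A, Grow f ρ k D → ∃ u ∈ D, ∃ v ∈ D, u + r ≤ v := by
  obtain ⟨η, hη, h⟩ := H.unif_iter k H.rho_pos
  refine ⟨η, hη, ?_⟩
  rintro D hD ⟨n, hn, u, hu, v, hv, h3⟩
  have h4 : η ≤ |u - v| := by
    by_contra! hc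
    exact absurd (h n hn u (hD hu) v (hD hv) hc) (not_lt.2 h3)
  rcases le_abs.1 h4 with h5 | h5
  · exact ⟨v, hv, u, hu, by linarith⟩
  · exact ⟨u, hu, v, hv, by linarith⟩

/-- `f` is injective between consecutive singular points, by Rolle's argument. -/
theorem injOn (H : Sys f A ρ θ) {a b : ℝ} (hab : uIcc a b ⊆ A)
    (hS : ∀ s ∈ sing f A, s ∈ uIcc a b → s = a ∨ s = b) : InjOn f (uIcc a b) := by
  have key : ∀ u ∈ uIcc a b, ∀ v ∈ uIcc a b, u < v → f u ≠ f v := by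
    intro u hu v hv huv heq
    have hsub : Icc u v ⊆ uIcc a b := ordConnected_uIcc.out hu hv
    obtain ⟨c, hc, hext⟩ := exists_isLocalExtr_Ioo huv (H.cont.mono (hsub.trans hab)) heq
    have hc' : c ∈ uIcc a b := hsub ⟨hc.1.le, hc.2.le⟩
    rcases hS c ⟨hab hc', Or.inr hext⟩ hc' with rfl | rfl
    · rcases mem_uIcc.1 hu with h1 | h1 <;> rcases mem_uIcc.1 hv with h2 | h2 <;>
        linarith [hc.1, hc.2]
    · rcases mem_uIcc.1 hu with h1 | h1 <;> rcases mem_uIcc.1 hv with h2 | h2 <;>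
        linarith [hc.1, hc.2]
  intro u hu v hv huv
  rcases lt_trichotomy u v with h | h | h
  · exact absurd huv (key u hu v hv h)
  · exact h
  · exact absurd huv.symm (key v hv u hu h)

end Sys

theorem image_uIcc_of_injOn {f : ℝ → ℝ} {a b : ℝ} (hc : ContinuousOn f (uIcc a b))
    (hi : InjOn f (uIcc a b)) : f '' uIcc a b = uIcc (f a) (f b) := by
  apply Subset.antisymm _ (intermediate_value_uIcc hc)
  wlog hab : a ≤ b generalizing a b
  · rw [uIcc_comm a b, uIcc_comm (f a)]
    exact this (by rwa [uIcc_comm]) (by rwa [uIcc_comm]) (le_of_not_ge hab)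
  rw [uIcc_of_le hab] at hc hi ⊢
  rintro _ ⟨x, hx, rfl⟩
  rcases ContinuousOn.strictMonoOn_of_injOn_Icc' hab hc hi with h | h
  · exact mem_uIcc.2 (Or.inl ⟨h.monotoneOn (left_mem_Icc.2 hab) hx hx.1,
      h.monotoneOn hx (right_mem_Icc.2 hab) hx.2⟩)
  · exact mem_uIcc.2 (Or.inr ⟨h.antitoneOn hx (right_mem_Icc.2 hab) hx.2,
      h.antitoneOn (left_mem_Icc.2 hab) hx hx.1⟩)

/-! ### Truncated images along an orbit -/

/-- The truncated images of `D` along the orbit of `z`: at each step, apply `f` and intersect with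
the closed `r`-ball around the orbit of `z`. -/
def proc (f : ℝ → ℝ) (z r : ℝ) (D : Set ℝ) : ℕ → Set ℝ
  | 0 => D
  | n + 1 => f '' proc f z r D n ∩ Icc (f^[n + 1] z - r) (f^[n + 1] z + r)

section proc

variable {f : ℝ → ℝ} {A : Set ℝ} {ρ θ : ℝ} {z r : ℝ} {D : Set ℝ}

theorem proc_sub (H : Sys f A ρ θ) (hD : D ⊆ A) (n : ℕ) : proc f z r D n ⊆ A := by
  induction n with
  | zero => exact hD
  | succ n ih =>
    rintro _ ⟨⟨y, hy, rfl⟩, -⟩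
    exact H.maps (ih hy)

theorem proc_ball {n : ℕ} (hn : 1 ≤ n) {y : ℝ} (hy : y ∈ proc f z r D n) :
    |y - f^[n] z| ≤ r := by
  obtain ⟨n, rfl⟩ : ∃ m, n = m + 1 := ⟨n - 1, by omega⟩
  obtain ⟨-, h1, h2⟩ := hy
  exact abs_le.2 ⟨by linarith, by linarith⟩

theorem proc_mem (hz : z ∈ D) (hr : 0 ≤ r) (n : ℕ) : f^[n] z ∈ proc f z r D n := by
  induction n with
  | zero => exact hz
  | succ n ih =>
    refine ⟨⟨_, ih, (Function.iterate_succ_apply' f n z).symm⟩, by constructor <;> linarith⟩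

theorem ordConnected_image_s10 (H : Sys f A ρ θ) (hD : D ⊆ A) (ho : D.OrdConnected) :
    (f '' D).OrdConnected :=
  (ho.isPreconnected.image f (H.cont.mono hD)).ordConnected

theorem proc_ord (H : Sys f A ρ θ) (hD : D ⊆ A) (ho : D.OrdConnected) (n : ℕ) :
    (proc f z r D n).OrdConnected := by
  induction n with
  | zero => exact ho
  | succ n ih => exact (ordConnected_image_s10 H (proc_sub H hD n) ih).inter ordConnected_Icc

/-- Every point of a truncated image is the end of an orbit segment staying `r`-close to the orbit
of `z`. -/
theorem proc_hist {n : ℕ} {y : ℝ} (hy : y ∈ proc f z r D n) :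
    ∃ y' ∈ D, f^[n] y' = y ∧ ∀ i, 1 ≤ i → i ≤ n → |f^[i] y' - f^[i] z| ≤ r := by
  induction n generalizing y with
  | zero => exact ⟨y, hy, rfl, fun i h1 h2 => by omega⟩
  | succ n ih =>
    have hb := proc_ball (by omega) hy
    obtain ⟨⟨w, hw, rfl⟩, -⟩ := hy
    obtain ⟨y', hy', h1, h2⟩ := ih hw
    have h3 : f^[n + 1] y' = f w := by rw [Function.iterate_succ_apply', h1]
    refine ⟨y', hy', h3, fun i hi hin => ?_⟩
    rcases Nat.lt_or_ge i (n + 1) with h | h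
    · exact h2 i hi (by omega)
    · obtain rfl : i = n + 1 := by omega
      rwa [h3]

theorem proc_add (m n : ℕ) :
    proc f z r D (m + n) = proc f (f^[m] z) r (proc f z r D m) n := by
  induction n with
  | zero => rfl
  | succ n ih =>
    change f '' proc f z r D (m + n) ∩ _ = f '' proc f (f^[m] z) r (proc f z r D m) n ∩ _
    rw [ih, ← Function.iterate_add_apply, show n + 1 + m = m + n + 1 by omega]
    rfl

theorem proc_mono {c r' : ℝ} {Q : Set ℝ} (hQ : Q ⊆ D) {n : ℕ}
    (h : ∀ l, 1 ≤ l → l ≤ n → |f^[l] c - f^[l] z| ≤ r - r') :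
    proc f c r' Q n ⊆ proc f z r D n := by
  induction n with
  | zero => exact hQ
  | succ n ih =>
    have h1 := abs_le.1 (h (n + 1) (by omega) le_rfl)
    apply inter_subset_inter
    · exact image_mono (ih fun l h1 h2 => h l h1 (by omega))
    · apply Icc_subset_Icc <;> linarith

/-- Truncated images keep the ability to grow within time `k`: either nothing relevant is cut off,
or an interval of length `r` ending at the orbit of `z` remains. -/
theorem proc_grow (H : Sys f A ρ θ) (hr : 0 < r) (hrρ : 4 * r < ρ) {k : ℕ}
    (hk : ∀ a b, r ≤ b - a → Icc a b ⊆ A → Grow f ρ k (Icc a b))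
    (hD : D ⊆ A) (ho : D.OrdConnected) (hz : z ∈ D) (hb : ∀ y ∈ D, |y - z| ≤ 2 * r)
    (hg : Grow f ρ k D) (n : ℕ) : Grow f ρ k (proc f z r D n) := by
  induction n with
  | zero => exact hg
  | succ n ih =>
    have hball : ∀ y ∈ proc f z r D n, |y - f^[n] z| ≤ 2 * r := by
      intro y hy
      rcases Nat.eq_zero_or_pos n with rfl | h
      · exact hb y hy
      · exact (proc_ball h hy).trans (by linarith)
    obtain ⟨m, hm, u, hu, v, hv, huv⟩ := ih
    rcases m with _ | m
    · exfalso
      have h1 := abs_le.1 (hball u hu)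
      have h2 := abs_le.1 (hball v hv)
      have : |u - v| ≤ 4 * r := abs_le.2 ⟨by linarith, by linarith⟩
      simp only [Function.iterate_zero, id] at huv
      linarith
    set Z := f^[n + 1] z with hZ
    have hzn : Z ∈ f '' proc f z r D n :=
      ⟨_, proc_mem hz hr.le n, (Function.iterate_succ_apply' f n z).symm⟩
    have hoc := ordConnected_image_s10 H (proc_sub H hD n) (proc_ord (z := z) (r := r) H hD ho n)
    have hA : proc f z r D (n + 1) ⊆ A := proc_sub H hD _
    have key : ∀ w ∈ proc f z r D n, f w ∈ Icc (Z - r) (Z + r) ∨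
        Grow f ρ k (proc f z r D (n + 1)) := by
      intro w hw
      by_cases h : f w ∈ Icc (Z - r) (Z + r)
      · exact Or.inl h
      right
      have hw' : f w ∈ f '' proc f z r D n := ⟨w, hw, rfl⟩
      rw [mem_Icc, not_and_or, not_le, not_le] at h
      rcases h with h | h
      · have hs : Icc (Z - r) Z ⊆ proc f z r D (n + 1) := by
          intro y hy
          exact ⟨hoc.out hw' hzn ⟨by linarith [hy.1], hy.2⟩, hy.1, by linarith [hy.2]⟩
        exact (hk _ _ (by linarith) (hs.trans hA)).mono le_rfl hs
      · have hs : Icc Z (Z + r) ⊆ proc f z r D (n + 1) := by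
          intro y hy
          exact ⟨hoc.out hzn hw' ⟨hy.1, by linarith [hy.2]⟩, by linarith [hy.1], hy.2⟩
        exact (hk _ _ (by linarith) (hs.trans hA)).mono le_rfl hs
    rcases key u hu with h1 | h1
    · rcases key v hv with h2 | h2
      · exact ⟨m, by omega, f u, ⟨⟨u, hu, rfl⟩, h1⟩, f v, ⟨⟨v, hv, rfl⟩, h2⟩, huv⟩
      · exact h2
    · exact h1

end proc

/-! ### Singular points -/

/-- A property holding for all small positive parameters at each point of a finite set holds for
all small positive parameters uniformly on the set. -/
theorem Set.Finite.exists_pos_uniform {α : Type*} {S : Set α} (hS : S.Finite)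
    {P : α → ℝ → Prop} (hP : ∀ a ∈ S, ∃ r > 0, ∀ r', 0 < r' → r' ≤ r → P a r') :
    ∃ r > 0, ∀ a ∈ S, ∀ r', 0 < r' → r' ≤ r → P a r' := by
  induction S, hS using Set.Finite.induction_on with
  | empty => exact ⟨1, one_pos, by simp⟩
  | @insert a S _ _ ih =>
    obtain ⟨r, hr, h⟩ := ih fun b hb => hP b (mem_insert_of_mem _ hb)
    obtain ⟨r', hr', h'⟩ := hP a (mem_insert _ _)
    refine ⟨min r r', lt_min hr hr', ?_⟩
    rintro b (rfl | hb) q hq hqr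
    · exact h' q hq (hqr.trans (min_le_right _ _))
    · exact h b hb q hq (hqr.trans (min_le_left _ _))

section basic

variable {f : ℝ → ℝ} {A : Set ℝ} {ρ θ : ℝ}

/-- `f` is constant on no nondegenerate interval of `A`. -/
theorem Sys.noflat (H : Sys f A ρ θ) {a b : ℝ} (hab : a ≠ b) (h : uIcc a b ⊆ A) :
    ∃ u ∈ uIcc a b, f u ≠ f a := by
  by_contra! hc
  obtain ⟨b', hb', hne, hlt⟩ : ∃ b' ∈ uIcc a b, a ≠ b' ∧ |b' - a| < ρ := by
    have hpos : 0 < |b - a| := abs_pos.2 (sub_ne_zero.2 hab.symm)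
    have hρ := H.rho_pos
    set t := min 1 (ρ / 2 / |b - a|)
    have ht0 : 0 < t := lt_min one_pos (by positivity)
    have ht1 : t ≤ 1 := min_le_left _ _
    have ht2 : t * |b - a| ≤ ρ / 2 := by
      have := min_le_right 1 (ρ / 2 / |b - a|)
      rwa [le_div_iff₀ hpos] at this
    refine ⟨a + t * (b - a), ?_, ?_, ?_⟩
    · rw [mem_uIcc]
      rcases le_total a b with h | h
      · left; constructor <;> nlinarith
      · right; constructor <;> nlinarith
    · intro h1
      have : t * (b - a) ≠ 0 := mul_ne_zero ht0.ne' (sub_ne_zero.2 hab.symm)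
      apply this; linarith
    · rw [add_sub_cancel_left, abs_mul, abs_of_pos ht0]; linarith
  have hsub : uIcc a b' ⊆ uIcc a b := uIcc_subset_uIcc left_mem_uIcc hb'
  obtain ⟨n, u, hu, v, hv, huv⟩ := H.grow (min a b') (max a b') (min_lt_max.2 hne) (hsub.trans h)
  have hu' : u ∈ uIcc a b' := hu
  have hv' : v ∈ uIcc a b' := hv
  rcases n with _ | n
  · simp only [Function.iterate_zero, id] at huv
    have h1 := abs_sub_le_of_uIcc_subset_uIcc (uIcc_subset_uIcc hu' hv')
    rw [abs_sub_comm] at h1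
    linarith
  · rw [Function.iterate_succ_apply, Function.iterate_succ_apply, hc u (hsub hu'),
      hc v (hsub hv')] at huv
    simp at huv
    linarith [H.rho_pos]

theorem sing_sub : sing f A ⊆ A := fun _ h => h.1

theorem Sys.mem_interior (H : Sys f A ρ θ) {a : ℝ} (ha : a ∈ A) (hs : a ∉ sing f A) :
    a ∈ interior A := by
  by_contra h
  apply hs
  refine ⟨ha, Or.inl ?_⟩
  rw [H.compact.isClosed.frontier_eq]
  exact ⟨ha, h⟩

theorem Sys.mem_interior_of_Icc {a x y : ℝ} (hxa : x < a) (hay : a < y)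
    (h1 : Icc x y ⊆ A) : a ∈ interior A :=
  interior_mono h1 (by rw [interior_Icc]; exact ⟨hxa, hay⟩)

/-- Near a frontier point, `A` lies on one side only. -/
theorem Sys.frontier_side (H : Sys f A ρ θ) {a b y : ℝ} (ha : a ∈ frontier A)
    (hab : uIcc a b ⊆ A) (hy : y ∈ A) (hya : |y - a| < θ) (hyb : |y - a| ≤ |b - a|) :
    y ∈ uIcc a b := by
  have hai : a ∉ interior A := by
    rw [H.compact.isClosed.frontier_eq] at ha; exact ha.2
  have haA : a ∈ A := hab left_mem_uIcc
  have hc : uIcc y a ⊆ A := H.conn y hy a haA hya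
  by_contra hn
  apply hai
  rw [mem_uIcc, not_or] at hn
  rcases le_total a b with h | h
  · rw [uIcc_of_le h] at hab
    have h1 : y < a := by
      by_contra! h1
      rw [abs_of_nonneg (by linarith), abs_of_nonneg (by linarith)] at hyb
      exact hn.1 ⟨h1, by linarith⟩
    have h2 : a < b := by
      rcases h.lt_or_eq with h | h
      · exact h
      · subst h
        simp at hyb
        linarith
    rw [uIcc_of_le h1.le] at hc
    apply Sys.mem_interior_of_Icc h1 h2
    intro t ht
    rcases le_total t a with h | h
    · exact hc ⟨ht.1, h⟩
    · exact hab ⟨h, ht.2⟩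
  · rw [uIcc_of_ge h] at hab
    have h1 : a < y := by
      by_contra! h1
      rw [abs_of_nonpos (by linarith), abs_of_nonpos (by linarith)] at hyb
      exact hn.2 ⟨by linarith, h1⟩
    have h2 : b < a := by
      rcases h.lt_or_eq with h | h
      · exact h
      · subst h
        simp at hyb
        linarith
    rw [uIcc_of_ge h1.le] at hc
    apply Sys.mem_interior_of_Icc h2 h1
    intro t ht
    rcases le_total t a with h | h
    · exact hab ⟨ht.1, h⟩
    · exact hc ⟨h, ht.2⟩

/-- At a singular point, the image of any one-sided neighbourhood already contains the image of a
full neighbourhood. -/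
theorem Sys.fold (H : Sys f A ρ θ) {a b : ℝ} (ha : a ∈ sing f A) (hab : a ≠ b)
    (hsub : uIcc a b ⊆ A) :
    ∃ κ > 0, ∀ y ∈ A, |y - a| < κ → f y ∈ f '' uIcc a b := by
  have hpos : 0 < |b - a| := abs_pos.2 (sub_ne_zero.2 hab.symm)
  rcases ha with ⟨haA, ha | ha⟩
  · exact ⟨min θ |b - a|, lt_min H.theta_pos hpos, fun y hy hlt => ⟨y, H.frontier_side ha hsub hy
      (hlt.trans_le (min_le_left _ _)) (hlt.trans_le (min_le_right _ _)).le, rfl⟩⟩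
  · have hc : ContinuousWithinAt f A a := H.cont a haA
    rw [Metric.continuousWithinAt_iff] at hc
    have key : ∀ κ > 0, (∀ y, |y - a| < κ → f y ≤ f a) ∨ (∀ y, |y - a| < κ → f a ≤ f y) →
        ∃ κ > 0, ∀ y ∈ A, |y - a| < κ → f y ∈ f '' uIcc a b := by
      intro κ hκ hm
      obtain ⟨e, he, hea, hek⟩ : ∃ e ∈ uIcc a b, a ≠ e ∧ |e - a| < κ := by
        set t := min 1 (κ / 2 / |b - a|)
        have ht0 : 0 < t := lt_min one_pos (by positivity)
        have ht1 : t ≤ 1 := min_le_left _ _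
        have ht2 : t * |b - a| ≤ κ / 2 := by
          have := min_le_right 1 (κ / 2 / |b - a|)
          rwa [le_div_iff₀ hpos] at this
        refine ⟨a + t * (b - a), ?_, ?_, ?_⟩
        · rw [mem_uIcc]
          rcases le_total a b with h | h
          · left; constructor <;> nlinarith
          · right; constructor <;> nlinarith
        · intro h1
          have : t * (b - a) ≠ 0 := mul_ne_zero ht0.ne' (sub_ne_zero.2 hab.symm)
          apply this; linarith
        · rw [add_sub_cancel_left, abs_mul, abs_of_pos ht0]; linarith
      have hes : uIcc a e ⊆ uIcc a b := uIcc_subset_uIcc left_mem_uIcc he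
      obtain ⟨u, hu, hfu⟩ := H.noflat hea (hes.trans hsub)
      have huk : |u - a| < κ :=
        (abs_sub_left_of_mem_uIcc hu).trans_lt hek
      have hus : uIcc a u ⊆ uIcc a b := (uIcc_subset_uIcc left_mem_uIcc hu).trans hes
      obtain ⟨κ', hκ', h⟩ := hc (ε := |f u - f a|) (abs_pos.2 (sub_ne_zero.2 hfu))
      refine ⟨min κ κ', lt_min hκ hκ', fun y hy hlt => ?_⟩
      have h1 : |f y - f a| < |f u - f a| := h hy (hlt.trans_le (min_le_right _ _))
      apply image_mono hus
      apply H.uIcc_sub_image_one (hus.trans hsub)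
      rcases hm with hm | hm
      · have h2 := hm y (hlt.trans_le (min_le_left _ _))
        have h3 := hm u huk
        rw [abs_of_nonpos (by linarith), abs_of_nonpos (by linarith)] at h1
        exact mem_uIcc.2 (Or.inr ⟨by linarith, h2⟩)
      · have h2 := hm y (hlt.trans_le (min_le_left _ _))
        have h3 := hm u huk
        rw [abs_of_nonneg (by linarith), abs_of_nonneg (by linarith)] at h1
        exact mem_uIcc.2 (Or.inl ⟨h2, by linarith⟩)
    rcases ha with ha | ha
    · obtain ⟨κ, hκ, h⟩ := Metric.eventually_nhds_iff.1 ha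
      exact key κ hκ (Or.inr fun y hy => h hy)
    · obtain ⟨κ, hκ, h⟩ := Metric.eventually_nhds_iff.1 ha
      exact key κ hκ (Or.inl fun y hy => h hy)

/-- A singular point whose image is not singular is reached from the interior of `A`. -/
theorem Sys.root (H : Sys f A ρ θ) (hfin : (sing f A).Finite) (hsurj : A ⊆ f '' A) {c : ℝ}
    (hc : c ∈ sing f A) (hc1 : f c ∉ sing f A) : ∃ k, ∃ c' ∈ interior A, f^[k] c' = c := by
  by_contra! hn
  set B : Set ℝ := {a | a ∈ A ∧ ∃ k, f^[k] a = c}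
  have hBint : ∀ a ∈ B, a ∉ interior A := fun a ⟨_, k, hk⟩ hi => hn k a hi hk
  have hBS : B ⊆ sing f A := by
    intro a ha
    refine ⟨ha.1, Or.inl ?_⟩
    rw [H.compact.isClosed.frontier_eq]
    exact ⟨ha.1, hBint a ha⟩
  have hpre : ∀ a ∈ B, ∃ b ∈ B, f b = a := by
    rintro a ⟨haA, k, hk⟩
    obtain ⟨b, hb, rfl⟩ := hsurj haA
    exact ⟨b, ⟨hb, k + 1, by rwa [Function.iterate_succ_apply]⟩, rfl⟩
  choose! g hgB hg using hpre
  have hBfin : B.Finite := hfin.subset hBS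
  have hinj : InjOn g B := fun x hx y hy hxy => by rw [← hg x hx, ← hg y hy, hxy]
  have hsurjOn : SurjOn g B B := ((hBfin.injOn_iff_bijOn_of_mapsTo hgB).1 hinj).surjOn
  obtain ⟨a, ha, hac⟩ := hsurjOn (show c ∈ B from ⟨hc.1, 0, rfl⟩)
  apply hc1
  rw [← hac, hg a ha]
  exact hBS ha

end basic

/-! ### Tubes along the orbit of a singular value -/

section link

variable {f : ℝ → ℝ} {A : Set ℝ} {ρ θ : ℝ}

/-- As long as no singular point other than the base orbit is met, the truncated images of a
one-sided interval are one-sided intervals. -/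
theorem proc_uIcc (H : Sys f A ρ θ) {c e r : ℝ} (hsub : uIcc c e ⊆ A) (hce : e ≠ c) (hr : 0 < r)
    {N : ℕ} (hN : ∀ n < N, ∀ s ∈ sing f A, s ∈ proc f c r (uIcc c e) n → s = f^[n] c) :
    ∀ n ≤ N, ∃ d, d ≠ f^[n] c ∧ proc f c r (uIcc c e) n = uIcc (f^[n] c) d := by
  intro n hn
  induction n with
  | zero => exact ⟨e, hce, rfl⟩
  | succ n ih =>
    obtain ⟨d, hd, hp⟩ := ih (by omega)
    have hA : uIcc (f^[n] c) d ⊆ A := hp ▸ proc_sub H hsub n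
    have hinj : InjOn f (uIcc (f^[n] c) d) :=
      H.injOn hA fun s hs hs' => Or.inl (hN n (by omega) s hs (hp ▸ hs'))
    have himg := image_uIcc_of_injOn (H.cont.mono hA) hinj
    have hne : f d ≠ f (f^[n] c) := fun h => hd (hinj right_mem_uIcc left_mem_uIcc h)
    change ∃ d', d' ≠ f^[n + 1] c ∧ f '' proc f c r (uIcc c e) n ∩ _ = uIcc (f^[n + 1] c) d'
    rw [hp, himg, Function.iterate_succ_apply']
    refine ⟨max (f (f^[n] c) - r) (min (f (f^[n] c) + r) (f d)), by grind, ?_⟩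
    ext x
    grind [mem_uIcc]

/-- A tube of one-sided intervals `[V j, E j]` along the orbit `V j` of `v`, free of singular
points and mapped over each other up to truncation at distance `r`. -/
structure Tube (f : ℝ → ℝ) (A : Set ℝ) (v : ℝ) (E : ℕ → ℝ) (r r1 : ℝ) : Prop where
  sub : ∀ j, uIcc (f^[j] v) (E j) ⊆ A
  free : ∀ j, ∀ s ∈ sing f A, s ∉ uIcc (f^[j] v) (E j)
  len : ∀ j, r1 ≤ |E j - f^[j] v|
  next : ∀ j, E (j + 1) ∈ uIcc (f^[j + 1] v) (f (E j))
  step : ∀ j, ∀ y ∈ uIcc (f^[j] v) (E j), |f y - f^[j + 1] v| ≤ r →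
    f y ∈ uIcc (f^[j + 1] v) (E (j + 1))

/-- If the truncated images of `[c, e]` meet no singular point off the orbit of `c`, and this orbit
does not return to the singular set, then from time `1` on they form a tube. -/
theorem Tube.exists_of_bad (H : Sys f A ρ θ) {c e r : ℝ} (hsub : uIcc c e ⊆ A) (hr : 0 < r)
    (hrρ : 4 * r < ρ) (her : |e - c| = r)
    (hbad : ∀ n, ∀ s ∈ sing f A, s ∈ proc f c r (uIcc c e) n → s = f^[n] c)
    (hcn : ∀ n, 1 ≤ n → f^[n] c ∉ sing f A) :
    ∃ E, ∃ r1 > 0, Tube f A (f c) E r r1 ∧ proc f c r (uIcc c e) 1 = uIcc (f c) (E 0) := by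
  have hce : e ≠ c := by
    rintro rfl
    simp at her
    linarith
  obtain ⟨k, hk⟩ := H.grow_unif hr
  obtain ⟨r1, hr1, hsize⟩ := H.size_of_grow k
  have hgrow : ∀ n, Grow f ρ k (proc f c r (uIcc c e) n) := by
    apply proc_grow H hr hrρ hk hsub ordConnected_uIcc left_mem_uIcc
    · intro y hy
      have := abs_sub_left_of_mem_uIcc hy
      linarith
    · apply hk (min c e) (max c e)
      · rw [max_sub_min_eq_abs]; exact her.ge
      · exact hsub
  have h1 : ∀ n, ∃ d, d ≠ f^[n] c ∧ proc f c r (uIcc c e) n = uIcc (f^[n] c) d :=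
    fun n => proc_uIcc H hsub hce hr (N := n) (fun m _ => hbad m) n le_rfl
  choose d hd hp using h1
  refine ⟨fun j => d (j + 1), r1, hr1, ⟨?_, ?_, ?_, ?_, ?_⟩, hp 1⟩
  · intro j
    rw [← Function.iterate_succ_apply, ← hp]
    exact proc_sub H hsub _
  · intro j s hs hsm
    rw [← Function.iterate_succ_apply, ← hp] at hsm
    have := hbad _ s hs hsm
    exact hcn (j + 1) (by omega) (this ▸ hs)
  · intro j
    obtain ⟨u, hu, v, hv, huv⟩ := hsize _ (proc_sub H hsub _) (hgrow (j + 1))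
    rw [hp] at hu hv
    have := abs_sub_le_of_uIcc_subset_uIcc (uIcc_subset_uIcc hu hv)
    rw [Function.iterate_succ_apply] at this
    exact (by linarith [le_abs_self (v - u)] : r1 ≤ |v - u|).trans this
  · intro j
    have h2 : d (j + 1 + 1) ∈ proc f c r (uIcc c e) (j + 1 + 1) := by
      rw [hp]; exact right_mem_uIcc
    obtain ⟨⟨y, hy, hy2⟩, -⟩ := h2
    have hA : uIcc (f^[j + 1] c) (d (j + 1)) ⊆ A := hp (j + 1) ▸ proc_sub H hsub _
    have hinj : InjOn f (uIcc (f^[j + 1] c) (d (j + 1))) :=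
      H.injOn hA fun s hs hs' => Or.inl (hbad (j + 1) s hs (hp (j + 1) ▸ hs'))
    have himg := image_uIcc_of_injOn (H.cont.mono hA) hinj
    rw [hp] at hy
    have : f y ∈ f '' uIcc (f^[j + 1] c) (d (j + 1)) := ⟨y, hy, rfl⟩
    rw [himg, hy2] at this
    rwa [← Function.iterate_succ_apply, Function.iterate_succ_apply' f (j + 1)]
  · intro j y hy hyr
    rw [← Function.iterate_succ_apply, ← hp] at hy ⊢
    rw [← Function.iterate_succ_apply] at hyr
    refine ⟨⟨y, hy, rfl⟩, ?_⟩
    rw [abs_le] at hyr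
    constructor <;> linarith

/-- Let `w` lie on the other side of `v` than the tube, its orbit being `ε`-shadowed by a point `ζ`
of the tube. As long as the intervals between the orbits of `v` and `w` contain no singular point
except possibly on the orbit of `w`, the orbit of `w` stays on the other side and `ε`-close to the
orbit of `v`. -/
theorem Tube.inv (H : Sys f A ρ θ) {v r r1 : ℝ} {E : ℕ → ℝ} (hT : Tube f A v E r r1)
    {w ζ ε : ℝ} (hε : ε ≤ r) (hw : uIcc v w ⊆ A) (hvw : v ∈ uIcc (E 0) w) (hne : w ≠ v)
    (hζ : ζ ∈ uIcc v (E 0)) (hcl : ∀ j, |f^[j] ζ - f^[j] w| < ε) {J : ℕ}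
    (hJ : ∀ j < J, ∀ s ∈ sing f A, s ∈ uIcc (f^[j] v) (f^[j] w) → s = f^[j] w) :
    ∀ j ≤ J, f^[j] v ∈ uIcc (E j) (f^[j] w) ∧ |f^[j] v - f^[j] w| < ε ∧
      uIcc (f^[j] v) (f^[j] w) ⊆ A ∧ f^[j] '' uIcc v w = uIcc (f^[j] v) (f^[j] w) ∧
      f^[j] w ≠ f^[j] v ∧ f^[j] ζ ∈ uIcc (f^[j] v) (E j) := by
  intro j hj
  have clos : ∀ V Ej W Z : ℝ, V ∈ uIcc Ej W → Z ∈ uIcc V Ej → |Z - W| < ε → |V - W| < ε := by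
    intro V Ej W Z
    grind [mem_uIcc]
  induction j with
  | zero =>
    exact ⟨hvw, clos _ _ _ _ hvw hζ (hcl 0), hw, by simp, hne, hζ⟩
  | succ j ih =>
    obtain ⟨h1, h2, h3, h4, h5, h6⟩ := ih (by omega)
    have hA : uIcc (E j) (f^[j] w) ⊆ A := by
      intro y hy
      have : y ∈ uIcc (f^[j] v) (E j) ∨ y ∈ uIcc (f^[j] v) (f^[j] w) := by grind [mem_uIcc]
      exact this.elim (fun h => hT.sub j h) (fun h => h3 h)
    have hinj : InjOn f (uIcc (E j) (f^[j] w)) := by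
      apply H.injOn hA
      intro s hs hsy
      have : s ∈ uIcc (f^[j] v) (E j) ∨ s ∈ uIcc (f^[j] v) (f^[j] w) := by grind [mem_uIcc]
      rcases this with h | h
      · exact absurd h (hT.free j s hs)
      · exact Or.inr (hJ j (by omega) s hs h)
    have himg := image_uIcc_of_injOn (H.cont.mono hA) hinj
    have hsubV : uIcc (f^[j] v) (f^[j] w) ⊆ uIcc (E j) (f^[j] w) :=
      uIcc_subset_uIcc h1 right_mem_uIcc
    have hsubE : uIcc (f^[j] v) (E j) ⊆ uIcc (E j) (f^[j] w) :=
      uIcc_subset_uIcc h1 left_mem_uIcc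
    have himg2 := image_uIcc_of_injOn (H.cont.mono h3) (hinj.mono hsubV)
    have himg3 := image_uIcc_of_injOn (H.cont.mono (hT.sub j)) (hinj.mono hsubE)
    have hV : f (f^[j] v) ∈ uIcc (f (E j)) (f (f^[j] w)) := himg ▸ ⟨_, h1, rfl⟩
    have hZ : f (f^[j] ζ) ∈ uIcc (f (f^[j] v)) (f (E j)) := himg3 ▸ ⟨_, h6, rfl⟩
    have hnext := hT.next j
    have hstep := hT.step j (f^[j] ζ) h6
    have hcl' := hcl (j + 1)
    have hA' := H.maps.image_subset.trans' (image_mono h3)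
    have hne' : f (f^[j] w) ≠ f (f^[j] v) := fun h => h5 (hinj right_mem_uIcc h1 h)
    have himg4 : f^[j + 1] '' uIcc v w = f '' (f^[j] '' uIcc v w) := by
      rw [Function.iterate_succ', image_comp]
    rw [himg4, h4]
    rw [himg2] at hA' ⊢
    simp only [Function.iterate_succ_apply'] at hnext hstep hcl' ⊢
    have hv' : f (f^[j] v) ∈ uIcc (E (j + 1)) (f (f^[j] w)) := by
      generalize f (f^[j] v) = V at *
      generalize f (f^[j] w) = W at *
      grind [mem_uIcc]
    have hz' : f (f^[j] ζ) ∈ uIcc (f (f^[j] v)) (E (j + 1)) := by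
      apply hstep
      have := clos' hV hZ hcl'
      linarith
    exact ⟨hv', clos _ _ _ _ hv' hz' hcl', hA', trivial, hne', hz'⟩
where
  clos' {V F W Z ε : ℝ} (h1 : V ∈ uIcc F W) (h2 : Z ∈ uIcc V F) (h3 : |Z - W| < ε) :
      |Z - V| < ε := by
    grind [mem_uIcc]

end link

/-! ### Germs at singular points -/

section link

variable {f : ℝ → ℝ} {A : Set ℝ} {ρ θ : ℝ}

/-- Either the truncated images of `[c, e]` never meet a singular point off the orbit of `c`, or at
the first time they do, one such point is at distance at least `ε` from the orbit of `c`. -/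
def GermAlt (f : ℝ → ℝ) (A : Set ℝ) (c e r ε : ℝ) : Prop :=
  (∀ l, ∀ s ∈ sing f A, s ∈ proc f c r (uIcc c e) l → s = f^[l] c) ∨
  ∃ l, ∃ a ∈ sing f A, a ∈ proc f c r (uIcc c e) l ∧ ε ≤ |a - f^[l] c| ∧
    ∀ l' < l, ∀ s ∈ sing f A, s ∈ proc f c r (uIcc c e) l' → s = f^[l'] c

theorem germAlt_exists (c e r : ℝ) :
    ∃ ε > 0, ∀ ε', 0 < ε' → ε' ≤ ε → GermAlt f A c e r ε' := by
  classical
  by_cases h : ∃ l, ∃ a ∈ sing f A, a ∈ proc f c r (uIcc c e) l ∧ a ≠ f^[l] c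
  · obtain ⟨a, ha, hap, hne⟩ := Nat.find_spec h
    refine ⟨_, abs_pos.2 (sub_ne_zero.2 hne), fun ε' _ hε' => Or.inr ⟨_, a, ha, hap, hε', ?_⟩⟩
    intro l' hl' s hs hsp
    by_contra hne'
    exact Nat.find_min h hl' ⟨s, hs, hsp, hne'⟩
  · push Not at h
    exact ⟨1, one_pos, fun _ _ _ => Or.inl h⟩

theorem germAlt_uniform (hfin : (sing f A).Finite) (r : ℝ) :
    ∃ ε > 0, ∀ c ∈ sing f A, ∀ ε', 0 < ε' → ε' ≤ ε →
      GermAlt f A c (c + r) r ε' ∧ GermAlt f A c (c - r) r ε' := by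
  apply hfin.exists_pos_uniform
  intro c _
  obtain ⟨ε1, h1, h1'⟩ := germAlt_exists (f := f) (A := A) c (c + r) r
  obtain ⟨ε2, h2, h2'⟩ := germAlt_exists (f := f) (A := A) c (c - r) r
  exact ⟨min ε1 ε2, lt_min h1 h2, fun ε' h h' =>
    ⟨h1' ε' h (h'.trans (min_le_left _ _)), h2' ε' h (h'.trans (min_le_right _ _))⟩⟩

/-- Singular points must come in between the orbits of `v` and `w`: otherwise the interval between
`v` and `w` never grows. -/
theorem Tube.never (H : Sys f A ρ θ) {v r r1 : ℝ} {E : ℕ → ℝ} (hT : Tube f A v E r r1)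
    {w ζ ε : ℝ} (hε : ε ≤ r) (hερ : ε ≤ ρ) (hw : uIcc v w ⊆ A) (hvw : v ∈ uIcc (E 0) w)
    (hne : w ≠ v) (hζ : ζ ∈ uIcc v (E 0)) (hcl : ∀ j, |f^[j] ζ - f^[j] w| < ε)
    (hJ : ∀ j, ∀ s ∈ sing f A, s ∈ uIcc (f^[j] v) (f^[j] w) → s = f^[j] w) : False := by
  obtain ⟨n, x, hx, y, hy, hxy⟩ := H.grow (min v w) (max v w) (min_lt_max.2 hne.symm) hw
  obtain ⟨-, h2, -, h4, -⟩ :=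
    hT.inv H hε hw hvw hne hζ hcl (J := n) (fun j _ => hJ j) n le_rfl
  have hx' : f^[n] x ∈ uIcc (f^[n] v) (f^[n] w) := h4 ▸ ⟨x, hx, rfl⟩
  have hy' : f^[n] y ∈ uIcc (f^[n] v) (f^[n] w) := h4 ▸ ⟨y, hy, rfl⟩
  have := abs_sub_le_of_uIcc_subset_uIcc (uIcc_subset_uIcc hy' hx')
  rw [abs_sub_comm (f^[n] w)] at this
  linarith

/-- The orbit of `w` cannot hit a singular point at time `i` before any singular point comes
strictly between. The truncated images of the one-sided interval at that singular point on the
side of the tube either never meet another singular point, which contradicts `Tube.never`, or meet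
one at distance at least `ε`, which lies inside the tube. -/
theorem Tube.germ (H : Sys f A ρ θ) {v r r1 r2 : ℝ} {E : ℕ → ℝ} (hT : Tube f A v E r r1)
    (hr2 : 0 < r2) (hr21 : r2 ≤ r1)
    {w ζ ε : ℝ} (hε : ε ≤ r) (hερ : ε ≤ ρ) (hεr2 : ε ≤ r2) (hw : uIcc v w ⊆ A)
    (hvw : v ∈ uIcc (E 0) w)
    (hne : w ≠ v) (hζ : ζ ∈ uIcc v (E 0)) (hcl : ∀ j, |f^[j] ζ - f^[j] w| < ε) {i : ℕ}
    (hJ : ∀ j < i, ∀ s ∈ sing f A, s ∈ uIcc (f^[j] v) (f^[j] w) → s = f^[j] w)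
    (hgerm : GermAlt f A (f^[i] w) (f^[i] w + r2) r2 ε ∧
      GermAlt f A (f^[i] w) (f^[i] w - r2) r2 ε) : False := by
  obtain ⟨h1, h2, h3, h4, h5, h6⟩ := hT.inv H hε hw hvw hne hζ hcl hJ i le_rfl
  obtain ⟨e, hVe, heE, hne_e, her, halt⟩ : ∃ e, f^[i] v ∈ uIcc (f^[i] w) e ∧
      e ∈ uIcc (f^[i] w) (E i) ∧ e ≠ f^[i] w ∧ |e - f^[i] w| ≤ r2 ∧ GermAlt f A (f^[i] w) e r2 ε := by
    have hlen := hT.len i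
    rcases lt_or_gt_of_ne h5 with h | h
    · refine ⟨f^[i] w + r2, ?_, ?_, by linarith, by grind, hgerm.1⟩
      · grind [mem_uIcc]
      · grind [mem_uIcc]
    · refine ⟨f^[i] w - r2, ?_, ?_, by linarith, by grind, hgerm.2⟩
      · grind [mem_uIcc]
      · grind [mem_uIcc]
  have hA : uIcc (f^[i] w) (E i) ⊆ A := by
    intro y hy
    have : y ∈ uIcc (f^[i] v) (E i) ∨ y ∈ uIcc (f^[i] v) (f^[i] w) := by grind [mem_uIcc]
    exact this.elim (fun h => hT.sub i h) (fun h => h3 h)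
  have heA : uIcc (f^[i] w) e ⊆ A := (uIcc_subset_uIcc left_mem_uIcc heE).trans hA
  have claim : ∀ l, (∀ l' < l, ∀ s ∈ sing f A,
      s ∈ proc f (f^[i] w) r2 (uIcc (f^[i] w) e) l' → s = f^[l'] (f^[i] w)) →
      (∀ j < i + l, ∀ s ∈ sing f A, s ∈ uIcc (f^[j] v) (f^[j] w) → s = f^[j] w) ∧
      uIcc (f^[i + l] v) (f^[i + l] w) ⊆ proc f (f^[i] w) r2 (uIcc (f^[i] w) e) l := by
    intro l
    induction l with
    | zero =>
      intro _
      exact ⟨hJ, uIcc_subset_uIcc hVe left_mem_uIcc⟩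
    | succ l ih =>
      intro hl
      obtain ⟨ih1, ih2⟩ := ih fun l' hl' => hl l' (by omega)
      have hnew : ∀ j < i + (l + 1), ∀ s ∈ sing f A,
          s ∈ uIcc (f^[j] v) (f^[j] w) → s = f^[j] w := by
        intro j hj s hs hsm
        rcases Nat.lt_or_ge j (i + l) with h | h
        · exact ih1 j h s hs hsm
        · obtain rfl : j = i + l := by omega
          rw [hl l (by omega) s hs (ih2 hsm), ← Function.iterate_add_apply, add_comm]
      refine ⟨hnew, ?_⟩
      have inv1 := hT.inv H hε hw hvw hne hζ hcl hnew (i + l) (by omega)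
      have inv2 := hT.inv H hε hw hvw hne hζ hcl hnew (i + (l + 1)) le_rfl
      intro y hy
      have hyb := abs_sub_right_of_mem_uIcc hy
      have hyf : y ∈ f '' uIcc (f^[i + l] v) (f^[i + l] w) := by
        rw [← inv1.2.2.2.1, ← image_comp, ← Function.iterate_succ']
        exact inv2.2.2.2.1 ▸ hy
      refine ⟨image_mono ih2 hyf, ?_⟩
      rw [← Function.iterate_add_apply, show l + 1 + i = i + (l + 1) by omega]
      have h7 := inv2.2.1
      rw [abs_sub_comm] at hyb h7
      have := abs_le.1 (hyb.trans h7.le)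
      rw [mem_Icc]
      constructor <;> linarith
  rcases halt with halt | ⟨l, a, haS, hap, hεa, hmin⟩
  · refine hT.never H hε hερ hw hvw hne hζ hcl fun j => ?_
    exact (claim (j + 1) fun l' _ => halt l').1 j (by omega)
  · obtain ⟨c1, c2⟩ := claim l hmin
    obtain ⟨i1, i2, i3, i4, i5, i6⟩ := hT.inv H hε hw hvw hne hζ hcl c1 (i + l) le_rfl
    obtain ⟨d, hd, hp⟩ := proc_uIcc H heA hne_e hr2 hmin l le_rfl
    have har : |a - f^[l] (f^[i] w)| ≤ r2 := by
      rcases Nat.eq_zero_or_pos l with rfl | hl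
      · have hE := abs_sub_left_of_mem_uIcc hap
        exact hE.trans her
      · exact proc_ball hl hap
    rw [hp] at hap c2
    have hVp : f^[i + l] v ∈ uIcc (f^[l] (f^[i] w)) d := c2 left_mem_uIcc
    rw [← Function.iterate_add_apply, add_comm l i] at hap hVp har hεa hd
    have hlen := hT.len (i + l)
    apply hT.free (i + l) a haS
    generalize f^[i + l] w = W at *
    generalize f^[i + l] v = V at *
    generalize E (i + l) = F at *
    clear * - i1 i2 i5 hap hVp har hεa hd hlen hr21
    grind [mem_uIcc]

end link

/-! ### The consequence of shadowing -/

section link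

variable {f : ℝ → ℝ} {A : Set ℝ} {ρ θ : ℝ}

/-- The only use of shadowing: if the orbit of a singular point `c` never returns to the singular
set, then the truncated images of each one-sided neighbourhood of `c` meet the singular set off the
orbit of `c`. -/
theorem Sys.link (H : Sys f A ρ θ) (hfin : (sing f A).Finite) (hsurj : A ⊆ f '' A)
    (hshad : ShadowingOn f (Icc (0 : ℝ) 1)) {c e r : ℝ} (hc : c ∈ sing f A)
    (hcn : ∀ n, 1 ≤ n → f^[n] c ∉ sing f A) (hr : 0 < r) (hrρ : 4 * r < ρ) (her : |e - c| = r)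
    (hsub : uIcc c e ⊆ A) :
    ∃ n, ∃ a ∈ sing f A, a ∈ proc f c r (uIcc c e) n ∧ a ≠ f^[n] c := by
  by_contra! hbad
  have hce : c ≠ e := by
    rintro rfl
    simp at her
    linarith
  obtain ⟨E, r1, hr1, hT, hp1⟩ := Tube.exists_of_bad H hsub hr hrρ her hbad hcn
  set v := f c with hv
  set r2 := min r r1 with hr2def
  have hr2 : 0 < r2 := lt_min hr hr1
  obtain ⟨ε0, hε0, hgerm⟩ := germAlt_uniform hfin r2
  obtain ⟨κ, hκ, hfold⟩ := H.fold hc hce hsub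
  have hvS : v ∉ sing f A := hcn 1 le_rfl
  have hvA : v ∈ A := H.maps hc.1
  -- the pseudo-orbit has to start in the interior of `A`, so that the shadowing point lies in `A`
  obtain ⟨k, ĉ, hĉ, hkĉ⟩ := H.root hfin hsurj hc hvS
  obtain ⟨η1, hη1, hball⟩ := Metric.isOpen_iff.1 isOpen_interior ĉ hĉ
  have hĉA : ĉ ∈ A := interior_subset hĉ
  obtain ⟨η2, hη2, hunif⟩ := H.unif_iter k hκ
  obtain ⟨ε, hε, e1, e2, e3, e4, e5, e6⟩ : ∃ ε > 0, ε ≤ ε0 ∧ ε ≤ r2 ∧ ε ≤ ρ ∧ ε ≤ η1 ∧ ε ≤ η2 ∧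
      ε ≤ r / 2 := by
    have hρ := H.rho_pos
    refine ⟨min ε0 (min r2 (min ρ (min η1 (min η2 (r / 2))))), ?_, ?_⟩
    · simp only [gt_iff_lt, lt_min_iff]
      refine ⟨hε0, hr2, hρ, hη1, hη2, by linarith⟩
    · have := le_refl (min ε0 (min r2 (min ρ (min η1 (min η2 (r / 2))))))
      simpa only [le_min_iff] using this
  obtain ⟨δ, hδ, hsh⟩ := hshad ε hε
  have hopen : IsOpen (interior A ∩ (sing f A)ᶜ) :=
    isOpen_interior.inter hfin.isClosed.isOpen_compl
  obtain ⟨μ, hμ, hμs⟩ := Metric.isOpen_iff.1 hopen v ⟨H.mem_interior hvA hvS, hvS⟩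
  obtain ⟨s, hs, s1, s2, s3⟩ : ∃ s > 0, s < δ ∧ s < μ ∧ s < r / 2 := by
    refine ⟨min δ (min μ (r / 2)) / 2, ?_, ?_, ?_, ?_⟩
    · have : 0 < min δ (min μ (r / 2)) := by
        simp only [lt_min_iff]
        exact ⟨hδ, hμ, by linarith⟩
      linarith
    all_goals
      have h0 : 0 < min δ (min μ (r / 2)) := by
        simp only [lt_min_iff]
        exact ⟨hδ, hμ, by linarith⟩
      have := le_refl (min δ (min μ (r / 2)))
      simp only [le_min_iff] at this
      linarith [this.1, this.2.1, this.2.2]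
  -- the shadowing point of the orbit that jumps from `c` to `w` enters the tube
  have shadow : ∀ w ∈ A, |w - v| ≤ s →
      ∃ ζ ∈ uIcc v (E 0), ∀ j, |f^[j] ζ - f^[j] w| < ε := by
    intro w hwA hws
    obtain ⟨z, hz, hzx⟩ := hsh (fun n => if n ≤ k then f^[n] ĉ else f^[n - (k + 1)] w) (by
        intro n
        apply H.sub01
        split_ifs
        · exact H.mapsIter n hĉA
        · exact H.mapsIter _ hwA) (by
        intro n
        rcases lt_trichotomy n k with h | h | h
        · simp only [h.le, if_true, Nat.succ_le_of_lt h, Function.iterate_succ_apply', dist_self]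
          exact hδ
        · subst h
          simp only [le_refl, if_true, hkĉ, Nat.not_succ_le_self, if_false, Nat.sub_self]
          rw [Real.dist_eq, abs_sub_comm]
          exact hws.trans_lt s1
        · have h1 : ¬ n ≤ k := by omega
          have h2 : ¬ n + 1 ≤ k := by omega
          simp only [h1, h2, if_false]
          rw [show n + 1 - (k + 1) = (n - (k + 1)) + 1 by omega, Function.iterate_succ_apply',
            dist_self]
          exact hδ)
    have hz0 : |z - ĉ| < ε := by simpa [Real.dist_eq] using hzx 0
    have hzA : z ∈ A := interior_subset (hball (by
      rw [Metric.mem_ball, Real.dist_eq]; linarith))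
    have hzk : |f^[k] z - c| < κ := by
      rw [← hkĉ]
      exact hunif k le_rfl z hzA ĉ hĉA (by linarith)
    have hζim := hfold _ (H.mapsIter k hzA) hzk
    have hcl : ∀ j, |f^[j] (f (f^[k] z)) - f^[j] w| < ε := by
      intro j
      have := hzx (k + 1 + j)
      have h1 : ¬ k + 1 + j ≤ k := by omega
      simp only [h1, if_false, Nat.add_sub_cancel_left, Real.dist_eq] at this
      rwa [add_comm, Function.iterate_add_apply, Function.iterate_succ_apply'] at this
    refine ⟨f (f^[k] z), ?_, hcl⟩
    rw [← hp1]
    refine ⟨hζim, ?_⟩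
    have h0 := abs_lt.1 (hcl 0)
    have h1 := abs_le.1 hws
    simp only [Function.iterate_zero, id] at h0
    simp only [zero_add, Function.iterate_one, ← hv]
    constructor <;> linarith [h0.1, h0.2, h1.1, h1.2]
  obtain ⟨w0, hw0s, hw0E⟩ : ∃ w0, |w0 - v| = s ∧ v ∈ uIcc (E 0) w0 := by
    rcases le_total v (E 0) with h | h
    · exact ⟨v - s, by grind, by grind [mem_uIcc]⟩
    · exact ⟨v + s, by grind, by grind [mem_uIcc]⟩
  have hw0μ : uIcc v w0 ⊆ interior A ∩ (sing f A)ᶜ := by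
    intro y hy
    apply hμs
    rw [Metric.mem_ball, Real.dist_eq]
    have := abs_sub_left_of_mem_uIcc hy
    linarith
  have hw0A : uIcc v w0 ⊆ A := fun y hy => interior_subset (hw0μ hy).1
  have hw0ne : w0 ≠ v := by
    rintro rfl
    simp at hw0s
    linarith
  have hεr : ε ≤ r := e2.trans (min_le_left _ _)
  obtain ⟨ζ0, hζ0, hcl0⟩ := shadow w0 (hw0A right_mem_uIcc) hw0s.le
  have hhit : ∃ i, ∃ t ∈ sing f A, t ∈ uIcc (f^[i] v) (f^[i] w0) := by
    by_contra! hno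
    exact hT.never H hεr e3 hw0A hw0E hw0ne hζ0 hcl0 fun j t ht htm => absurd htm (hno j t ht)
  classical
  set i := Nat.find hhit with hi
  have hmin : ∀ j < i, ∀ t ∈ sing f A, t ∉ uIcc (f^[j] v) (f^[j] w0) := by
    intro j hj t ht htm
    exact Nat.find_min hhit hj ⟨t, ht, htm⟩
  have inv0 := hT.inv H hεr hw0A hw0E hw0ne hζ0 hcl0 (J := i)
    (fun j hj t ht htm => absurd htm (hmin j hj t ht))
  -- the jump goes to the point `w` whose orbit hits the first intervening singular point
  obtain ⟨c', hc'S, hc'm⟩ := Nat.find_spec hhit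
  obtain ⟨-, -, -, himg, -⟩ := inv0 i le_rfl
  rw [← hi, ← himg] at hc'm
  obtain ⟨w, hw, hwi⟩ := hc'm
  have hws : |w - v| ≤ s := (abs_sub_left_of_mem_uIcc hw).trans hw0s.le
  have hwsub : uIcc v w ⊆ uIcc v w0 := uIcc_subset_uIcc left_mem_uIcc hw
  obtain ⟨ζ, hζ, hcl⟩ := shadow w (hw0A hw) hws
  have hwE : v ∈ uIcc (E 0) w := by
    clear * - hw hw0E
    grind [mem_uIcc]
  have hwne : w ≠ v := by
    rintro rfl
    apply hcn (i + 1) (by omega)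
    rw [Function.iterate_succ_apply, ← hv, hwi]
    exact hc'S
  refine hT.germ H hr2 (min_le_right _ _) hεr e3 e2 (hwsub.trans hw0A) hwE hwne hζ hcl (i := i)
    ?_ ?_
  · intro j hj t ht htm
    refine absurd ?_ (hmin j hj t ht)
    obtain ⟨-, -, -, himgj, -⟩ := inv0 j hj.le
    have : f^[j] w ∈ uIcc (f^[j] v) (f^[j] w0) := himgj ▸ ⟨w, hw, rfl⟩
    exact uIcc_subset_uIcc left_mem_uIcc this htm
  · rw [hwi]
    exact hgerm c' hc'S ε hε e1

end link

/-! ### Expansion at singular points -/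

section expand

variable {f : ℝ → ℝ} {A : Set ℝ} {ρ θ : ℝ}

theorem exists_mem_uIcc_dist {c e r : ℝ} (hr : 0 ≤ r) (h : r ≤ |e - c|) :
    ∃ e' ∈ uIcc c e, |e' - c| = r := by
  rcases le_total c e with h1 | h1
  · exact ⟨c + r, by grind [mem_uIcc], by grind⟩
  · exact ⟨c - r, by grind [mem_uIcc], by grind⟩

theorem Sys.fold_uniform (H : Sys f A ρ θ) (hfin : (sing f A).Finite) {s : ℝ} (hs : 0 < s) :
    ∃ κ > 0, ∀ a ∈ sing f A, ∀ b, |b - a| = s → uIcc a b ⊆ A → ∀ y ∈ A, |y - a| < κ →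
      f y ∈ f '' uIcc a b := by
  have h1 : ∀ a ∈ sing f A, ∀ b, ∃ κ > 0, |b - a| = s → uIcc a b ⊆ A → ∀ y ∈ A, |y - a| < κ →
      f y ∈ f '' uIcc a b := by
    intro a ha b
    by_cases h : |b - a| = s ∧ uIcc a b ⊆ A
    · have hab : a ≠ b := by
        rintro rfl
        simp at h
        linarith
      obtain ⟨κ, hκ, h'⟩ := H.fold ha hab h.2
      exact ⟨κ, hκ, fun _ _ => h'⟩
    · exact ⟨1, one_pos, fun h1 h2 => absurd ⟨h1, h2⟩ h⟩
  obtain ⟨κ, hκ, h⟩ := hfin.exists_pos_uniform (P := fun a κ => ∀ b, |b - a| = s →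
      uIcc a b ⊆ A → ∀ y ∈ A, |y - a| < κ → f y ∈ f '' uIcc a b) (by
    intro a ha
    obtain ⟨κ1, hκ1, h1'⟩ := h1 a ha (a + s)
    obtain ⟨κ2, hκ2, h2'⟩ := h1 a ha (a - s)
    refine ⟨min κ1 κ2, lt_min hκ1 hκ2, fun κ _ hκ b hb hA y hy hya => ?_⟩
    rw [le_min_iff] at hκ
    rcases abs_eq hs.le |>.1 hb with h3 | h3
    · obtain rfl : b = a + s := by linarith
      exact h1' hb hA y hy (by linarith)
    · obtain rfl : b = a - s := by linarith
      exact h2' hb hA y hy (by linarith))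
  exact ⟨κ, hκ, fun a ha => h a ha κ hκ le_rfl⟩

/-- The truncated images of a one-sided neighbourhood of a singular point eventually cover, after
one more step, the image of a full neighbourhood. -/
theorem Sys.expand (H : Sys f A ρ θ) (hfin : (sing f A).Finite) (hsurj : A ⊆ f '' A)
    (hshad : ShadowingOn f (Icc (0 : ℝ) 1)) {c e r : ℝ} (hc : c ∈ sing f A) (hce : c ≠ e)
    (hr : 0 < r) (hsub : uIcc c e ⊆ A) :
    ∃ n, 1 ≤ n ∧ ∃ κ > 0, ∀ y ∈ A, |y - f^[n] c| < κ → f y ∈ f '' proc f c r (uIcc c e) n := by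
  wlog h : |e - c| = r ∧ 4 * r < ρ generalizing e r
  · have hρ := H.rho_pos
    have hpos : 0 < |e - c| := abs_pos.2 (sub_ne_zero.2 hce.symm)
    obtain ⟨r', hr', h1, h2, h3⟩ : ∃ r' > 0, r' ≤ r ∧ r' ≤ |e - c| ∧ r' ≤ ρ / 8 := by
      refine ⟨min r (min |e - c| (ρ / 8)), ?_, by simp⟩
      simp only [gt_iff_lt, lt_min_iff]
      exact ⟨hr, hpos, by linarith⟩
    obtain ⟨e', he', her'⟩ := exists_mem_uIcc_dist hr'.le h2
    have hs : uIcc c e' ⊆ uIcc c e := uIcc_subset_uIcc left_mem_uIcc he'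
    obtain ⟨n, hn, κ, hκ, h⟩ := this (e := e') (r := r') (by
      rintro rfl
      simp at her'
      linarith) hr' (hs.trans hsub) ⟨her', by linarith⟩
    exact ⟨n, hn, κ, hκ, fun y hy hyc =>
      image_mono (proc_mono hs (by simpa using fun _ _ _ => h1)) (h y hy hyc)⟩
  obtain ⟨her, hrρ⟩ := h
  obtain ⟨k, hk⟩ := H.grow_unif hr
  obtain ⟨r1, hr1, hsize⟩ := H.size_of_grow k
  have hgrow : ∀ n, Grow f ρ k (proc f c r (uIcc c e) n) := by
    apply proc_grow H hr hrρ hk hsub ordConnected_uIcc left_mem_uIcc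
    · intro y hy
      have := abs_sub_left_of_mem_uIcc hy
      linarith
    · apply hk (min c e) (max c e)
      · rw [max_sub_min_eq_abs]; exact her.ge
      · exact hsub
  have hDA := fun n => proc_sub (z := c) (r := r) H hsub n
  have hDo := fun n => proc_ord (z := c) (r := r) H hsub ordConnected_uIcc n
  -- each truncated image contains an interval of length `r1 / 2` on one side of each of its points
  have hside : ∀ n, ∀ a ∈ proc f c r (uIcc c e) n,
      ∃ b, |b - a| = r1 / 2 ∧ uIcc a b ⊆ proc f c r (uIcc c e) n := by
    intro n a ha
    obtain ⟨u, hu, v, hv, huv⟩ := hsize _ (hDA n) (hgrow n)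
    rcases le_total (a + r1 / 2) v with h | h
    · refine ⟨a + r1 / 2, by grind, ?_⟩
      exact ((hDo n).uIcc_subset ha hv).trans' (uIcc_subset_uIcc left_mem_uIcc
        (by grind [mem_uIcc]))
    · refine ⟨a - r1 / 2, by grind, ?_⟩
      exact ((hDo n).uIcc_subset ha hu).trans' (uIcc_subset_uIcc left_mem_uIcc
        (by grind [mem_uIcc]))
  obtain ⟨κ, hκ, hfold⟩ := H.fold_uniform hfin (half_pos hr1)
  suffices hmain : ∃ n, 1 ≤ n ∧ ∃ a ∈ sing f A, a ∈ proc f c r (uIcc c e) n ∧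
      |a - f^[n] c| ≤ κ / 2 by
    obtain ⟨n, hn, a, ha, hap, hac⟩ := hmain
    refine ⟨n, hn, κ / 2, by linarith, fun y hy hyc => ?_⟩
    obtain ⟨b, hb, hbs⟩ := hside n a hap
    apply image_mono hbs
    apply hfold a ha b hb (hbs.trans (hDA n)) y hy
    have := abs_sub_le y (f^[n] c) a
    rw [abs_sub_comm (f^[n] c)] at this
    linarith
  by_cases hcn : ∃ n, 1 ≤ n ∧ f^[n] c ∈ sing f A
  · obtain ⟨n, hn, hs⟩ := hcn
    exact ⟨n, hn, _, hs, proc_mem left_mem_uIcc hr.le n, by simp; linarith⟩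
  push Not at hcn
  obtain ⟨g, hg, hgap⟩ : ∃ g > 0, ∀ s ∈ sing f A, |s - c| < g → s = c := by
    have : IsOpen (sing f A \ {c})ᶜ := (hfin.subset sdiff_subset).isClosed.isOpen_compl
    obtain ⟨g, hg, h⟩ := Metric.isOpen_iff.1 this c (by simp)
    refine ⟨g, hg, fun s hs hsc => ?_⟩
    have := h (show s ∈ Metric.ball c g by rwa [Metric.mem_ball, Real.dist_eq])
    by_contra hne
    exact this ⟨hs, hne⟩
  obtain ⟨r3, hr3, h1, h2, h3⟩ : ∃ r3 > 0, r3 ≤ r ∧ r3 ≤ κ / 2 ∧ r3 ≤ g / 2 := by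
    refine ⟨min r (min (κ / 2) (g / 2)), ?_, by simp⟩
    simp only [gt_iff_lt, lt_min_iff]
    exact ⟨hr, by linarith, by linarith⟩
  obtain ⟨e', he', her'⟩ := exists_mem_uIcc_dist (c := c) (e := e) hr3.le (by linarith)
  have hs : uIcc c e' ⊆ uIcc c e := uIcc_subset_uIcc left_mem_uIcc he'
  obtain ⟨n, a, ha, hap, hne⟩ := H.link hfin hsurj hshad hc hcn hr3 (by linarith) her'
    (hs.trans hsub)
  have hn : 1 ≤ n := by
    by_contra h0
    obtain rfl : n = 0 := by omega
    apply hne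
    have := abs_sub_left_of_mem_uIcc hap
    exact hgap a ha (by linarith)
  exact ⟨n, hn, a, ha, proc_mono hs (by simpa using fun _ _ _ => h1) hap,
    (proc_ball hn hap).trans h2⟩

/-- `Sys.expand` with the time and the radius uniform over the singular points. The auxiliary
parameter `q` of the proof bounds the radius by `q` and the time by `1 / q`. -/
theorem Sys.expand_uniform (H : Sys f A ρ θ) (hfin : (sing f A).Finite) (hsurj : A ⊆ f '' A)
    (hshad : ShadowingOn f (Icc (0 : ℝ) 1)) {r s : ℝ} (hr : 0 < r) (hs : 0 < s) :
    ∃ N, ∃ κ > 0, ∀ c ∈ sing f A, ∀ e, |e - c| = s → uIcc c e ⊆ A →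
      ∃ n, 1 ≤ n ∧ n ≤ N ∧ ∀ y ∈ A, |y - f^[n] c| < κ → f y ∈ f '' proc f c r (uIcc c e) n := by
  have h1 : ∀ c ∈ sing f A, ∀ e, ∃ N, ∃ κ > 0, |e - c| = s → uIcc c e ⊆ A →
      ∃ n, 1 ≤ n ∧ n ≤ N ∧ ∀ y ∈ A, |y - f^[n] c| < κ →
        f y ∈ f '' proc f c r (uIcc c e) n := by
    intro c hc e
    by_cases h : |e - c| = s ∧ uIcc c e ⊆ A
    · have hce : c ≠ e := by
        rintro rfl
        simp at h
        linarith
      obtain ⟨n, hn, κ, hκ, h'⟩ := H.expand hfin hsurj hshad hc hce hr h.2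
      exact ⟨n, κ, hκ, fun _ _ => ⟨n, hn, le_rfl, h'⟩⟩
    · exact ⟨0, 1, one_pos, fun h1 h2 => absurd ⟨h1, h2⟩ h⟩
  obtain ⟨q, hq, h⟩ := hfin.exists_pos_uniform (P := fun c q => ∀ e, |e - c| = s →
      uIcc c e ⊆ A → ∃ n : ℕ, 1 ≤ n ∧ (n : ℝ) ≤ 1 / q ∧ ∀ y ∈ A, |y - f^[n] c| < q →
        f y ∈ f '' proc f c r (uIcc c e) n) (by
    intro c hc
    obtain ⟨N1, κ1, hκ1, h1'⟩ := h1 c hc (c + s)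
    obtain ⟨N2, κ2, hκ2, h2'⟩ := h1 c hc (c - s)
    refine ⟨min (min κ1 κ2) (1 / (N1 + N2 + 1)), lt_min (lt_min hκ1 hκ2) (by positivity),
      fun κ hκ0 hκ b hb hA => ?_⟩
    simp only [le_min_iff] at hκ
    have hκN : (N1 : ℝ) + N2 + 1 ≤ 1 / κ := by
      rw [le_div_iff₀ hκ0]
      have := hκ.2
      rw [le_div_iff₀ (by positivity)] at this
      linarith
    rcases abs_eq hs.le |>.1 hb with h3 | h3
    · obtain rfl : b = c + s := by linarith
      obtain ⟨n, hn, hnN, h⟩ := h1' hb hA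
      have : (n : ℝ) ≤ N1 := by exact_mod_cast hnN
      exact ⟨n, hn, by linarith [(Nat.cast_nonneg N2 : (0 : ℝ) ≤ N2)],
        fun y hy hyc => h y hy (by linarith)⟩
    · obtain rfl : b = c - s := by linarith
      obtain ⟨n, hn, hnN, h⟩ := h2' hb hA
      have : (n : ℝ) ≤ N2 := by exact_mod_cast hnN
      exact ⟨n, hn, by linarith [(Nat.cast_nonneg N1 : (0 : ℝ) ≤ N1)],
        fun y hy hyc => h y hy (by linarith)⟩)
  refine ⟨⌊1 / q⌋₊, q, hq, fun c hc e he hA => ?_⟩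
  obtain ⟨n, hn, hnq, h'⟩ := h c hc q hq le_rfl e he hA
  exact ⟨n, hn, Nat.le_floor hnq, h'⟩

end expand

/-! ### Points that stay close for a given number of iterates -/

/-- The points `y` such that the interval between `z` and `y` lies in `A` and its first `k` images
have diameter at most some `ρ' < ρ`. The strict bound makes the set relatively open in `A`. -/
def stab (f : ℝ → ℝ) (A : Set ℝ) (ρ : ℝ) (k : ℕ) (z : ℝ) : Set ℝ :=
  {y | uIcc z y ⊆ A ∧ ∃ ρ' < ρ, ∀ i < k, ∀ u ∈ uIcc z y, ∀ v ∈ uIcc z y,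
    |f^[i] u - f^[i] v| ≤ ρ'}

section stab

variable {f : ℝ → ℝ} {A : Set ℝ} {ρ θ : ℝ} {k : ℕ} {z : ℝ}

theorem stab_sub : stab f A ρ k z ⊆ A := fun _ h => h.1 right_mem_uIcc

theorem stab_self (H : Sys f A ρ θ) (hz : z ∈ A) : z ∈ stab f A ρ k z := by
  refine ⟨by simpa using hz, 0, H.rho_pos, ?_⟩
  intro i _ u hu v hv
  simp only [uIcc_self, mem_singleton_iff] at hu hv
  simp [hu, hv]

theorem stab_uIcc {y y' : ℝ} (hy : y ∈ stab f A ρ k z) (hy' : y' ∈ uIcc z y) :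
    y' ∈ stab f A ρ k z := by
  have hs : uIcc z y' ⊆ uIcc z y := uIcc_subset_uIcc left_mem_uIcc hy'
  obtain ⟨h1, ρ', hρ', h2⟩ := hy
  exact ⟨hs.trans h1, ρ', hρ', fun i hi u hu v hv => h2 i hi u (hs hu) v (hs hv)⟩

theorem stab_ord : (stab f A ρ k z).OrdConnected := by
  refine ⟨fun x hx y hy t ht => ?_⟩
  rcases le_total t z with h | h
  · exact stab_uIcc hx (mem_uIcc.2 (Or.inr ⟨ht.1, h⟩))
  · exact stab_uIcc hy (mem_uIcc.2 (Or.inl ⟨h, ht.2⟩))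

theorem stab_open (H : Sys f A ρ θ) {y : ℝ} (hy : y ∈ stab f A ρ k z) :
    ∃ η > 0, ∀ y' ∈ A, |y' - y| < η → y' ∈ stab f A ρ k z := by
  obtain ⟨h1, ρ', hρ', h2⟩ := hy
  have hyA : y ∈ A := h1 right_mem_uIcc
  obtain ⟨η, hη, hu⟩ := H.unif_iter k (e := (ρ - ρ') / 3) (by linarith)
  refine ⟨min η θ, lt_min hη H.theta_pos, fun y' hy' hlt => ?_⟩
  rw [lt_min_iff] at hlt
  have hconn : uIcc y' y ⊆ A := H.conn y' hy' y hyA hlt.2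
  have hcov : ∀ t ∈ uIcc z y', t ∈ A ∧ ∃ s ∈ uIcc z y, |t - s| < η := by
    intro t ht
    by_cases hts : t ∈ uIcc z y
    · exact ⟨h1 hts, t, hts, by simpa using hη⟩
    · exact ⟨hconn (by grind [mem_uIcc]), y, right_mem_uIcc, by grind [mem_uIcc]⟩
  refine ⟨fun t ht => (hcov t ht).1, ρ' + 2 * ((ρ - ρ') / 3), by linarith, ?_⟩
  intro i hi u hu' v hv'
  obtain ⟨huA, s, hs, hsu⟩ := hcov u hu'
  obtain ⟨hvA, t, ht, htv⟩ := hcov v hv'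
  have e1 := hu i hi.le u huA s (h1 hs) hsu
  have e2 := hu i hi.le v hvA t (h1 ht) htv
  have e3 := h2 i hi s hs t ht
  rw [abs_lt] at e1 e2
  rw [abs_le] at e3 ⊢
  constructor <;> linarith [e1.1, e1.2, e2.1, e2.2, e3.1, e3.2]

theorem stab_ball (H : Sys f A ρ θ) (k : ℕ) :
    ∃ η > 0, ∀ z ∈ A, ∀ y ∈ A, |y - z| < η → y ∈ stab f A ρ k z := by
  have hρ := H.rho_pos
  obtain ⟨η, hη, hu⟩ := H.unif_iter k (e := ρ / 2) (by linarith)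
  refine ⟨min η θ, lt_min hη H.theta_pos, fun z hz y hy hlt => ?_⟩
  rw [lt_min_iff] at hlt
  have hA : uIcc z y ⊆ A := H.conn z hz y hy (by rw [abs_sub_comm]; exact hlt.2)
  refine ⟨hA, ρ / 2, by linarith, fun i hi u hu' v hv' => (hu i hi.le u (hA hu') v (hA hv') ?_).le⟩
  have := abs_sub_le_of_uIcc_subset_uIcc (uIcc_subset_uIcc hv' hu')
  linarith

/-- The sets `stab` shrink uniformly as the number of iterates increases, by uniform growth. -/
theorem stab_shrink (H : Sys f A ρ θ) {e : ℝ} (he : 0 < e) :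
    ∃ K, ∀ k, K < k → ∀ z, ∀ y ∈ stab f A ρ k z, |y - z| < e := by
  obtain ⟨K, hK⟩ := H.grow_unif he
  refine ⟨K, fun k hk z y hy => ?_⟩
  obtain ⟨h1, ρ', hρ', h2⟩ := hy
  by_contra! hc
  obtain ⟨n, hn, u, hu, v, hv, huv⟩ := hK (min z y) (max z y) (by rwa [max_sub_min_eq_abs]) h1
  have := h2 n (by omega) u hu v hv
  linarith

/-- Moving the centre of `stab` by a small amount costs a bounded number of iterates. -/
theorem stab_quasi (H : Sys f A ρ θ) :
    ∃ M, 1 ≤ M ∧ ∀ k, ∃ η > 0, ∀ z ∈ A, ∀ x ∈ A, |x - z| < η →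
      stab f A ρ (k + M) x ⊆ stab f A ρ k z := by
  have hρ := H.rho_pos
  obtain ⟨M, hM⟩ := H.grow_unif (half_pos hρ)
  refine ⟨M + 1, by omega, fun k => ?_⟩
  obtain ⟨η, hη, hu⟩ := H.unif_iter k (e := ρ / 4) (by linarith)
  refine ⟨min η θ, lt_min hη H.theta_pos, fun z hz x hx hlt y hy => ?_⟩
  rw [lt_min_iff] at hlt
  have hzx : uIcc x z ⊆ A := H.conn x hx z hz hlt.2
  obtain ⟨h1, ρ', hρ', h2⟩ := hy
  have hhalf : ∀ i < k, ∀ u ∈ uIcc x y, ∀ v ∈ uIcc x y, |f^[i] u - f^[i] v| ≤ ρ / 2 := by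
    intro i hi u hu v hv
    by_contra! hc
    have huv : uIcc u v ⊆ uIcc x y := uIcc_subset_uIcc hu hv
    have hs := H.uIcc_sub_image i (huv.trans h1)
    obtain ⟨n, hn, p, hp, q, hq, hpq⟩ := hM (min (f^[i] u) (f^[i] v)) (max (f^[i] u) (f^[i] v))
      (by rw [max_sub_min_eq_abs, abs_sub_comm]; exact hc.le)
      (hs.trans (by rintro _ ⟨t, ht, rfl⟩; exact H.mapsIter i (h1 (huv ht))))
    obtain ⟨p', hp', rfl⟩ := hs hp
    obtain ⟨q', hq', rfl⟩ := hs hq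
    rw [← Function.iterate_add_apply, ← Function.iterate_add_apply] at hpq
    have := h2 (n + i) (by omega) p' (huv hp') q' (huv hq')
    linarith
  have hquart : ∀ i < k, ∀ u ∈ uIcc x z, |f^[i] u - f^[i] x| ≤ ρ / 4 := by
    intro i hi u hu'
    refine (hu i hi.le u (hzx hu') x hx ?_).le
    have := abs_sub_left_of_mem_uIcc hu'
    rw [abs_sub_comm z] at this
    linarith
  have hcov : ∀ t ∈ uIcc z y, t ∈ uIcc x z ∨ t ∈ uIcc x y := by
    intro t ht
    grind [mem_uIcc]
  refine ⟨fun t ht => (hcov t ht).elim (fun h => hzx h) (fun h => h1 h), 3 * ρ / 4,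
    by linarith, ?_⟩
  intro i hi u hu' v hv'
  rcases hcov u hu' with h3 | h3 <;> rcases hcov v hv' with h4 | h4
  · have e1 := abs_le.1 (hquart i hi u h3)
    have e2 := abs_le.1 (hquart i hi v h4)
    rw [abs_le]
    constructor <;> linarith [e1.1, e1.2, e2.1, e2.2]
  · have e1 := abs_le.1 (hquart i hi u h3)
    have e2 := abs_le.1 (hhalf i hi v h4 x left_mem_uIcc)
    rw [abs_le]
    constructor <;> linarith [e1.1, e1.2, e2.1, e2.2]
  · have e1 := abs_le.1 (hhalf i hi u h3 x left_mem_uIcc)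
    have e2 := abs_le.1 (hquart i hi v h4)
    rw [abs_le]
    constructor <;> linarith [e1.1, e1.2, e2.1, e2.2]
  · exact (hhalf i hi u h3 v h4).trans (by linarith)

theorem stab_free_open (H : Sys f A ρ θ) (hfree : ∀ s ∈ sing f A, s ∉ stab f A ρ k z) :
    IsOpen (stab f A ρ k z) := by
  rw [Metric.isOpen_iff]
  intro y hy
  have hyA := stab_sub hy
  obtain ⟨η, hη, h⟩ := stab_open H hy
  obtain ⟨η', hη', h'⟩ := Metric.isOpen_iff.1 isOpen_interior y
    (H.mem_interior hyA fun hs => hfree y hs hy)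
  refine ⟨min η η', lt_min hη hη', fun t ht => ?_⟩
  rw [Metric.mem_ball, lt_min_iff] at ht
  exact h t (interior_subset (h' ht.2)) ht.1

/-- If `stab f A ρ (k + 1) z` contains no singular point, its image covers `stab f A ρ k (f z)`: the
image is open, and it is relatively closed because a boundary point would satisfy the defining
condition. -/
theorem stab_cover (H : Sys f A ρ θ) (hz : z ∈ A)
    (hfree : ∀ s ∈ sing f A, s ∉ stab f A ρ (k + 1) z) {e : ℝ} (heρ : e < ρ)
    (hsmall : ∀ y ∈ stab f A ρ (k + 1) z, |y - z| < e) :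
    stab f A ρ k (f z) ⊆ f '' stab f A ρ (k + 1) z := by
  set W := stab f A ρ (k + 1) z with hW
  have hWo : IsOpen W := stab_free_open H hfree
  have hWA : W ⊆ A := stab_sub
  apply (stab_ord (f := f) (A := A) (ρ := ρ) (k := k) (z := f z)).isPreconnected.subset_of_closure_inter_subset
  · rw [isOpen_iff_mem_nhds]
    rintro _ ⟨w, hw, rfl⟩
    obtain ⟨μ, hμ, hball⟩ := Metric.isOpen_iff.1 hWo w hw
    have hs : uIcc (w - μ / 2) (w + μ / 2) ⊆ W := by
      intro t ht
      apply hball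
      rw [Metric.mem_ball, Real.dist_eq]
      grind [mem_uIcc]
    have hinj : InjOn f (uIcc (w - μ / 2) (w + μ / 2)) :=
      H.injOn (hs.trans hWA) fun s hs1 hs2 => absurd (hs hs2) (hfree s hs1)
    have himg := image_uIcc_of_injOn (H.cont.mono (hs.trans hWA)) hinj
    have hwm : w ∈ uIcc (w - μ / 2) (w + μ / 2) := by grind [mem_uIcc]
    have hfw : f w ∈ uIcc (f (w - μ / 2)) (f (w + μ / 2)) := himg ▸ ⟨w, hwm, rfl⟩
    have hn1 : f w ≠ f (w - μ / 2) := fun h => by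
      have := hinj hwm left_mem_uIcc h; linarith
    have hn2 : f w ≠ f (w + μ / 2) := fun h => by
      have := hinj hwm right_mem_uIcc h; linarith
    refine Filter.mem_of_superset ?_ (image_mono hs)
    rw [himg]
    rcases mem_uIcc.1 hfw with h | h
    · rw [uIcc_of_le (h.1.trans h.2)]
      exact Icc_mem_nhds (lt_of_le_of_ne h.1 hn1.symm) (lt_of_le_of_ne h.2 hn2)
    · rw [uIcc_of_ge (h.1.trans h.2)]
      exact Icc_mem_nhds (lt_of_le_of_ne h.1 hn2.symm) (lt_of_le_of_ne h.2 hn1)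
  · exact ⟨f z, stab_self H (H.maps hz), z, stab_self H hz, rfl⟩
  · rintro y ⟨hyc, hy⟩
    have hcWA : closure W ⊆ A := closure_minimal hWA H.compact.isClosed
    have hcomp : IsCompact (f '' closure W) :=
      (H.compact.of_isClosed_subset isClosed_closure hcWA).image_of_continuousOn (H.cont.mono hcWA)
    obtain ⟨w, hw, rfl⟩ := closure_minimal (image_mono subset_closure) hcomp.isClosed hyc
    refine ⟨w, ?_, rfl⟩
    by_contra hwW
    have hin : ∀ p ∈ uIcc z w, p ≠ w → p ∈ W := by
      intro p hp hpw
      obtain ⟨w', hw', hd⟩ := Metric.mem_closure_iff.1 hw |p - w|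
        (abs_pos.2 (sub_ne_zero.2 hpw))
      rw [Real.dist_eq] at hd
      exact stab_uIcc hw' (by grind [mem_uIcc])
    have hzwA : uIcc z w ⊆ A := by
      intro p hp
      by_cases h : p = w
      · rw [h]; exact hcWA hw
      · exact hWA (hin p hp h)
    have hinj : InjOn f (uIcc z w) := by
      apply H.injOn hzwA
      intro s hs hsm
      by_contra! h
      exact hfree s hs (hin s hsm h.2)
    have himg := image_uIcc_of_injOn (H.cont.mono hzwA) hinj
    have hwe : |w - z| ≤ e := by
      have hcl : IsClosed {t : ℝ | |t - z| ≤ e} :=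
        isClosed_le (by fun_prop) continuous_const
      exact closure_minimal (fun t ht => (hsmall t ht).le) hcl hw
    apply hwW
    obtain ⟨-, ρ', hρ', h2⟩ := hy
    refine ⟨hzwA, max ρ' e, max_lt hρ' heρ, fun i hi u hu v hv => ?_⟩
    rcases i with _ | i
    · have := abs_sub_le_of_uIcc_subset_uIcc (uIcc_subset_uIcc hv hu)
      exact (this.trans hwe).trans (le_max_right _ _)
    · exact (h2 i (by omega) (f u) (himg ▸ ⟨u, hu, rfl⟩) (f v) (himg ▸ ⟨v, hv, rfl⟩)).trans
        (le_max_left _ _)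

end stab

/-! ### Following a pseudo-orbit -/

section stage

variable {f : ℝ → ℝ} {A : Set ℝ} {ρ θ : ℝ}

/-- One block of the construction: an interval `D` containing `stab f A ρ k2 z` and able to grow
is transported along the orbit of `z` for a bounded time `n`, after which its image covers the
image of `stab f A ρ k3 (f^[n] z)`. If no singular point enters `stab`, this is `stab_cover` repeated;
at the first time one does, `Sys.expand_uniform` applies. Here `k2` exceeds `k3` by the loss in
`stab_quasi`, so that the next block can start from a pseudo-orbit point close to `f^[n] z`. -/
theorem Sys.block (H : Sys f A ρ θ) (hfin : (sing f A).Finite) (hsurj : A ⊆ f '' A)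
    (hshad : ShadowingOn f (Icc (0 : ℝ) 1)) {ε : ℝ} (hε : 0 < ε) (hερ : 4 * ε < ρ) :
    ∃ k0 k2 k3 N : ℕ, (∀ a b, ε ≤ b - a → Icc a b ⊆ A → Grow f ρ k0 (Icc a b)) ∧
      (∃ η > 0, ∀ z ∈ A, ∀ x ∈ A, |x - z| < η → stab f A ρ k2 x ⊆ stab f A ρ k3 z) ∧
      (∀ z, ∀ y ∈ stab f A ρ k2 z, |y - z| < ε) ∧
      ∀ z ∈ A, ∀ D ⊆ A, D.OrdConnected → stab f A ρ k2 z ⊆ D → (∀ y ∈ D, |y - z| ≤ 2 * ε) →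
        Grow f ρ k0 D → ∃ n, 1 ≤ n ∧ n ≤ N ∧
          ∀ y ∈ stab f A ρ k3 (f^[n] z), f y ∈ f '' proc f z ε D n := by
  obtain ⟨k0, hk0⟩ := H.grow_unif hε
  obtain ⟨s, hs, hsize⟩ := H.size_of_grow k0
  obtain ⟨N0, κ1, hκ1, hexp⟩ := H.expand_uniform hfin hsurj hshad (half_pos hε) (half_pos hs)
  obtain ⟨κ, hκ, hunif⟩ := H.unif_iter N0 (e := min (ε / 2) (κ1 / 2))
    (lt_min (by linarith) (by linarith))
  obtain ⟨M, hM1, hM⟩ := stab_quasi H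
  obtain ⟨K, hK⟩ := stab_shrink H (e := min ε (min κ (κ1 / 2)))
    (lt_min hε (lt_min hκ (by linarith)))
  have hsm : ∀ k, K < k → ∀ z, ∀ y ∈ stab f A ρ k z,
      |y - z| < ε ∧ |y - z| < κ ∧ |y - z| < κ1 / 2 := by
    intro k hk z y hy
    simpa only [lt_min_iff] using hK k hk z y hy
  refine ⟨k0, K + 1 + M, K + 1, M + N0, hk0, hM (K + 1), fun z y hy =>
    (hsm _ (by omega) z y hy).1, ?_⟩
  intro z hz D hDA hDo hDs hDb hDg
  have hzD : z ∈ D := hDs (stab_self H hz)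
  have hgrow := proc_grow H hε hερ hk0 hDA hDo hzD hDb hDg
  have claim : ∀ i ≤ M, (∀ j < i, ∀ t ∈ sing f A, t ∉ stab f A ρ (K + 1 + M - j) (f^[j] z)) →
      stab f A ρ (K + 1 + M - i) (f^[i] z) ⊆ proc f z ε D i := by
    intro i
    induction i with
    | zero => exact fun _ _ => hDs
    | succ i ih =>
      intro hi hfree y hy
      have ih' := ih (by omega) fun j hj => hfree j (by omega)
      have hk : K + 1 + M - i = (K + 1 + M - (i + 1)) + 1 := by omega
      have hcov := stab_cover (k := K + 1 + M - (i + 1)) H (H.mapsIter i hz)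
        (by rw [← hk]; exact hfree i (by omega)) (e := ε) (by linarith)
        (fun y hy => (hsm _ (by omega) _ y hy).1)
      rw [← hk] at hcov
      have hyb := abs_lt.1 (hsm _ (by omega) _ y hy).1
      refine ⟨image_mono ih' (hcov (by rwa [← Function.iterate_succ_apply' f i z])), ?_⟩
      constructor <;> linarith [hyb.1, hyb.2]
  by_cases hhit : ∃ i, i < M ∧ ∃ t ∈ sing f A, t ∈ stab f A ρ (K + 1 + M - i) (f^[i] z)
  · classical
    obtain ⟨hiM, c, hc, hcs⟩ := Nat.find_spec hhit
    have hfree : ∀ j < Nat.find hhit, ∀ t ∈ sing f A,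
        t ∉ stab f A ρ (K + 1 + M - j) (f^[j] z) := fun j hj t ht hts =>
      Nat.find_min hhit hj ⟨by omega, t, ht, hts⟩
    generalize Nat.find hhit = i at *
    have hcD := claim i hiM.le hfree hcs
    obtain ⟨-, hcκ, -⟩ := hsm _ (by omega) _ c hcs
    have hDo' := proc_ord (z := z) (r := ε) H hDA hDo i
    have hDA' := proc_sub (z := z) (r := ε) H hDA i
    obtain ⟨e, he, hes⟩ : ∃ e, |e - c| = s / 2 ∧ uIcc c e ⊆ proc f z ε D i := by
      obtain ⟨u, hu, v, hv, huv⟩ := hsize _ hDA' (hgrow i)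
      rcases le_total (c + s / 2) v with h | h
      · refine ⟨c + s / 2, by grind, ?_⟩
        exact (hDo'.uIcc_subset hcD hv).trans' (uIcc_subset_uIcc left_mem_uIcc
          (by grind [mem_uIcc]))
      · refine ⟨c - s / 2, by grind, ?_⟩
        exact (hDo'.uIcc_subset hcD hu).trans' (uIcc_subset_uIcc left_mem_uIcc
          (by grind [mem_uIcc]))
    obtain ⟨n, hn1, hnN, hn⟩ := hexp c hc e he (hes.trans hDA')
    have hclose : ∀ l ≤ N0, |f^[l] c - f^[l] (f^[i] z)| < ε / 2 ∧
        |f^[l] c - f^[l] (f^[i] z)| < κ1 / 2 := fun l hl => by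
      simpa only [lt_min_iff] using hunif l hl c hc.1 _ (H.mapsIter i hz) hcκ
    refine ⟨i + n, by omega, by omega, fun y hy => ?_⟩
    obtain ⟨-, -, hyκ⟩ := hsm _ (by omega) _ y hy
    rw [proc_add]
    refine image_mono (proc_mono (r' := ε / 2) hes ?_) (hn y (stab_sub hy) ?_)
    · intro l _ hl
      have := (hclose l (by omega)).1
      linarith
    · have h1 := abs_lt.1 (hclose n hnN).2
      rw [add_comm, Function.iterate_add_apply] at hyκ
      have h2 := abs_lt.1 hyκ
      rw [abs_lt]
      constructor <;> linarith [h1.1, h1.2, h2.1, h2.2]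
  · push Not at hhit
    refine ⟨M, hM1, by omega, fun y hy => ⟨y, claim M le_rfl (fun j hj => hhit j hj) ?_, rfl⟩⟩
    rwa [show K + 1 + M - M = K + 1 by omega]

theorem Sys.pseudo_close (H : Sys f A ρ θ) (N : ℕ) {β : ℝ} (hβ : 0 < β) :
    ∃ δ > 0, ∀ x : ℕ → ℝ, (∀ n, x n ∈ A) → (∀ n, dist (f (x n)) (x (n + 1)) < δ) →
      ∀ j, ∀ i ≤ N, |f^[i] (x j) - x (j + i)| < β := by
  induction N generalizing β with
  | zero =>
    refine ⟨1, one_pos, fun x _ _ j i hi => ?_⟩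
    obtain rfl : i = 0 := by omega
    simpa using hβ
  | succ N ih =>
    obtain ⟨η, hη, hu⟩ := H.unif_iter 1 (half_pos hβ)
    obtain ⟨δ, hδ, h⟩ := ih (lt_min hη hβ)
    refine ⟨min δ (β / 2), lt_min hδ (by linarith), fun x hx hp j i hi => ?_⟩
    have hp1 := fun n => (lt_min_iff.1 (hp n)).1
    have hp2 := fun n => (lt_min_iff.1 (hp n)).2
    rcases Nat.lt_or_ge i (N + 1) with h1 | h1
    · exact (lt_min_iff.1 (h x hx hp1 j i (by omega))).2
    · obtain rfl : i = N + 1 := by omega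
      have h2 := (lt_min_iff.1 (h x hx hp1 j N le_rfl)).1
      have h3 := abs_lt.1 (hu 1 le_rfl _ (H.mapsIter N (hx j)) _ (hx _) h2)
      have h4 := hp2 (j + N)
      rw [Real.dist_eq] at h4
      have h4 := abs_lt.1 h4
      rw [Function.iterate_succ_apply', abs_lt]
      simp only [Function.iterate_one] at h3
      rw [show j + (N + 1) = j + N + 1 by omega]
      constructor <;> linarith [h3.1, h3.2, h4.1, h4.2]

/-- Along a pseudo-orbit there are arbitrarily late times `t` such that every point near `x t` is,
up to one application of `f`, the endpoint of an orbit segment following `x`. -/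
theorem Sys.stage (H : Sys f A ρ θ) (hfin : (sing f A).Finite) (hsurj : A ⊆ f '' A)
    (hshad : ShadowingOn f (Icc (0 : ℝ) 1)) {ε : ℝ} (hε : 0 < ε) :
    ∃ ε' > 0, ∃ δ > 0, ∀ x : ℕ → ℝ, (∀ n, x n ∈ A) →
      (∀ n, dist (f (x n)) (x (n + 1)) < δ) → ∀ T, ∃ t, T ≤ t ∧ ∀ y ∈ A, |y - x t| < ε' →
        ∃ ζ ∈ A, f^[t + 1] ζ = f y ∧ ∀ i ≤ t, |f^[i] ζ - x i| < ε := by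
  have hρ := H.rho_pos
  have hθ := H.theta_pos
  obtain ⟨ε1, hε1, h1, h2, h3⟩ : ∃ ε1 > 0, ε1 ≤ ρ / 8 ∧ ε1 ≤ θ / 4 ∧ ε1 ≤ ε / 4 := by
    refine ⟨min (ρ / 8) (min (θ / 4) (ε / 4)), ?_, by simp⟩
    simp only [gt_iff_lt, lt_min_iff]
    exact ⟨by linarith, by linarith, by linarith⟩
  obtain ⟨k0, k2, k3, N, hk0, ⟨η, hη, hquasi⟩, hsmall, hblock⟩ :=
    H.block hfin hsurj hshad hε1 (by linarith)
  obtain ⟨η', hη', hball⟩ := stab_ball H k2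
  obtain ⟨δ, hδ, hclose⟩ := H.pseudo_close N (β := min ε1 (min η η'))
    (lt_min hε1 (lt_min hη hη'))
  refine ⟨η', hη', δ, hδ, fun x hx hp T => ?_⟩
  have hcl := hclose x hx hp
  simp only [lt_min_iff] at hcl
  -- `D` collects the points which, up to one application of `f`, end a segment following `x`
  have state : ∃ t, T ≤ t ∧ ∃ D ⊆ A, D.OrdConnected ∧ stab f A ρ k2 (x t) ⊆ D ∧
      (∀ y ∈ D, |y - x t| ≤ 2 * ε1) ∧ Grow f ρ k0 D ∧ ∀ y ∈ D, ∃ ζ ∈ A, f^[t + 1] ζ = f y ∧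
        ∀ i ≤ t, |f^[i] ζ - x i| ≤ 2 * ε1 := by
    induction T with
    | zero =>
      refine ⟨0, le_rfl, A ∩ Icc (x 0 - ε1) (x 0 + ε1), inter_subset_left, ?_, ?_, ?_, ?_, ?_⟩
      · refine ⟨fun a ha b hb t ht => ⟨?_, ?_⟩⟩
        · have hab : a ≤ b := ht.1.trans ht.2
          apply H.conn a ha.1 b hb.1
          · have e1 := ha.2; have e2 := hb.2
            rw [abs_lt]
            constructor <;> linarith [e1.1, e1.2, e2.1, e2.2]
          · rwa [uIcc_of_le hab]
        · exact ⟨ha.2.1.trans ht.1, ht.2.trans hb.2.2⟩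
      · intro y hy
        have := abs_lt.1 (hsmall _ y hy)
        exact ⟨stab_sub hy, by linarith, by linarith⟩
      · rintro y ⟨-, hy⟩
        rw [abs_le]
        constructor <;> linarith [hy.1, hy.2]
      · rcases H.side (x 0) (hx 0) with h | h
        · have hs : Icc (x 0) (x 0 + ε1) ⊆ A := (Icc_subset_Icc le_rfl (by linarith)).trans h
          exact (hk0 _ _ (by linarith) hs).mono le_rfl
            (subset_inter hs (Icc_subset_Icc (by linarith) le_rfl))
        · have hs : Icc (x 0 - ε1) (x 0) ⊆ A := (Icc_subset_Icc (by linarith) le_rfl).trans h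
          exact (hk0 _ _ (by linarith) hs).mono le_rfl
            (subset_inter hs (Icc_subset_Icc le_rfl (by linarith)))
      · rintro y ⟨hyA, hy⟩
        refine ⟨y, hyA, rfl, fun i hi => ?_⟩
        obtain rfl : i = 0 := by omega
        simp only [Function.iterate_zero, id]
        rw [abs_le]
        constructor <;> linarith [hy.1, hy.2]
    | succ T ih =>
      obtain ⟨t, htT, D, hDA, hDo, hDs, hDb, hDg, hDh⟩ := ih
      obtain ⟨n, hn1, hnN, hn⟩ := hblock (x t) (hx t) D hDA hDo hDs hDb hDg
      have hxD : x t ∈ D := hDs (stab_self H (hx t))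
      obtain ⟨c1, c2, c3⟩ := hcl t n hnN
      have hzA := H.mapsIter n (hx t)
      have hcov : ∀ y ∈ proc f (x t) ε1 D n ∪ stab f A ρ k2 (x (t + n)),
          ∃ y' ∈ proc f (x t) ε1 D n, f y' = f y := by
        rintro y (hy | hy)
        · exact ⟨y, hy, rfl⟩
        · exact hn y (hquasi _ hzA _ (hx _) (by rwa [abs_sub_comm]) hy)
      refine ⟨t + n, by omega, proc f (x t) ε1 D n ∪ stab f A ρ k2 (x (t + n)), ?_, ?_,
        subset_union_right, ?_, ?_, ?_⟩
      · exact union_subset (proc_sub H hDA n) stab_sub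
      · apply IsPreconnected.ordConnected
        exact IsPreconnected.union (f^[n] (x t)) (proc_mem hxD hε1.le n) (hball _ (hx _) _ hzA c3)
          (proc_ord H hDA hDo n).isPreconnected stab_ord.isPreconnected
      · rintro y (hy | hy)
        · have e1 := abs_le.1 (proc_ball hn1 hy)
          have e2 := abs_lt.1 c1
          rw [abs_le]
          constructor <;> linarith [e1.1, e1.2, e2.1, e2.2]
        · have := hsmall _ y hy
          linarith
      · exact (proc_grow H hε1 (by linarith) hk0 hDA hDo hxD hDb hDg n).mono le_rfl
          subset_union_left
      · intro y hy
        obtain ⟨y', hy', hfy⟩ := hcov y hy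
        rw [← hfy]
        obtain ⟨y0, hy0, hy0n, hh⟩ := proc_hist hy'
        obtain ⟨ζ, hζ, hζt, hζc⟩ := hDh y0 hy0
        have hζi : ∀ i, f^[t + 1 + i] ζ = f^[i + 1] y0 := by
          intro i
          rw [add_comm, Function.iterate_add_apply, hζt, ← Function.iterate_succ_apply]
        refine ⟨ζ, hζ, ?_, fun i hi => ?_⟩
        · rw [show t + n + 1 = t + 1 + n by omega, hζi, Function.iterate_succ_apply', hy0n]
        · rcases Nat.lt_or_ge t i with h | h
          · obtain ⟨l, rfl⟩ : ∃ l, i = t + 1 + l := ⟨i - (t + 1), by omega⟩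
            have e1 := abs_le.1 (hh (l + 1) (by omega) (by omega))
            have e2 := abs_lt.1 (hcl t (l + 1) (by omega)).1
            rw [hζi, abs_le, show t + 1 + l = t + (l + 1) by omega]
            constructor <;> linarith [e1.1, e1.2, e2.1, e2.2]
          · exact hζc i h
  obtain ⟨t, htT, D, -, -, hDs, -, -, hDh⟩ := state
  refine ⟨t, htT, fun y hy hyx => ?_⟩
  obtain ⟨ζ, hζ, h4, h5⟩ := hDh y (hDs (hball _ (hx t) y hy hyx))
  exact ⟨ζ, hζ, h4, fun i hi => (h5 i hi).trans_lt (by linarith)⟩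

end stage

open Filter Topology

/-! ### From orbit segments to s-limit shadowing -/

/-- Passing to the limit in a compact set, in a sequence of points: closeness conditions on iterates
that hold eventually hold for the limit point. -/
theorem exists_limit_orbit {f : ℝ → ℝ} {A : Set ℝ} (hA : IsCompact A)
    (hc : ∀ n, ContinuousOn f^[n] A) (z : ℕ → ℝ) (hz : ∀ k, z k ∈ A) :
    ∃ w ∈ A, ∀ (i : ℕ) (y e : ℝ), (∀ᶠ k in atTop, |f^[i] (z k) - y| ≤ e) →
      |f^[i] w - y| ≤ e := by
  obtain ⟨w, hw, φ, hφ, hlim⟩ := hA.tendsto_subseq hz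
  refine ⟨w, hw, fun i y e h => ?_⟩
  have h1 : Tendsto (fun m => f^[i] (z (φ m))) atTop (𝓝 (f^[i] w)) := by
    refine (hc i w hw).tendsto.comp ?_
    exact tendsto_nhdsWithin_iff.2 ⟨hlim, Eventually.of_forall fun m => hz _⟩
  have h2 : Tendsto (fun m => |f^[i] (z (φ m)) - y|) atTop (𝓝 |f^[i] w - y|) :=
    (h1.sub_const y).abs
  exact le_of_tendsto h2 (hφ.tendsto_atTop.eventually h)

/-- Segments following an asymptotic pseudo-orbit with errors `eps k → 0` on consecutive time
intervals `(t k, t (k + 1)]` are glued backwards from the last one, each starting point being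
reached by the preceding segment. -/
theorem slimit_of_stage {f : ℝ → ℝ} {A : Set ℝ} (hA : IsCompact A)
    (hc : ∀ n, ContinuousOn f^[n] A)
    (hst : ∀ ε : ℝ, 0 < ε → ∃ ε' > 0, ∃ δ > 0, ∀ x : ℕ → ℝ, (∀ n, x n ∈ A) →
      (∀ n, dist (f (x n)) (x (n + 1)) < δ) → ∀ T, ∃ t, T ≤ t ∧ ∀ y ∈ A, |y - x t| < ε' →
        ∃ ζ ∈ A, f^[t + 1] ζ = f y ∧ ∀ i ≤ t, |f^[i] ζ - x i| < ε) :
    SLimitShadowingOn f A := by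
  intro ε hε
  choose! E' hE' Δ hΔ hst using hst
  let eps : ℕ → ℝ := fun k => Nat.rec (ε / 2) (fun _ e => min (E' e) (e / 2)) k
  have eps0 : eps 0 = ε / 2 := rfl
  have epsS : ∀ k, eps (k + 1) = min (E' (eps k)) (eps k / 2) := fun _ => rfl
  have eps_pos : ∀ k, 0 < eps k := by
    intro k
    induction k with
    | zero => rw [eps0]; linarith
    | succ k ih => rw [epsS]; exact lt_min (hE' _ ih) (by linarith)
  have eps_half : ∀ k, eps (k + 1) ≤ eps k / 2 := fun k => by rw [epsS]; exact min_le_right _ _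
  have eps_anti : Antitone eps :=
    antitone_nat_of_succ_le fun k => (eps_half k).trans (by linarith [eps_pos k])
  have eps_lim : Tendsto eps atTop (𝓝 0) := by
    have hb : ∀ k, eps k ≤ ε / 2 * (1 / 2) ^ k := by
      intro k
      induction k with
      | zero => simp [eps0]
      | succ k ih => rw [pow_succ]; linarith [eps_half k]
    have h2 : Tendsto (fun k : ℕ => ε / 2 * (1 / 2 : ℝ) ^ k) atTop (𝓝 0) := by
      have := (tendsto_pow_atTop_nhds_zero_of_lt_one (r := (1 / 2 : ℝ)) (by norm_num)
        (by norm_num)).const_mul (ε / 2)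
      simpa using this
    exact squeeze_zero (fun k => (eps_pos k).le) hb h2
  refine ⟨Δ (eps 0), hΔ _ (eps_pos 0), ?_, ?_⟩
  · intro x hx hp
    choose t ht hy using hst (eps 0) (eps_pos 0) x hx hp
    choose ζ hζ _ hζc using fun T => hy T (x (t T)) (hx _) (by simpa using hE' _ (eps_pos 0))
    obtain ⟨w, hw, hlim⟩ := exists_limit_orbit hA hc ζ hζ
    refine ⟨w, hw, fun n => ?_⟩
    rw [Real.dist_eq]
    refine (hlim n (x n) (ε / 2) ?_).trans_lt (by linarith)
    filter_upwards [eventually_ge_atTop n] with T hT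
    exact (hζc T n (hT.trans (ht T))).le
  · intro x hx hp hlim0
    have htail : ∀ k, ∃ T, ∀ n ≥ T, dist (f (x n)) (x (n + 1)) < Δ (eps k) := fun k =>
      eventually_atTop.1 (hlim0.eventually_lt_const (hΔ _ (eps_pos k)))
    have hnext : ∀ k T, (∀ n ≥ T, dist (f (x n)) (x (n + 1)) < Δ (eps k)) → ∃ T', T < T' ∧
        (∀ n ≥ T', dist (f (x n)) (x (n + 1)) < Δ (eps (k + 1))) ∧
        ∀ y ∈ A, |y - x T'| < E' (eps k) → ∃ ζ ∈ A, f^[T' - T + 1] ζ = f y ∧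
          ∀ i ≤ T' - T, |f^[i] ζ - x (T + i)| < eps k := by
      intro k T hT
      obtain ⟨T1, hT1⟩ := htail (k + 1)
      obtain ⟨t, ht, h⟩ := hst (eps k) (eps_pos k) (fun n => x (T + n)) (fun n => hx _)
        (fun n => hT (T + n) (by omega)) (T1 + 1)
      refine ⟨T + t, by omega, fun n hn => hT1 n (by omega), ?_⟩
      rw [Nat.add_sub_cancel_left]
      exact h
    choose! g hg1 hg2 hg3 using hnext
    let t : ℕ → ℕ := fun k => Nat.rec 0 (fun k T => g k T) k
    have t0 : t 0 = 0 := rfl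
    have tS : ∀ k, t (k + 1) = g k (t k) := fun _ => rfl
    have tgood : ∀ k, ∀ n ≥ t k, dist (f (x n)) (x (n + 1)) < Δ (eps k) := by
      intro k
      induction k with
      | zero => exact fun n _ => hp n
      | succ k ih => rw [tS]; exact hg2 k _ ih
    have tlt : ∀ k, t k < t (k + 1) := fun k => by rw [tS]; exact hg1 k _ (tgood k)
    have tmono : StrictMono t := strictMono_nat_of_lt_succ tlt
    have tstage : ∀ k, ∀ y ∈ A, |y - x (t (k + 1))| < E' (eps k) →
        ∃ ζ ∈ A, f^[t (k + 1) - t k + 1] ζ = f y ∧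
          ∀ i ≤ t (k + 1) - t k, |f^[i] ζ - x (t k + i)| < eps k := fun k => by
      rw [tS]; exact hg3 k _ (tgood k)
    have claim : ∀ k, ∀ y ∈ A, |y - x (t k)| < eps k → ∃ z ∈ A, |z - x 0| < eps 0 ∧
        f^[t k + 1] z = f y ∧ ∀ j, ∀ i, t j < i → i ≤ t k → |f^[i] z - x i| < eps j := by
      intro k
      induction k with
      | zero =>
        intro y hy hyx
        exact ⟨y, hy, hyx, rfl, fun j i h1 h2 => by omega⟩
      | succ k ih =>
        intro y hy hyx
        obtain ⟨ζ, hζ, hζ1, hζ2⟩ := tstage k y hy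
          (hyx.trans_le (by rw [epsS]; exact min_le_left _ _))
        obtain ⟨z, hz, hz0, hz1, hz2⟩ := ih ζ hζ (hζ2 0 (by omega))
        have hzζ : ∀ i, f^[t k + 1 + i] z = f^[i + 1] ζ := by
          intro i
          rw [add_comm, Function.iterate_add_apply, hz1, ← Function.iterate_succ_apply]
        have := tlt k
        refine ⟨z, hz, hz0, ?_, fun j i hji hik => ?_⟩
        · rw [← hζ1, ← hzζ, show t k + 1 + (t (k + 1) - t k) = t (k + 1) + 1 by omega]
        · rcases Nat.lt_or_ge (t k) i with h | h
          · obtain ⟨l, rfl⟩ : ∃ l, i = t k + 1 + l := ⟨i - (t k + 1), by omega⟩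
            have hjk : j ≤ k := by
              by_contra! hc
              have := tmono.monotone (show k + 1 ≤ j from hc)
              omega
            rw [hzζ, show t k + 1 + l = t k + (l + 1) by omega]
            exact (hζ2 (l + 1) (by omega)).trans_le (eps_anti hjk)
          · exact hz2 j i hji h
    choose z hz hz0 _ hz2 using fun k => claim k (x (t k)) (hx _) (by simpa using eps_pos k)
    obtain ⟨w, hw, hlim⟩ := exists_limit_orbit hA hc z hz
    have hfol : ∀ j i, t j < i → |f^[i] w - x i| ≤ eps j := by
      intro j i hji
      apply hlim
      filter_upwards [tmono.tendsto_atTop.eventually_ge_atTop i] with k hk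
      exact (hz2 k j i hji hk).le
    refine ⟨w, hw, fun n => ?_, ?_⟩
    · rw [Real.dist_eq]
      refine lt_of_le_of_lt ?_ (show eps 0 < ε by rw [eps0]; linarith)
      rcases Nat.eq_zero_or_pos n with rfl | hn
      · exact hlim 0 (x 0) (eps 0) (Eventually.of_forall fun k => (hz0 k).le)
      · exact hfol 0 n hn
    · rw [Metric.tendsto_atTop]
      intro e he
      obtain ⟨j, hj⟩ := (eps_lim.eventually_lt_const he).exists
      refine ⟨t j + 1, fun n hn => ?_⟩
      rw [Real.dist_0_eq_abs, abs_of_nonneg dist_nonneg, Real.dist_eq]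
      exact (hfol j n (by omega)).trans_lt hj

/-! ### Structure of ω-limit sets with nonempty interior -/

/-- `A` is a compact invariant set and the orbit of `y ∈ A` returns infinitely often to every
neighbourhood of every point of `A`. -/
structure Recurrent (f : ℝ → ℝ) (A : Set ℝ) (y : ℝ) : Prop where
  compact : IsCompact A
  maps : MapsTo f A A
  cont : ContinuousOn f A
  mem : y ∈ A
  visit : ∀ a ∈ A, ∀ e > 0, ∀ N, ∃ n ≥ N, |f^[n] y - a| < e

namespace Recurrent

variable {f : ℝ → ℝ} {A : Set ℝ} {y : ℝ}

theorem mapsIter (H : Recurrent f A y) (n : ℕ) : MapsTo f^[n] A A := H.maps.iterate n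

theorem contIter (H : Recurrent f A y) (n : ℕ) : ContinuousOn f^[n] A := H.cont.iterate H.maps n

/-- Every nondegenerate interval in `A` contains a periodic point: otherwise all returns to the
interval would move points in the same direction, which a dense orbit does not do. -/
theorem exists_periodic (H : Recurrent f A y) {a b : ℝ} (hab : a < b) (hJ : Icc a b ⊆ A) :
    ∃ p ∈ Icc a b, ∃ n > 0, f^[n] p = p := by
  by_contra! hno
  -- otherwise `f^[n] - id` has a zero between `v` and `w`
  have fix : ∀ v ∈ Icc a b, ∀ w ∈ Icc a b, ∀ n > 0, v < f^[n] v → f^[n] w < w → False := by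
    intro v hv w hw n hn h1 h2
    have hsub : uIcc v w ⊆ Icc a b := ordConnected_Icc.uIcc_subset hv hw
    have hcont : ContinuousOn (fun z => f^[n] z - z) (uIcc v w) :=
      ((H.contIter n).mono (hsub.trans hJ)).sub continuousOn_id
    have h0 : (0 : ℝ) ∈ uIcc (f^[n] v - v) (f^[n] w - w) := by
      rw [mem_uIcc]; right; constructor <;> linarith
    obtain ⟨z, hz, hz0⟩ := intermediate_value_uIcc hcont h0
    exact hno z (hsub hz) n hn (by simpa [sub_eq_zero] using hz0)
  have up : ∀ u ∈ Icc a b, ∀ m > 0, f^[m] u ∈ Icc a b → u < f^[m] u →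
      ∀ k, u < f^[m * (k + 1)] u := by
    intro u hu m hm hu' hlt k
    induction k with
    | zero => simpa using hlt
    | succ k ih =>
      by_contra! hc
      have h1 : f^[m * (k + 1)] (f^[m] u) < f^[m] u := by
        rw [← Function.iterate_add_apply]
        exact lt_of_le_of_lt hc hlt
      exact fix u hu _ hu' (m * (k + 1)) (by positivity) ih h1
  have down : ∀ u ∈ Icc a b, ∀ m > 0, f^[m] u ∈ Icc a b → f^[m] u < u →
      ∀ k, f^[m * (k + 1)] u < u := by
    intro u hu m hm hu' hlt k
    induction k with
    | zero => simpa using hlt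
    | succ k ih =>
      by_contra! hc
      have h1 : f^[m] u < f^[m * (k + 1)] (f^[m] u) := by
        rw [← Function.iterate_add_apply]
        exact lt_of_lt_of_le hlt hc
      exact fix _ hu' u hu (m * (k + 1)) (by positivity) h1 ih
  set r := (b - a) / 8 with hr
  have hr0 : 0 < r := by rw [hr]; linarith
  have hba : b = a + 8 * r := by rw [hr]; ring
  obtain ⟨n0, -, h0⟩ := H.visit (a + 4 * r) (hJ ⟨by linarith, by linarith⟩) r hr0 0
  obtain ⟨n1, hn1, h1⟩ := H.visit (a + r) (hJ ⟨by linarith, by linarith⟩) r hr0 (n0 + 1)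
  obtain ⟨n2, hn2, h2⟩ := H.visit (a + 7 * r) (hJ ⟨by linarith, by linarith⟩) r hr0 (n0 + 1)
  obtain ⟨m1, rfl⟩ : ∃ m, n1 = m + 1 + n0 := ⟨n1 - n0 - 1, by omega⟩
  obtain ⟨m2, rfl⟩ : ∃ m, n2 = m + 1 + n0 := ⟨n2 - n0 - 1, by omega⟩
  rw [Function.iterate_add_apply, abs_lt] at h1 h2
  rw [abs_lt] at h0
  have hv : f^[n0] y ∈ Icc a b := ⟨by linarith [h0.1], by linarith [h0.2]⟩
  have e1 := down _ hv (m1 + 1) (by omega) ⟨by linarith [h1.1], by linarith [h1.2]⟩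
    (by linarith [h1.2, h0.1]) m2
  have e2 := up _ hv (m2 + 1) (by omega) ⟨by linarith [h2.1], by linarith [h2.2]⟩
    (by linarith [h2.1, h0.2]) m1
  rw [mul_comm] at e2
  exact lt_asymm e1 e2

/-- Periodic points are never identified by an iterate. -/
theorem iterate_ne {p q : ℝ} {m n : ℕ} (hm : 0 < m) (hn : 0 < n) (hp : f^[m] p = p)
    (hq : f^[n] q = q) (hpq : p ≠ q) (j : ℕ) : f^[j] p ≠ f^[j] q := by
  intro h
  have h1 : f^[m * n * j] p = p := by
    have : Function.IsPeriodicPt f (m * n * j) p :=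
      (Function.IsPeriodicPt.mul_const (show Function.IsPeriodicPt f m p from hp) n).mul_const j
    exact this
  have h2 : f^[m * n * j] q = q := by
    have : Function.IsPeriodicPt f (m * n * j) q :=
      (Function.IsPeriodicPt.const_mul (show Function.IsPeriodicPt f n q from hq) m).mul_const j
    exact this
  have hle : j ≤ m * n * j := Nat.le_mul_of_pos_left _ (by positivity)
  obtain ⟨l, hl⟩ : ∃ l, m * n * j = l + j := ⟨m * n * j - j, by omega⟩
  apply hpq
  rw [← h1, ← h2, hl, Function.iterate_add_apply, Function.iterate_add_apply, h]

theorem finite_orbit {p : ℝ} {n : ℕ} (hn : 0 < n) (hp : f^[n] p = p) :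
    (range fun i => f^[i] p).Finite := by
  refine ((Set.finite_lt_nat n).image fun i => f^[i] p).subset ?_
  rintro _ ⟨i, rfl⟩
  exact ⟨i % n, Nat.mod_lt _ hn,
    Function.IsPeriodicPt.iterate_mod_apply (show Function.IsPeriodicPt f n p from hp) i⟩

/-- Two periodic points with disjoint orbits. -/
theorem exists_two_orbits (H : Recurrent f A y) {a b : ℝ} (hab : a < b) (hJ : Icc a b ⊆ A) :
    ∃ p ∈ A, ∃ q ∈ A, (range fun i => f^[i] p).Finite ∧ (range fun i => f^[i] q).Finite ∧
      ∀ i j, f^[i] p ≠ f^[j] q := by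
  obtain ⟨p, hp, m, hm, hpm⟩ := H.exists_periodic hab hJ
  have hfin := finite_orbit hm hpm
  obtain ⟨c, hc, hcO⟩ : ∃ c ∈ Ioo a b, c ∉ range fun i => f^[i] p := by
    by_contra! h
    exact Ioo_infinite hab (hfin.subset h)
  have hopen : IsOpen (Ioo a b \ range fun i => f^[i] p) := isOpen_Ioo.sdiff hfin.isClosed
  obtain ⟨e, he, hball⟩ := Metric.isOpen_iff.1 hopen c ⟨hc, hcO⟩
  have hK : Icc c (c + e / 2) ⊆ Ioo a b \ range fun i => f^[i] p := by
    intro z hz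
    apply hball
    rw [Metric.mem_ball, Real.dist_eq, abs_lt]
    constructor <;> linarith [hz.1, hz.2]
  have hKA : Icc c (c + e / 2) ⊆ A := fun z hz => hJ (Ioo_subset_Icc_self (hK hz).1)
  obtain ⟨q, hq, n, hn, hqn⟩ := H.exists_periodic (by linarith) hKA
  refine ⟨p, hJ hp, q, hKA hq, hfin, finite_orbit hn hqn, fun i j hij => (hK hq).2 ?_⟩
  have h1 : f^[n * j] q = q := by
    have : Function.IsPeriodicPt f (n * j) q :=
      (show Function.IsPeriodicPt f n q from hqn).mul_const j
    exact this
  have hle : j ≤ n * j := Nat.le_mul_of_pos_left _ hn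
  obtain ⟨l, hl⟩ : ∃ l, n * j = l + j := ⟨n * j - j, by omega⟩
  refine ⟨l + i, ?_⟩
  show f^[l + i] p = q
  rw [Function.iterate_add_apply, hij, ← Function.iterate_add_apply, ← hl, h1]

/-- Density of the periodic points and a dense orbit force sensitive dependence on initial conditions. -/
theorem sensitive (H : Recurrent f A y) {a₀ b₀ : ℝ} (hab₀ : a₀ < b₀) (hJ₀ : Icc a₀ b₀ ⊆ A) :
    ∃ ρ > 0, ∀ a b, a < b → Icc a b ⊆ A →
      ∃ n, ∃ u ∈ Icc a b, ∃ v ∈ Icc a b, ρ ≤ |f^[n] u - f^[n] v| := by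
  obtain ⟨p, hp, q, hq, hpf, hqf, hne⟩ := H.exists_two_orbits hab₀ hJ₀
  obtain ⟨η, hη, hsep⟩ := (hpf.prod hqf).exists_pos_uniform (P := fun s r => r ≤ |s.1 - s.2|) (by
    rintro ⟨_, _⟩ ⟨⟨i, rfl⟩, ⟨j, rfl⟩⟩
    exact ⟨_, abs_pos.2 (sub_ne_zero.2 (hne i j)), fun r' _ h => h⟩)
  have hsep' : ∀ i j, η ≤ |f^[i] p - f^[j] q| := fun i j =>
    hsep (f^[i] p, f^[j] q) ⟨⟨i, rfl⟩, ⟨j, rfl⟩⟩ η hη le_rfl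
  refine ⟨η / 4, by positivity, fun a b hab hJ => ?_⟩
  obtain ⟨s, hs, n, hn, hsn⟩ := H.exists_periodic hab hJ
  -- one of the two orbits stays away from the periodic point `s`
  obtain ⟨w, hw, hfar⟩ : ∃ w ∈ A, ∀ i, η / 2 ≤ |s - f^[i] w| := by
    by_contra! hc
    obtain ⟨i, hi⟩ := hc p hp
    obtain ⟨j, hj⟩ := hc q hq
    have := hsep' i j
    have h3 := abs_sub_le (f^[i] p) s (f^[j] q)
    rw [abs_sub_comm (f^[i] p) s] at h3
    linarith
  have hev : ∀ᶠ z in 𝓝[A] w, ∀ i ∈ {i | i ≤ n}, |f^[i] z - f^[i] w| < η / 4 := by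
    rw [Filter.eventually_all_finite (Set.finite_le_nat n)]
    intro i _
    have := (H.contIter i) w hw
    exact (Metric.tendsto_nhds.1 this (η / 4) (by positivity))
  obtain ⟨e, he, hball⟩ := Metric.mem_nhdsWithin_iff.1 hev
  obtain ⟨m, -, hm⟩ := H.visit ((a + b) / 2) (hJ ⟨by linarith, by linarith⟩) ((b - a) / 2)
    (by linarith) 0
  rw [abs_lt] at hm
  obtain ⟨t, ht, htw⟩ := H.visit w hw e he m
  obtain ⟨k, rfl⟩ : ∃ k, t = k + m := ⟨t - m, by omega⟩
  have hclose := hball ⟨show f^[k + m] y ∈ Metric.ball w e from htw, H.mapsIter _ H.mem⟩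
  -- a multiple of the period `n` in the window `[k, k + n]`
  obtain ⟨i, hi, j, hij⟩ : ∃ i ≤ n, ∃ j, k + i = n * j := by
    have hmod := Nat.div_add_mod k n
    have hlt := Nat.mod_lt k hn
    refine ⟨n - k % n, by omega, k / n + 1, ?_⟩
    rw [mul_add]; omega
  refine ⟨n * j, s, hs, f^[m] y, ⟨by linarith [hm.1], by linarith [hm.2]⟩, ?_⟩
  have h1 : f^[n * j] s = s := by
    have : Function.IsPeriodicPt f (n * j) s :=
      (show Function.IsPeriodicPt f n s from hsn).mul_const j
    exact this
  have h2 : f^[n * j] (f^[m] y) = f^[i] (f^[k + m] y) := by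
    rw [← Function.iterate_add_apply, ← Function.iterate_add_apply, ← hij,
      show k + i + m = i + (k + m) by omega]
  have h3 := hclose i hi
  have h4 := hfar i
  rw [h1, h2]
  have h5 := abs_sub_le s (f^[i] (f^[k + m] y)) (f^[i] w)
  linarith

/-- `A` is a finite union of compact nondegenerate intervals. -/
theorem exists_intervals (H : Recurrent f A y) {a b : ℝ} (hab : a < b) (hJ : Icc a b ⊆ A) :
    ∃ n : ℕ, ∃ c d : ℕ → ℝ, (∀ j, c j < d j) ∧ (∀ j, Icc (c j) (d j) ⊆ A) ∧
      ∀ z ∈ A, ∃ j < n, z ∈ Icc (c j) (d j) := by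
  have hmid : a < (a + b) / 2 ∧ (a + b) / 2 < b := ⟨by linarith, by linarith⟩
  obtain ⟨p, hp, n, hn, hpn⟩ := H.exists_periodic (a := a) (b := (2 * a + b) / 3) (by linarith)
    ((Icc_subset_Icc_right (by linarith)).trans hJ)
  obtain ⟨q, hq, m, hm, hqm⟩ := H.exists_periodic (a := (a + 2 * b) / 3) (b := b) (by linarith)
    ((Icc_subset_Icc_left (by linarith)).trans hJ)
  have hpq : p ≠ q := by
    intro h; rw [h] at hp; linarith [hp.2, hq.1]
  have hpJ : p ∈ Icc a b := ⟨hp.1, by linarith [hp.2]⟩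
  have hqJ : q ∈ Icc a b := ⟨by linarith [hq.1], hq.2⟩
  -- the images of `[a, b]` under multiples of the period of `p` all contain `p`
  set U : Set ℝ := ⋃ i : ℕ, f^[n * i] '' Icc a b with hU
  have hJU : Icc a b ⊆ U := fun z hz => mem_iUnion.2 ⟨0, z, hz, by simp⟩
  have hUA : U ⊆ A := by
    refine iUnion_subset fun i => ?_
    rintro _ ⟨z, hz, rfl⟩
    exact H.mapsIter _ (hJ hz)
  have hUconn : IsPreconnected U := by
    refine isPreconnected_iUnion ⟨p, mem_iInter.2 fun i => ⟨p, hpJ, ?_⟩⟩ fun i =>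
      isPreconnected_Icc.image _ ((H.contIter _).mono hJ)
    have : Function.IsPeriodicPt f (n * i) p :=
      (show Function.IsPeriodicPt f n p from hpn).mul_const i
    exact this
  have hVA : ∀ j, closure (f^[j] '' U) ⊆ A := fun j =>
    closure_minimal (by rintro _ ⟨z, hz, rfl⟩; exact H.mapsIter _ (hUA hz)) H.compact.isClosed
  have hV : ∀ j, ∃ c d, c < d ∧ closure (f^[j] '' U) = Icc c d := by
    intro j
    have hcompact : IsCompact (closure (f^[j] '' U)) :=
      H.compact.of_isClosed_subset isClosed_closure (hVA j)
    have hpre : IsPreconnected (closure (f^[j] '' U)) :=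
      (hUconn.image _ ((H.contIter j).mono hUA)).closure
    have hne : (closure (f^[j] '' U)).Nonempty := ⟨_, subset_closure ⟨p, hJU hpJ, rfl⟩⟩
    have heq := eq_Icc_of_connected_compact ⟨hne, hpre⟩ hcompact
    refine ⟨_, _, ?_, heq⟩
    by_contra! hle
    have hpm : f^[j] p ∈ closure (f^[j] '' U) := subset_closure ⟨p, hJU hpJ, rfl⟩
    have hqm' : f^[j] q ∈ closure (f^[j] '' U) := subset_closure ⟨q, hJU hqJ, rfl⟩
    rw [heq] at hpm hqm'
    exact iterate_ne hn hm hpn hqm hpq j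
      (le_antisymm (hpm.2.trans (hle.trans hqm'.1)) (hqm'.2.trans (hle.trans hpm.1)))
  choose c d hcd hVeq using hV
  refine ⟨n, c, d, hcd, fun j => hVeq j ▸ hVA j, fun z hz => ?_⟩
  have hclosed : IsClosed (⋃ j ∈ {j | j < n}, Icc (c j) (d j)) :=
    (Set.finite_lt_nat n).isClosed_biUnion fun _ _ => isClosed_Icc
  suffices hmem : z ∈ ⋃ j ∈ {j | j < n}, Icc (c j) (d j) by
    obtain ⟨j, hj, hzj⟩ := mem_iUnion₂.1 hmem
    exact ⟨j, hj, hzj⟩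
  rw [← hclosed.closure_eq, Metric.mem_closure_iff]
  intro e he
  obtain ⟨m0, -, hm0⟩ := H.visit ((a + b) / 2) (hJ ⟨by linarith, by linarith⟩) ((b - a) / 2)
    (by linarith) 0
  rw [abs_lt] at hm0
  obtain ⟨t, ht, htz⟩ := H.visit z hz e he m0
  refine ⟨f^[t] y, ?_, by rwa [dist_comm]⟩
  refine mem_biUnion (x := (t - m0) % n) (Nat.mod_lt _ hn) ?_
  rw [← hVeq]
  refine subset_closure ⟨f^[n * ((t - m0) / n)] (f^[m0] y), mem_iUnion.2 ⟨(t - m0) / n, _,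
    ⟨by linarith [hm0.1], by linarith [hm0.2]⟩, rfl⟩, ?_⟩
  rw [← Function.iterate_add_apply, ← Function.iterate_add_apply]
  congr 2
  have := Nat.mod_add_div (t - m0) n
  omega

/-- A recurrent set containing an interval carries the structure `Sys`, and its frontier is
finite. -/
theorem exists_sys (H : Recurrent f A y) (h01 : A ⊆ Icc 0 1) {a b : ℝ} (hab : a < b)
    (hJ : Icc a b ⊆ A) : ∃ ρ θ, Sys f A ρ θ ∧ (frontier A).Finite := by
  obtain ⟨ρ, hρ, hgrow⟩ := H.sensitive hab hJ
  obtain ⟨n, c, d, hcd, hsub, hcov⟩ := H.exists_intervals hab hJ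
  obtain ⟨θ, hθ, hθ'⟩ := ((Set.finite_lt_nat n).prod (Set.finite_lt_nat n)).exists_pos_uniform
    (P := fun s r => r ≤ (d s.1 - c s.1) / 2 ∧ (d s.1 < c s.2 → r ≤ c s.2 - d s.1)) (by
      rintro ⟨i, j⟩ -
      have := hcd i
      by_cases h : d i < c j
      · refine ⟨min ((d i - c i) / 2) (c j - d i), lt_min (by linarith) (by linarith),
          fun r' _ hr => ⟨hr.trans (min_le_left _ _), fun _ => hr.trans (min_le_right _ _)⟩⟩
      · exact ⟨(d i - c i) / 2, by linarith, fun r' _ hr => ⟨hr, fun h' => absurd h' h⟩⟩)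
  have hlen : ∀ i < n, θ ≤ (d i - c i) / 2 := fun i hi => (hθ' (i, i) ⟨hi, hi⟩ θ hθ le_rfl).1
  have hgap : ∀ i < n, ∀ j < n, d i < c j → θ ≤ c j - d i := fun i hi j hj =>
    (hθ' (i, j) ⟨hi, hj⟩ θ hθ le_rfl).2
  have conn : ∀ u ∈ A, ∀ v ∈ A, u ≤ v → |u - v| < θ → Icc u v ⊆ A := by
    intro u hu v hv huv hlt z hz
    obtain ⟨i, hi, hui⟩ := hcov u hu
    obtain ⟨j, hj, hvj⟩ := hcov v hv
    rcases le_or_gt (c j) (d i) with h | h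
    · rcases le_or_gt z (d i) with h' | h'
      · exact hsub i ⟨hui.1.trans hz.1, h'⟩
      · exact hsub j ⟨h.trans h'.le, hz.2.trans hvj.2⟩
    · have := hgap i hi j hj h
      rw [abs_lt] at hlt
      linarith [hlt.1, hui.2, hvj.1]
  refine ⟨ρ, θ, ⟨H.compact, h01, H.maps, H.cont, hρ, hθ, ?_, ?_, hgrow⟩, ?_⟩
  · intro u hu v hv hlt
    rcases le_total u v with h | h
    · rw [uIcc_of_le h]; exact conn u hu v hv h hlt
    · rw [uIcc_of_ge h]; exact conn v hv u hu h (by rwa [abs_sub_comm])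
  · intro u hu
    obtain ⟨i, hi, hui⟩ := hcov u hu
    have := hlen i hi
    rcases le_total u ((c i + d i) / 2) with h | h
    · exact Or.inl fun z hz => hsub i ⟨hui.1.trans hz.1, by linarith [hz.2]⟩
    · exact Or.inr fun z hz => hsub i ⟨by linarith [hz.1], hz.2.trans hui.2⟩
  · refine (((Set.finite_lt_nat n).image c).union ((Set.finite_lt_nat n).image d)).subset ?_
    intro z hz
    rw [H.compact.isClosed.frontier_eq] at hz
    obtain ⟨i, hi, hzi⟩ := hcov z hz.1
    by_contra hc
    rw [mem_union, not_or] at hc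
    refine hz.2 (Sys.mem_interior_of_Icc (x := c i) (y := d i) ?_ ?_ (hsub i))
    · exact lt_of_le_of_ne hzi.1 fun h => hc.1 ⟨i, hi, h⟩
    · exact lt_of_le_of_ne hzi.2 fun h => hc.2 ⟨i, hi, h.symm⟩

end Recurrent

theorem exists_piece {k : ℕ} {p : Fin (k + 2) → ℝ} (h0 : p 0 = 0) (h1 : p (Fin.last (k + 1)) = 1)
    {c : ℝ} (hc : c ∈ Icc (0 : ℝ) 1) : ∃ i : Fin (k + 1), c ∈ Icc (p i.castSucc) (p i.succ) := by
  by_contra! hno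
  have hall : ∀ i : Fin (k + 2), p i ≤ c := by
    intro i
    induction i using Fin.induction with
    | zero => rw [h0]; exact hc.1
    | succ i ih =>
      by_contra! h
      exact hno i ⟨ih, h.le⟩
  refine hno (Fin.last k) ⟨hall _, ?_⟩
  rw [Fin.succ_last, h1]
  exact hc.2

/-- A local extremum interior to a piece of monotonicity would produce an interval on which `f` is
constant. -/
theorem Sys.sing_finite {f : ℝ → ℝ} {A : Set ℝ} {ρ θ : ℝ} (H : Sys f A ρ θ)
    (hfr : (frontier A).Finite) (hpm : PiecewiseMonotone f) : (sing f A).Finite := by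
  obtain ⟨k, p, -, h0, h1, hp⟩ := hpm
  refine (hfr.union (Set.finite_range p)).subset ?_
  rintro c ⟨hcA, hc⟩
  by_contra hno
  rw [mem_union, not_or] at hno
  obtain ⟨hnf, hnp⟩ := hno
  have hext := hc.resolve_left hnf
  have hcInt : c ∈ interior A := by
    by_contra h
    exact hnf (by rw [H.compact.isClosed.frontier_eq]; exact ⟨hcA, h⟩)
  obtain ⟨i, hi⟩ := exists_piece h0 h1 (H.sub01 hcA)
  have hi' : c ∈ Ioo (p i.castSucc) (p i.succ) :=
    ⟨lt_of_le_of_ne hi.1 fun h => hnp ⟨_, h⟩, lt_of_le_of_ne hi.2 fun h => hnp ⟨_, h.symm⟩⟩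
  have hnhds : A ∩ Icc (p i.castSucc) (p i.succ) ∈ 𝓝 c :=
    inter_mem (mem_interior_iff_mem_nhds.1 hcInt) (Icc_mem_nhds hi'.1 hi'.2)
  have key : ∀ S ∈ 𝓝 c, ∃ e > 0, uIcc c (c + e) ⊆ S ∧ uIcc c (c - e) ⊆ S := by
    intro S hS
    obtain ⟨e, he, hb⟩ := Metric.mem_nhds_iff.1 hS
    refine ⟨e / 2, by positivity, fun z hz => hb ?_, fun z hz => hb ?_⟩
    · rw [uIcc_of_le (by linarith)] at hz
      rw [Metric.mem_ball, Real.dist_eq, abs_lt]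
      constructor <;> linarith [hz.1, hz.2]
    · rw [uIcc_of_ge (by linarith)] at hz
      rw [Metric.mem_ball, Real.dist_eq, abs_lt]
      constructor <;> linarith [hz.1, hz.2]
  rcases hext with hext | hext <;>
  · obtain ⟨e, he, hr, hl⟩ := key _ (inter_mem hnhds hext)
    obtain ⟨u, hu, hfu⟩ := H.noflat (a := c) (b := c + e) (by linarith) fun z hz => (hr hz).1.1
    obtain ⟨v, hv, hfv⟩ := H.noflat (a := c) (b := c - e) (by linarith) fun z hz => (hl hz).1.1
    have hu1 := (hr hu).2
    have hv1 := (hl hv).2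
    have hu2 := (hr hu).1.2
    have hv2 := (hl hv).1.2
    rw [uIcc_of_le (by linarith)] at hu
    rw [uIcc_of_ge (by linarith)] at hv
    simp only [mem_ofPred_eq] at hu1 hv1
    rcases hp i with hm | hm
    · have e1 := hm hi hu2 hu.1
      have e2 := hm hv2 hi hv.2
      first
      | exact hfu (le_antisymm hu1 e1)
      | exact hfv (le_antisymm e2 hv1)
    · have e1 := hm hi hu2 hu.1
      have e2 := hm hv2 hi hv.2
      first
      | exact hfu (le_antisymm e1 hu1)
      | exact hfv (le_antisymm hv1 e2)

section Omega

variable {f : ℝ → ℝ} {x : ℝ}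

theorem omega_eq : OmegaLimitSet f x = {a | MapClusterPt a atTop fun n => f^[n] x} := by
  ext a
  constructor
  · rintro ⟨φ, hφ, h⟩
    exact h.mapClusterPt.of_comp hφ.tendsto_atTop
  · intro h
    obtain ⟨ψ, hψ, h'⟩ := MapClusterPt.tendsto_subseq h
    exact ⟨ψ, hψ, h'⟩

theorem omega_visit {a : ℝ} (ha : a ∈ OmegaLimitSet f x) {e : ℝ} (he : 0 < e) (N : ℕ) :
    ∃ n ≥ N, |f^[n] x - a| < e := by
  obtain ⟨φ, hφ, h⟩ := ha
  obtain ⟨n, hn, hN⟩ := ((Metric.tendsto_nhds.1 h e he).and (eventually_ge_atTop N)).exists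
  exact ⟨φ n, hN.trans (hφ.id_le n), hn⟩

theorem omega_sub (hmaps : MapsTo f (Icc (0 : ℝ) 1) (Icc (0 : ℝ) 1))
    (hx : x ∈ Icc (0 : ℝ) 1) : OmegaLimitSet f x ⊆ Icc 0 1 := by
  rintro a ⟨φ, -, h⟩
  exact isClosed_Icc.mem_of_tendsto h (Eventually.of_forall fun k => hmaps.iterate _ hx)

theorem omega_compact (hmaps : MapsTo f (Icc (0 : ℝ) 1) (Icc (0 : ℝ) 1))
    (hx : x ∈ Icc (0 : ℝ) 1) : IsCompact (OmegaLimitSet f x) := by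
  refine isCompact_Icc.of_isClosed_subset ?_ (omega_sub hmaps hx)
  rw [omega_eq]
  exact isClosed_setOfPred_clusterPt

theorem tendsto_image (hmaps : MapsTo f (Icc (0 : ℝ) 1) (Icc (0 : ℝ) 1))
    (hcont : ContinuousOn f (Icc (0 : ℝ) 1)) (hx : x ∈ Icc (0 : ℝ) 1) {ψ : ℕ → ℕ} {a : ℝ} (h : Tendsto (fun k => f^[ψ k] x) atTop (𝓝 a)) :
    Tendsto (fun k => f^[ψ k + 1] x) atTop (𝓝 (f a)) := by
  have hmem : ∀ k, f^[ψ k] x ∈ Icc (0 : ℝ) 1 := fun k => hmaps.iterate _ hx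
  have ha : a ∈ Icc (0 : ℝ) 1 := isClosed_Icc.mem_of_tendsto h (Eventually.of_forall hmem)
  have := (hcont a ha).tendsto.comp
    (tendsto_nhdsWithin_iff.2 ⟨h, Eventually.of_forall hmem⟩)
  refine this.congr fun k => ?_
  simp only [Function.comp, Function.iterate_succ_apply']

theorem omega_maps (hmaps : MapsTo f (Icc (0 : ℝ) 1) (Icc (0 : ℝ) 1))
    (hcont : ContinuousOn f (Icc (0 : ℝ) 1)) (hx : x ∈ Icc (0 : ℝ) 1) : MapsTo f (OmegaLimitSet f x) (OmegaLimitSet f x) := by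
  rintro a ⟨φ, hφ, h⟩
  exact ⟨fun k => φ k + 1, fun i j hij => Nat.succ_lt_succ (hφ hij),
    tendsto_image hmaps hcont hx h⟩

/-- Preimages of points of the ω-limit set are limits of the preceding orbit points. -/
theorem omega_surj (hmaps : MapsTo f (Icc (0 : ℝ) 1) (Icc (0 : ℝ) 1))
    (hcont : ContinuousOn f (Icc (0 : ℝ) 1)) (hx : x ∈ Icc (0 : ℝ) 1) : OmegaLimitSet f x ⊆ f '' OmegaLimitSet f x := by
  rintro a ⟨φ, hφ, h⟩
  have hpos : ∀ k, 0 < φ (k + 1) := fun k => lt_of_le_of_lt (Nat.zero_le _) (hφ (Nat.lt_succ_self k))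
  obtain ⟨b, -, ψ, hψ, hb⟩ := isCompact_Icc.tendsto_subseq (s := Icc (0 : ℝ) 1)
    (x := fun k => f^[φ (k + 1) - 1] x) fun k => hmaps.iterate _ hx
  refine ⟨b, ⟨fun k => φ (ψ k + 1) - 1, fun i j hij => ?_, hb⟩, ?_⟩
  · have h1 := hφ (Nat.succ_lt_succ (hψ hij))
    have h2 := hpos (ψ i)
    simp only [Nat.succ_eq_add_one] at h1
    show φ (ψ i + 1) - 1 < φ (ψ j + 1) - 1
    omega
  · have h1 := tendsto_image hmaps hcont hx (ψ := fun k => φ (ψ k + 1) - 1) hb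
    have h2 : Tendsto (fun k => f^[φ (ψ k + 1)] x) atTop (𝓝 a) :=
      h.comp ((tendsto_add_atTop_nat 1).comp hψ.tendsto_atTop)
    refine tendsto_nhds_unique (h1.congr fun k => ?_) h2
    have := hpos (ψ k)
    show f^[φ (ψ k + 1) - 1 + 1] x = _
    rw [Nat.sub_add_cancel this]

theorem exists_Icc {A U : Set ℝ} (hU : IsOpen U) (hne : (U ∩ Icc (0 : ℝ) 1).Nonempty)
    (hsub : U ∩ Icc (0 : ℝ) 1 ⊆ A) : ∃ a b, a < b ∧ Icc a b ⊆ A := by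
  obtain ⟨u, huU, hu⟩ := hne
  obtain ⟨e, he, hb⟩ := Metric.isOpen_iff.1 hU u huU
  have hr : 0 < min (e / 2) (1 / 2) := by positivity
  have hr1 := min_le_left (e / 2) (1 / 2 : ℝ)
  have hr2 := min_le_right (e / 2) (1 / 2 : ℝ)
  rcases le_total u (1 / 2) with h | h
  · refine ⟨u, u + min (e / 2) (1 / 2), by linarith, fun z hz => hsub ⟨hb ?_, ?_⟩⟩
    · rw [Metric.mem_ball, Real.dist_eq, abs_lt]
      constructor <;> linarith [hz.1, hz.2]
    · constructor <;> linarith [hz.1, hz.2, hu.1]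
  · refine ⟨u - min (e / 2) (1 / 2), u, by linarith, fun z hz => hsub ⟨hb ?_, ?_⟩⟩
    · rw [Metric.mem_ball, Real.dist_eq, abs_lt]
      constructor <;> linarith [hz.1, hz.2]
    · constructor <;> linarith [hz.1, hz.2, hu.2]

theorem omega_recurrent (hmaps : MapsTo f (Icc (0 : ℝ) 1) (Icc (0 : ℝ) 1))
    (hcont : ContinuousOn f (Icc (0 : ℝ) 1)) (hx : x ∈ Icc (0 : ℝ) 1) {a b : ℝ} (hab : a < b) (hJ : Icc a b ⊆ OmegaLimitSet f x) :
    ∃ y, Recurrent f (OmegaLimitSet f x) y := by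
  obtain ⟨N, -, hN⟩ := omega_visit (hJ ⟨by linarith, by linarith⟩ : (a + b) / 2 ∈ _)
    (show 0 < (b - a) / 2 by linarith) 0
  rw [abs_lt] at hN
  refine ⟨f^[N] x, omega_compact hmaps hx, omega_maps hmaps hcont hx,
    hcont.mono (omega_sub hmaps hx), hJ ⟨by linarith [hN.1], by linarith [hN.2]⟩, ?_⟩
  intro c hc e he M
  obtain ⟨n, hn, h⟩ := omega_visit hc he (M + N)
  refine ⟨n - N, by omega, ?_⟩
  rwa [← Function.iterate_add_apply, Nat.sub_add_cancel (by omega)]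

end Omega

/-- A continuous piecewise monotone interval map with shadowing has
s-limit shadowing on each of its ω-limit sets having nonempty interior in `[0,1]`. -/
theorem slimit_shadowingOn_omegaLimitSet_of_nonempty_interior
    (f : ℝ → ℝ)
    (hmaps : Set.MapsTo f (Set.Icc (0 : ℝ) 1) (Set.Icc (0 : ℝ) 1))
    (hcont : ContinuousOn f (Set.Icc (0 : ℝ) 1))
    (hpm : PiecewiseMonotone f)
    (hshad : ShadowingOn f (Set.Icc (0 : ℝ) 1)) :
    ∀ x ∈ Set.Icc (0 : ℝ) 1,
      (∃ U : Set ℝ, IsOpen U ∧ (U ∩ Set.Icc (0 : ℝ) 1).Nonempty ∧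
        U ∩ Set.Icc (0 : ℝ) 1 ⊆ OmegaLimitSet f x) →
      SLimitShadowingOn f (OmegaLimitSet f x) := by
  rintro x hx ⟨U, hU, hne, hsub⟩
  obtain ⟨a, b, hab, hJ⟩ := exists_Icc hU hne hsub
  obtain ⟨y, hy⟩ := omega_recurrent hmaps hcont hx hab hJ
  obtain ⟨ρ, θ, H, hfr⟩ := hy.exists_sys (omega_sub hmaps hx) hab hJ
  exact slimit_of_stage H.compact H.contIter fun ε hε =>
    H.stage (H.sing_finite hfr hpm) (omega_surj hmaps hcont hx) hshad hε
end
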